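/- arXiv:2405.04234 — 3 statements merged into one kernel-verified Lean document; each statement's English description precedes it below -/
import Mathlib

section
/- Suppose the integral cubic form C has the shape C(x,y) = y₁F₁(x) + a·y₂·x₁² + b·y₂·x₁x₂ + c·y₂·x₂² + Σ_{i=1}^{m} x_i q_i(y) + R(y), where a,b,c are integers with b² − 4ac ≠ 0 and F₁ is a nonsingular indefinite integral quadratic form of rank r ≥ 5. Assume C is irreducible over ℚ and for every prime p the equation C = 0 has a nonsingular p-adic zero. Then there exist c₀ > 0, K > 0 and Y₀ such that for every Y ≥ Y₀ there is a finite set 𝒞_h(Y) ⊆ ℤ^h with ‖y‖_∞ ≤ K·Y for all y ∈ 𝒞_h(Y) and Σ_{y ∈ 𝒞_h(Y)} 𝔖(F_y) ≥ c₀·Y^h/ log Y. -/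
open Matrix MvPolynomial

/-- The complete exponential sum `S_q(F) = Σ*_{a mod q} Σ_{b mod q} e(a·F(b)/q)` attached to
an integer-valued function `F` on `ℤ^m`. -/
noncomputable def expSum (m : ℕ) (F : (Fin m → ℤ) → ℤ) (q : ℕ) : ℂ :=
  ∑ a ∈ (Finset.range q).filter fun a => Nat.gcd a q = 1,
    ∑ b : Fin m → Fin q,
      Complex.exp (2 * (Real.pi : ℂ) * Complex.I * (a : ℂ) *
        ((F fun j => ((b j : ℕ) : ℤ)) : ℂ) / (q : ℂ))

/-- The singular series `𝔖(F) = Σ_{q ≥ 1} q^{-m} S_q(F)`. -/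
noncomputable def singSeries (m : ℕ) (F : (Fin m → ℤ) → ℤ) : ℂ :=
  ∑' q : ℕ, (q : ℂ) ^ (-(m : ℤ)) * expSum m F q

open Finset in
theorem aux_abel (z : ℕ → ℂ) (f : ℕ → ℝ) (B : ℝ) (hB : ∀ n, ‖∑ k ∈ range n, z k‖ ≤ B) (a b : ℕ)
    (hab : a ≤ b) (hf : ∀ i j, a ≤ i → i ≤ j → f j ≤ f i) (hf0 : ∀ i, a ≤ i → 0 ≤ f i) :
    ‖∑ k ∈ Ico a b, (f k : ℂ) * z k‖ ≤ 2 * B * f a := by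
  have hZ : ∀ b, a ≤ b → ‖∑ k ∈ Ico a b, z k‖ ≤ 2 * B := by
    intro b hb
    rw [sum_Ico_eq_sub _ hb]
    calc _ ≤ _ := norm_sub_le _ _
      _ ≤ 2 * B := by linarith [hB a, hB b]
  have key : ∀ b, a ≤ b → ‖∑ k ∈ Ico a b, (f k : ℂ) * z k - f b * ∑ k ∈ Ico a b, z k‖
      ≤ 2 * B * (f a - f b) := by
    intro b hb
    induction b, hb using Nat.le_induction with
    | base => simp
    | succ b hb ih =>
      have e : ∑ k ∈ Ico a (b+1), (f k : ℂ) * z k - f (b+1) * ∑ k ∈ Ico a (b+1), z k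
        = (∑ k ∈ Ico a b, (f k : ℂ) * z k - f b * ∑ k ∈ Ico a b, z k)
          + ((f b - f (b+1) : ℝ) : ℂ) * ∑ k ∈ Ico a (b+1), z k := by
        rw [sum_Ico_succ_top hb, sum_Ico_succ_top hb]; push_cast; ring
      rw [e]
      refine (norm_add_le _ _).trans ?_
      rw [norm_mul, Complex.norm_real, Real.norm_of_nonneg (by linarith [hf b (b+1) hb (by omega)])]
      have := mul_le_mul_of_nonneg_left (hZ (b+1) (by omega))
        (show 0 ≤ f b - f (b+1) by linarith [hf b (b+1) hb (by omega)])
      linarith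
  have h1 := key b hab
  have h2 : ‖(f b : ℂ) * ∑ k ∈ Ico a b, z k‖ ≤ f b * (2 * B) := by
    rw [norm_mul, Complex.norm_real, Real.norm_of_nonneg (hf0 b hab)]
    exact mul_le_mul_of_nonneg_left (hZ b hab) (hf0 b hab)
  have h3 := norm_add_le (∑ k ∈ Ico a b, (f k : ℂ) * z k - f b * ∑ k ∈ Ico a b, z k)
    ((f b : ℂ) * ∑ k ∈ Ico a b, z k)
  rw [sub_add_cancel] at h3
  linarith

open Finset in
theorem aux_char_bdd (N : ℕ) [NeZero N] (χ : DirichletCharacter ℂ N) (hχ : χ ≠ 1) (n : ℕ) :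
    ‖∑ k ∈ range n, χ (k : ZMod N)‖ ≤ N := by
  induction n using Nat.strong_induction_on with
  | _ n ih =>
    by_cases hn : n < N
    · calc _ ≤ ∑ k ∈ range n, ‖χ (k : ZMod N)‖ := norm_sum_le _ _
        _ ≤ ∑ k ∈ range n, (1:ℝ) := sum_le_sum fun k _ => DirichletCharacter.norm_le_one χ _
        _ = n := by simp
        _ ≤ N := by exact_mod_cast hn.le
    · obtain ⟨j, rfl⟩ := Nat.exists_eq_add_of_le (not_lt.mp hn)
      rw [sum_range_add]
      have h0 : ∑ k ∈ range N, χ (k : ZMod N) = 0 := by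
        rw [← MulChar.sum_eq_zero_of_ne_one hχ]
        refine sum_bij' (fun k _ => (k : ZMod N)) (fun z _ => z.val) ?_ ?_ ?_ ?_ ?_
        · simp
        · intro z _; simpa using ZMod.val_lt z
        · intro k hk; simpa using ZMod.val_cast_of_lt (mem_range.mp hk)
        · simp
        · simp
      rw [h0, zero_add]
      have := ih j (by have := NeZero.pos N; omega)
      simpa using this

open Finset Filter Topology in
theorem aux_L1 (N : ℕ) [NeZero N] (χ : DirichletCharacter ℂ N) (hχ : χ ≠ 1) (u : ℕ) (hu : 1 ≤ u) :
    ‖DirichletCharacter.LFunction χ 1 - ∑ k ∈ range u, ((k : ℝ)⁻¹ : ℝ) * χ (k : ZMod N)‖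
      ≤ 2 * N * (u : ℝ)⁻¹ := by
  have h1 : ∀ s : ℝ, 1 < s → ‖DirichletCharacter.LFunction χ s
      - ∑ k ∈ range u, (((k : ℝ) ^ (-s) : ℝ) : ℂ) * χ (k : ZMod N)‖ ≤ 2 * N * (u : ℝ)⁻¹ := by
    intro s hs
    have hs' : 1 < (s : ℂ).re := by simpa using hs
    rw [DirichletCharacter.LFunction_eq_LSeries χ hs']
    have hsum := (DirichletCharacter.LSeriesSummable_of_one_lt_re χ hs').hasSum
    have ht := hsum.tendsto_sum_nat
    have hterm : ∀ k : ℕ, LSeries.term (fun n : ℕ => χ (n : ZMod N)) s k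
        = (((k : ℝ) ^ (-s) : ℝ) : ℂ) * χ (k : ZMod N) := by
      intro k
      rcases Nat.eq_zero_or_pos k with rfl | hk
      · simp [Real.zero_rpow (show -s ≠ 0 by linarith)]
      · rw [LSeries.term_of_ne_zero hk.ne', Complex.ofReal_cpow (by positivity), div_eq_mul_inv,
          mul_comm, ← Complex.cpow_neg]
        simp
    simp_rw [hterm] at ht
    have ht2 := (ht.sub_const (∑ k ∈ range u, (((k : ℝ) ^ (-s) : ℝ) : ℂ) * χ (k : ZMod N))).norm
    have hL : LSeries (fun n : ℕ => χ (n : ZMod N)) s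
      = ∑' k : ℕ, (((k : ℝ) ^ (-s) : ℝ) : ℂ) * χ (k : ZMod N) := by
      unfold LSeries; exact tsum_congr hterm
    rw [hL]
    refine le_of_tendsto ht2 ?_
    filter_upwards [eventually_ge_atTop u] with b hb
    rw [← sum_Ico_eq_sub _ hb]
    have hz := aux_abel (fun k => χ (k : ZMod N)) (fun k => (k : ℝ) ^ (-s)) N
      (aux_char_bdd N χ hχ) u b hb ?_ ?_
    · refine hz.trans ?_
      have : (u : ℝ) ^ (-s) ≤ (u : ℝ)⁻¹ := by
        rw [← Real.rpow_neg_one]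
        exact Real.rpow_le_rpow_of_exponent_le (by exact_mod_cast hu) (by linarith)
      gcongr
    · intro i j hi hij
      refine Real.rpow_le_rpow_of_nonpos ?_ (by exact_mod_cast hij) (by linarith)
      exact_mod_cast (by omega : 0 < i)
    · intro i hi; positivity
  have hc : Continuous (DirichletCharacter.LFunction χ) :=
    (DirichletCharacter.differentiable_LFunction hχ).continuous
  have hc2 : ContinuousAt (fun s : ℝ => ‖DirichletCharacter.LFunction χ s
      - ∑ k ∈ range u, (((k : ℝ) ^ (-s) : ℝ) : ℂ) * χ (k : ZMod N)‖) 1 := by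
    refine ContinuousAt.norm (ContinuousAt.sub (by fun_prop) ?_)
    refine tendsto_finsetSum _ fun k _ => ?_
    refine Tendsto.mul_const _ ?_
    refine (Complex.continuous_ofReal.tendsto _).comp ?_
    rcases Nat.eq_zero_or_pos k with rfl | hk
    · have : ∀ᶠ s : ℝ in 𝓝 1, ((0:ℕ) : ℝ) ^ (-s) = 0 := by
        filter_upwards [lt_mem_nhds (show (0:ℝ) < 1 by norm_num)] with s hs
        rw [Nat.cast_zero, Real.zero_rpow (by linarith)]
      refine (tendsto_congr' this).mpr ?_
      norm_num
      try exact tendsto_const_nhds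
    · exact (Real.continuous_const_rpow (by positivity)).continuousAt.comp (continuousAt_id.neg)
  have ht : Tendsto _ (𝓝[>] (1:ℝ)) _ := hc2.tendsto.mono_left nhdsWithin_le_nhds
  have := le_of_tendsto ht (by filter_upwards [self_mem_nhdsWithin] with s hs using h1 s hs)
  simpa [Real.rpow_neg_one] using this

open Finset ArithmeticFunction in
theorem aux_mertens : ∃ C : ℝ, ∀ x : ℕ, 1 ≤ x →
    |∑ n ∈ Ioc 0 x, vonMangoldt n / n - Real.log x| ≤ C := by
  refine ⟨Real.log 4 + 4 + 1, fun x hx => ?_⟩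
  have hx0 : (0:ℝ) < x := by exact_mod_cast hx
  have h1 : Real.log (x.factorial) = ∑ d ∈ Ioc 0 x, vonMangoldt d * ((x / d : ℕ) : ℝ) := by
    have := sum_Ioc_mul_zeta_eq_sum vonMangoldt x
    rw [vonMangoldt_mul_zeta] at this
    rw [← this]
    clear this hx hx0
    induction x with
    | zero => simp
    | succ n ih =>
      rw [Nat.factorial_succ, ← insert_Ioc_right_eq_Ioc_add_one (by omega), sum_insert (by simp), ← ih]
      push_cast
      rw [Real.log_mul (by positivity) (by positivity)]
      simp
  have hpsi : ∑ d ∈ Ioc 0 x, vonMangoldt d ≤ (Real.log 4 + 4) * x := by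
    have := Chebyshev.psi_le_const_mul_self (x := (x:ℝ)) (by positivity)
    simpa [Chebyshev.psi] using this
  have hup : Real.log (x.factorial) ≤ x * ∑ n ∈ Ioc 0 x, vonMangoldt n / n := by
    rw [h1, mul_sum]
    refine sum_le_sum fun d hd => ?_
    have : ((x / d : ℕ) : ℝ) ≤ x / d := Nat.cast_div_le
    calc _ ≤ vonMangoldt d * ((x:ℝ) / d) := mul_le_mul_of_nonneg_left this vonMangoldt_nonneg
      _ = _ := by ring
  have hlow : x * ∑ n ∈ Ioc 0 x, vonMangoldt n / n - (Real.log 4 + 4) * x ≤ Real.log (x.factorial) := by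
    rw [h1, mul_sum]
    have : ∑ i ∈ Ioc 0 x, (x:ℝ) * (vonMangoldt i / i) - ∑ d ∈ Ioc 0 x, vonMangoldt d
      ≤ ∑ d ∈ Ioc 0 x, vonMangoldt d * ((x / d : ℕ) : ℝ) := by
      rw [← sum_sub_distrib]
      refine sum_le_sum fun d hd => ?_
      have hd0 : 0 < d := (mem_Ioc.mp hd).1
      have : (x:ℝ) / d - 1 ≤ ((x / d : ℕ) : ℝ) := by
        rw [← Nat.floor_div_eq_div (K := ℝ)]
        exact (Nat.sub_one_lt_floor ((x:ℝ)/d)).le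
      calc _ = vonMangoldt d * ((x:ℝ) / d - 1) := by ring
        _ ≤ _ := mul_le_mul_of_nonneg_left this vonMangoldt_nonneg
    linarith
  have hf1 : Real.log (x.factorial) ≤ x * Real.log x := by
    rw [← Real.log_pow]
    exact Real.log_le_log (by positivity) (by exact_mod_cast Nat.factorial_le_pow x)
  have hf2 : x * Real.log x - x ≤ Real.log (x.factorial) := by
    have := Real.pow_div_factorial_le_exp (x:ℝ) hx0.le x
    have h2 := Real.log_le_log (by positivity) this
    rw [Real.log_exp, Real.log_div (by positivity) (by positivity), Real.log_pow] at h2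
    linarith
  have hl4 : 0 ≤ Real.log 4 := Real.log_nonneg (by norm_num)
  rw [abs_le]
  set S := ∑ n ∈ Ioc 0 x, vonMangoldt n / n
  constructor
  · have : (x:ℝ) * (Real.log x - 1 - S) ≤ 0 := by nlinarith
    have := nonpos_of_mul_nonpos_right this hx0
    linarith
  · have : (x:ℝ) * (S - (Real.log 4 + 4) - Real.log x) ≤ 0 := by nlinarith
    have := nonpos_of_mul_nonpos_right this hx0
    linarith

open Finset ArithmeticFunction in
theorem aux_Tchi (N : ℕ) [NeZero N] (χ : DirichletCharacter ℂ N) (hχ : χ ≠ 1) :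
    ∃ C : ℝ, ∀ x : ℕ, 1 ≤ x →
    ‖∑ n ∈ Ioc 0 x, χ (n : ZMod N) * (vonMangoldt n : ℝ) / n‖ ≤ C := by
  -- bound on the sum with log
  have hlog : ∃ C : ℝ, ∀ x : ℕ, ‖∑ n ∈ Ioc 0 x, χ (n : ZMod N) * (Real.log n : ℝ) / n‖ ≤ C := by
    refine ⟨∑ n ∈ Ioc (0:ℕ) 3, ‖χ (n : ZMod N) * (Real.log n : ℝ) / n‖ + 2 * N * (Real.log 3 / 3), fun x => ?_⟩
    have hle : ∀ n ∈ Ioc (0:ℕ) 3, 0 ≤ ‖χ (n : ZMod N) * (Real.log n : ℝ) / n‖ := fun n _ => norm_nonneg _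
    by_cases hx : x ≤ 3
    · have h3 : 0 ≤ 2 * N * (Real.log 3 / 3) := by have := Real.log_nonneg (show (1:ℝ) ≤ 3 by norm_num); positivity
      refine (norm_sum_le _ _).trans ?_
      have := sum_le_sum_of_subset_of_nonneg (Ioc_subset_Ioc_right hx) (fun i hi _ => hle i hi)
      linarith
    · have e : Ioc 0 x = Ioc 0 3 ∪ Ico 4 (x+1) := by ext i; simp; omega
      rw [e, sum_union (by rw [disjoint_left]; intro i; simp; omega)]
      refine (norm_add_le _ _).trans (add_le_add (norm_sum_le _ _) ?_)
      have hant : AntitoneOn (fun x : ℝ => Real.log x / x) {x | Real.exp 1 ≤ x} := Real.log_div_self_antitoneOn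
      have he : Real.exp 1 ≤ 3 := by linarith [Real.exp_one_lt_d9]
      have := aux_abel (fun k => χ (k : ZMod N)) (fun k => Real.log k / k) N (aux_char_bdd N χ hχ) 4 (x+1)
        (by omega) ?_ ?_
      · calc _ = ‖∑ k ∈ Ico 4 (x+1), ((Real.log k / k : ℝ) : ℂ) * χ (k : ZMod N)‖ := by
              congr 1; refine sum_congr rfl fun k _ => ?_; push_cast; ring
          _ ≤ _ := this
          _ ≤ _ := by
            have : Real.log (4:ℕ) / (4:ℕ) ≤ Real.log 3 / 3 := by
              have := hant (show (3:ℝ) ∈ _ from he) (show (4:ℝ) ∈ {x : ℝ | Real.exp 1 ≤ x} from (by simp; linarith)) (by norm_num)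
              simpa using this
            gcongr
      · intro i j hi hij
        have hi' : (4:ℝ) ≤ i := by exact_mod_cast hi
        have hij' : (i:ℝ) ≤ j := by exact_mod_cast hij
        exact hant (by simp; linarith) (by simp; linarith) hij'
      · intro i hi
        have : (1:ℝ) ≤ i := by exact_mod_cast (by omega : 1 ≤ i)
        exact div_nonneg (Real.log_nonneg this) (by linarith)
  obtain ⟨C, hC⟩ := hlog
  set L := DirichletCharacter.LFunction χ 1 with hL
  have hL0 : L ≠ 0 := DirichletCharacter.LFunction_apply_one_ne_zero hχ
  refine ⟨(C + 2 * N * (Real.log 4 + 4)) / ‖L‖, fun x hx => ?_⟩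
  let f : ArithmeticFunction ℂ := ⟨fun n => χ (n : ZMod N) * (vonMangoldt n : ℝ) / n, by simp⟩
  let g : ArithmeticFunction ℂ := ⟨fun n => χ (n : ZMod N) / n, by simp⟩
  have hfg : ∀ n, (f * g) n = χ (n : ZMod N) * (Real.log n : ℝ) / n := by
    intro n
    rw [ArithmeticFunction.mul_apply]
    have : ∀ p ∈ n.divisorsAntidiagonal, f p.1 * g p.2 = χ (n : ZMod N) / n * ((vonMangoldt p.1 : ℝ) : ℂ) := by
      rintro ⟨p, q⟩ hp
      have := (Nat.mem_divisorsAntidiagonal.mp hp).1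
      simp only at this
      simp only [f, g, coe_mk]
      rw [← this]; push_cast; rw [map_mul]
      ring
    rw [sum_congr rfl this, ← mul_sum, Nat.sum_divisorsAntidiagonal (fun i _ => ((vonMangoldt i : ℝ) : ℂ)),
      ← Complex.ofReal_sum, vonMangoldt_sum]
    ring
  have hmain := sum_Ioc_mul_eq_sum_sum f g x
  have hx0 : (0:ℝ) < x := by exact_mod_cast hx
  have herr : ∀ d ∈ Ioc 0 x, ‖L - ∑ m ∈ Ioc 0 (x / d), g m‖ ≤ 2 * N * (d / x) := by
    intro d hd
    have hd0 : 0 < d := (mem_Ioc.mp hd).1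
    have h1 := aux_L1 N χ hχ (x / d + 1) (Nat.le_add_left _ _)
    have e : ∑ m ∈ Ioc 0 (x / d), g m = ∑ k ∈ range (x / d + 1), ((k : ℝ)⁻¹ : ℝ) * χ (k : ZMod N) := by
      have : Ioc 0 (x / d) = (range (x / d + 1)).erase 0 := by ext i; simp; omega
      rw [this, sum_erase _ (by simp)]
      refine sum_congr rfl fun k _ => ?_
      simp only [g, coe_mk]; push_cast; ring
    rw [e]
    refine h1.trans ?_
    have : (((x / d + 1 : ℕ) : ℝ))⁻¹ ≤ d / x := by
      rw [inv_le_comm₀ (by positivity) (by positivity), inv_div]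
      have := Nat.lt_floor_add_one ((x:ℝ)/d)
      rw [Nat.floor_div_eq_div] at this
      push_cast; linarith
    gcongr
  have h2 : L * ∑ n ∈ Ioc 0 x, f n = ∑ n ∈ Ioc 0 x, (f * g) n
      + ∑ d ∈ Ioc 0 x, f d * (L - ∑ m ∈ Ioc 0 (x / d), g m) := by
    rw [hmain, ← sum_add_distrib, mul_sum]
    exact sum_congr rfl fun d _ => by ring
  have hpsi : ∑ d ∈ Ioc 0 x, vonMangoldt d ≤ (Real.log 4 + 4) * x := by
    have := Chebyshev.psi_le_const_mul_self (x := (x:ℝ)) (by positivity)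
    simpa [Chebyshev.psi] using this
  have h3 : ‖∑ d ∈ Ioc 0 x, f d * (L - ∑ m ∈ Ioc 0 (x / d), g m)‖ ≤ 2 * N * (Real.log 4 + 4) := by
    calc _ ≤ ∑ d ∈ Ioc 0 x, ‖f d * (L - ∑ m ∈ Ioc 0 (x / d), g m)‖ := norm_sum_le _ _
      _ ≤ ∑ d ∈ Ioc 0 x, (2 * N / x) * vonMangoldt d := by
        refine sum_le_sum fun d hd => ?_
        have hd0 : 0 < d := (mem_Ioc.mp hd).1
        have hf : ‖f d‖ ≤ vonMangoldt d / d := by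
          simp only [f, coe_mk, norm_div, norm_mul, Complex.norm_real, Complex.norm_natCast]
          rw [Real.norm_of_nonneg vonMangoldt_nonneg]
          gcongr
          exact mul_le_of_le_one_left vonMangoldt_nonneg (DirichletCharacter.norm_le_one χ _)
        rw [norm_mul]
        calc _ ≤ vonMangoldt d / d * (2 * N * (d / x)) :=
              mul_le_mul hf (herr d hd) (norm_nonneg _) (div_nonneg vonMangoldt_nonneg (by positivity))
          _ = _ := by field_simp
      _ = (2 * N / x) * ∑ d ∈ Ioc 0 x, vonMangoldt d := by rw [mul_sum]
      _ ≤ (2 * N / x) * ((Real.log 4 + 4) * x) := by gcongr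
      _ = _ := by field_simp
  have h4 : ‖L‖ * ‖∑ n ∈ Ioc 0 x, f n‖ ≤ C + 2 * N * (Real.log 4 + 4) := by
    rw [← norm_mul, h2]
    refine (norm_add_le _ _).trans (add_le_add ?_ h3)
    simp_rw [hfg]; exact hC x
  rw [le_div_iff₀ (norm_pos_iff.mpr hL0), mul_comm]
  exact h4

open Finset ArithmeticFunction in
theorem aux_primes_AP (N : ℕ) [NeZero N] : ∃ A : ℕ, 1 < A ∧ ∀ u : ℕ, 1 ≤ u →
    (u : ℝ) / Real.log (A * u) ≤
      (((Ioc u (A * u)).filter fun l : ℕ => l.Prime ∧ (l : ZMod N) = 1).card : ℝ) := by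
  classical
  choose! C hC using aux_Tchi N
  obtain ⟨C1, hC1⟩ := aux_mertens
  have hφ : (0:ℝ) < N.totient := by exact_mod_cast Nat.totient_pos.mpr (NeZero.pos N)
  -- non-primes
  have hnp : ∃ C2 : ℝ, ∀ s : Finset ℕ, ∑ n ∈ s with ¬ n.Prime, vonMangoldt n / n ≤ C2 := by
    have hs := vonMangoldt.summable_residueClass_non_primes_div (q := 1) 0
    refine ⟨_, fun s => le_trans ?_ (hs.sum_le_tsum s ?_)⟩
    · rw [sum_filter]
      refine le_of_eq (sum_congr rfl fun n _ => ?_)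
      have : vonMangoldt.residueClass (q := 1) 0 n = vonMangoldt n := by
        simp [vonMangoldt.residueClass, Subsingleton.elim (n : ZMod 1) 0]
      by_cases h : n.Prime <;> simp [h, this]
    · intro n _
      have := vonMangoldt.residueClass_nonneg (q := 1) 0 n
      split_ifs <;> positivity
  obtain ⟨C2, hC2⟩ := hnp
  -- the principal part
  set res := vonMangoldt.residueClass (q := N) 1 with hres
  have hdecomp : ∀ s : Finset ℕ, ((N.totient : ℝ) : ℂ) * ((∑ n ∈ s, res n / n : ℝ) : ℂ)
      = ∑ χ : DirichletCharacter ℂ N, ∑ n ∈ s, χ (n : ZMod N) * (vonMangoldt n : ℝ) / n := by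
    intro s
    rw [sum_comm]
    push_cast
    rw [mul_sum]
    refine sum_congr rfl fun n _ => ?_
    have := vonMangoldt.residueClass_apply (q := N) (a := 1) isUnit_one n
    rw [hres, this]
    have h0 : ((N.totient : ℕ) : ℂ) ≠ 0 := by exact_mod_cast hφ.ne'
    have : (1 : ZMod N)⁻¹ = 1 := by simp
    simp only [this, map_one, one_mul]
    rw [← sum_div]
    rw [mul_div_assoc, mul_inv_cancel_left₀ h0]
  set C3 := ∑ n ∈ Ioc 0 N, vonMangoldt n / n with hC3
  have htriv : ∀ s : Finset ℕ, ∑ n ∈ s, vonMangoldt n / n - C3 - C2 ≤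
      (∑ n ∈ s, (1 : DirichletCharacter ℂ N) (n : ZMod N) * ((vonMangoldt n : ℝ) : ℂ) / n).re := by
    intro s
    have hre : (∑ n ∈ s, (1 : DirichletCharacter ℂ N) (n : ZMod N) * ((vonMangoldt n : ℝ) : ℂ) / n).re
      = ∑ n ∈ s, (if IsUnit (n : ZMod N) then vonMangoldt n / n else 0) := by
      rw [Complex.re_sum]
      refine sum_congr rfl fun n _ => ?_
      split_ifs with h
      · rw [MulChar.one_apply h, one_mul, ← Complex.ofReal_natCast, ← Complex.ofReal_div, Complex.ofReal_re]
      · rw [MulChar.map_nonunit _ h]; simp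
    rw [hre]
    have h1 : ∀ n ∈ s, vonMangoldt n / n ≤ (if IsUnit (n : ZMod N) then vonMangoldt n / n else 0)
       + (if n ∈ Ioc 0 N then vonMangoldt n / n else 0) + (if ¬ n.Prime then vonMangoldt n / n else 0) := by
      intro n _
      have h0 : 0 ≤ vonMangoldt n / n := div_nonneg vonMangoldt_nonneg (by positivity)
      by_cases ha : IsUnit (n : ZMod N)
      · simp only [ha, if_true]; split_ifs <;> linarith
      by_cases hb : n.Prime
      · have : n ∈ Ioc 0 N := by
          rw [ZMod.isUnit_iff_coprime] at ha
          have := (Nat.Prime.dvd_iff_not_coprime hb).mpr ha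
          exact mem_Ioc.mpr ⟨hb.pos, Nat.le_of_dvd (NeZero.pos N) this⟩
        simp only [this, if_true]; split_ifs <;> linarith
      · simp only [hb, not_false_eq_true, if_true]; split_ifs <;> linarith
    have h2 := sum_le_sum h1
    rw [sum_add_distrib, sum_add_distrib] at h2
    have h3 : ∑ n ∈ s, (if n ∈ Ioc 0 N then vonMangoldt n / n else 0) ≤ C3 := by
      rw [← sum_filter]
      refine sum_le_sum_of_subset_of_nonneg (fun i hi => (mem_filter.mp hi).2)
        fun i _ _ => div_nonneg vonMangoldt_nonneg (by positivity)
    have h4 := hC2 s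
    rw [sum_filter] at h4
    linarith
  -- total constant
  set D := ∑ χ : DirichletCharacter ℂ N, (if χ = 1 then 0 else 2 * C χ) with hD
  obtain ⟨A, hA⟩ := exists_nat_gt (Real.exp (N.totient * (1 + C2) + D + C3 + C2 + 2 * C1) + 1)
  have hA1 : 1 < (A:ℝ) := by have := Real.exp_pos (N.totient * (1 + C2) + D + C3 + C2 + 2 * C1); linarith
  refine ⟨A, by exact_mod_cast hA1, fun u hu => ?_⟩
  have hu0 : (0:ℝ) < u := by exact_mod_cast hu
  have hAu : u ≤ A * u := Nat.le_mul_of_pos_left _ (by exact_mod_cast (by linarith : (0:ℝ) < A))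
  have hlogA : N.totient * (1 + C2) + D + C3 + C2 + 2 * C1 ≤ Real.log A := by
    rw [Real.le_log_iff_exp_le (by linarith)]; linarith
  have hsplit : ∀ {M : Type} [AddCommGroup M] (f : ℕ → M), ∑ n ∈ Ioc u (A * u), f n
      = ∑ n ∈ Ioc 0 (A * u), f n - ∑ n ∈ Ioc 0 u, f n := by
    intro M _ f
    rw [eq_sub_iff_add_eq, add_comm, sum_Ioc_consecutive _ (Nat.zero_le _) hAu]
  have hM : Real.log A - 2 * C1 ≤ ∑ n ∈ Ioc u (A * u), vonMangoldt n / n := by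
    rw [hsplit]
    have h1 := abs_le.mp (hC1 u hu)
    have h2 := abs_le.mp (hC1 (A * u) (hu.trans hAu))
    have h3 : Real.log ((A * u : ℕ) : ℝ) = Real.log A + Real.log u := by
      push_cast; rw [Real.log_mul (by linarith) hu0.ne']
    rw [h3] at h2
    linarith [h1.2, h2.1]
  have hother : ∀ χ : DirichletCharacter ℂ N, χ ≠ 1 →
      -(2 * C χ) ≤ (∑ n ∈ Ioc u (A * u), χ (n : ZMod N) * ((vonMangoldt n : ℝ) : ℂ) / n).re := by
    intro χ hχ
    rw [hsplit]
    have h1 := hC χ hχ u hu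
    have h2 := hC χ hχ (A * u) (hu.trans hAu)
    have h3 := (Complex.abs_re_le_norm _).trans (norm_sub_le (∑ n ∈ Ioc 0 (A * u), χ (n : ZMod N) * ((vonMangoldt n : ℝ) : ℂ) / n) (∑ n ∈ Ioc 0 u, χ (n : ZMod N) * ((vonMangoldt n : ℝ) : ℂ) / n))
    have := (abs_le.mp h3).1
    linarith
  have hS : 1 + C2 ≤ ∑ n ∈ Ioc u (A * u), res n / n := by
    have h1 := congrArg Complex.re (hdecomp (Ioc u (A * u)))
    rw [← Complex.ofReal_mul, Complex.ofReal_re, Complex.re_sum] at h1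
    rw [← Finset.add_sum_erase _ _ (mem_univ (1 : DirichletCharacter ℂ N))] at h1
    have h2 : -D ≤ ∑ χ ∈ univ.erase (1 : DirichletCharacter ℂ N),
        (∑ n ∈ Ioc u (A * u), χ (n : ZMod N) * ((vonMangoldt n : ℝ) : ℂ) / n).re := by
      rw [hD, ← Finset.add_sum_erase _ _ (mem_univ (1 : DirichletCharacter ℂ N)), if_pos rfl, zero_add, ← sum_neg_distrib]
      refine sum_le_sum fun χ hχ => ?_
      have := (mem_erase.mp hχ).1
      rw [if_neg this]
      exact hother χ this
    have h3 := htriv (Ioc u (A * u))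
    have h4 : N.totient * (1 + C2) ≤ N.totient * ∑ n ∈ Ioc u (A * u), res n / n := by
      rw [h1]; linarith
    exact le_of_mul_le_mul_left h4 hφ
  -- restrict to primes
  have hlog : 0 < Real.log (A * u) := Real.log_pos (by
    have : (1:ℝ) ≤ u := by exact_mod_cast hu
    nlinarith)
  have hP : (1:ℝ) ≤ ∑ n ∈ (Ioc u (A * u)).filter (fun l : ℕ => l.Prime ∧ (l : ZMod N) = 1), Real.log (A * u) / u := by
    have h1 : ∑ n ∈ Ioc u (A * u), res n / n ≤
      ∑ n ∈ Ioc u (A * u), ((if n.Prime ∧ (n : ZMod N) = 1 then Real.log (A * u) / u else 0) + (if ¬ n.Prime then vonMangoldt n / n else 0)) := by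
      refine sum_le_sum fun n hn => ?_
      have hn' := mem_Ioc.mp hn
      have hun : (u:ℝ) < n := by exact_mod_cast hn'.1
      have hn2 : (n:ℝ) ≤ A * u := by exact_mod_cast hn'.2
      have h0 : 0 ≤ vonMangoldt n / n := div_nonneg vonMangoldt_nonneg (by positivity)
      have h00 : 0 ≤ Real.log (A * u) / u := by positivity
      by_cases hp : n.Prime
      · by_cases h1 : (n : ZMod N) = 1
        · simp only [hp, h1, and_self, if_true, not_true_eq_false, if_false, add_zero]
          have : res n = Real.log n := by
            rw [hres, vonMangoldt.residueClass, Set.indicator_of_mem (by exact h1), vonMangoldt_apply_prime hp]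
          rw [this]
          have : Real.log n ≤ Real.log (A * u) := Real.log_le_log (by linarith) hn2
          gcongr
        · have : res n = 0 := by
            rw [hres, vonMangoldt.residueClass, Set.indicator_of_notMem (by exact h1)]
          simp [this, hp, h1]
      · simp only [hp, false_and, if_false, not_false_eq_true, if_true, zero_add]
        gcongr
        exact vonMangoldt.residueClass_le 1 n
    rw [sum_add_distrib, ← sum_filter, ← sum_filter] at h1
    have h2 := hC2 (Ioc u (A * u))
    linarith
  rw [sum_const, nsmul_eq_mul] at hP
  rw [div_le_iff₀ hlog]
  have : (1:ℝ) * u ≤ (_ * (Real.log (A * u) / u)) * u := mul_le_mul_of_nonneg_right hP hu0.le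
  rw [mul_assoc, div_mul_cancel₀ _ hu0.ne'] at this
  linarith

/-- A quadratic polynomial. -/
def qF {R : Type*} [CommRing R] {m : ℕ} (A : Fin m → Fin m → R) (L : Fin m → R) (k : R)
    (x : Fin m → R) : R :=
  ∑ i, ∑ j, A i j * x i * x j + ∑ i, L i * x i + k

/-- Reduction of an integral quadratic polynomial modulo `q`. -/
def qM {m : ℕ} (A : Fin m → Fin m → ℤ) (L : Fin m → ℤ) (k : ℤ) (q : ℕ)
    (x : Fin m → ZMod q) : ZMod q :=
  qF (fun i j => (A i j : ZMod q)) (fun i => (L i : ZMod q)) (k : ZMod q) x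

/-- Number of zeros modulo `q`. -/
noncomputable def cnt {m : ℕ} (A : Fin m → Fin m → ℤ) (L : Fin m → ℤ) (k : ℤ) (q : ℕ) : ℕ :=
  Nat.card {x : Fin m → ZMod q // qM A L k q x = 0}

theorem qF_map {R S : Type*} [CommRing R] [CommRing S] (f : R →+* S) {m : ℕ}
    (A : Fin m → Fin m → R) (L : Fin m → R) (k : R) (x : Fin m → R) :
    f (qF A L k x) = qF (fun i j => f (A i j)) (fun i => f (L i)) (f k) (fun i => f (x i)) := by
  simp [qF]

theorem qM_cast {m : ℕ} (A : Fin m → Fin m → ℤ) (L : Fin m → ℤ) (k : ℤ) (q : ℕ) (x : Fin m → ℤ) :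
    qM A L k q (fun i => (x i : ZMod q)) = ((qF A L k x : ℤ) : ZMod q) := by
  have := qF_map (Int.castRingHom (ZMod q)) A L k x
  simpa [qM] using this.symm

theorem qM_castHom {m : ℕ} (A : Fin m → Fin m → ℤ) (L : Fin m → ℤ) (k : ℤ) (q Q : ℕ) (f : ZMod Q →+* ZMod q)
    (x : Fin m → ZMod Q) :
    f (qM A L k Q x) = qM A L k q (fun i => f (x i)) := by
  rw [qM, qF_map]; simp [qM]

theorem qF_add {R : Type*} [CommRing R] {m : ℕ} (A : Fin m → Fin m → R) (L : Fin m → R) (k : R)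
    (x h : Fin m → R) :
    qF A L k (x + h) = qF A L k x + (qF A L k h - k) + ∑ i, (∑ j, (A i j + A j i) * h j) * x i := by
  have e : ∑ i, (∑ j, (A i j + A j i) * h j) * x i
      = ∑ i, ∑ j, A i j * x i * h j + ∑ i, ∑ j, A i j * h i * x j := by
    have : ∑ i, ∑ j, A i j * h i * x j = ∑ i, ∑ j, A j i * h j * x i := Finset.sum_comm
    rw [this, ← Finset.sum_add_distrib]
    refine Finset.sum_congr rfl fun i _ => ?_
    rw [Finset.sum_mul, ← Finset.sum_add_distrib]
    exact Finset.sum_congr rfl fun j _ => by ring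
  rw [e]
  simp only [qF, Pi.add_apply, mul_add, add_mul, Finset.sum_add_distrib]
  ring

open Finset in
theorem weyl {m q : ℕ} [NeZero q] (A : Fin m → Fin m → ZMod q) (L : Fin m → ZMod q) (k : ZMod q)
    (a : ZMod q) (ha : IsUnit a) :
    ‖∑ b : Fin m → ZMod q, ZMod.stdAddChar (a * qF A L k b)‖ ^ 2 ≤
      (q:ℝ) ^ m * (Nat.card {h : Fin m → ZMod q // ∀ i, ∑ j, (A i j + A j i) * h j = 0} : ℝ) := by
  classical
  set ψ := ZMod.stdAddChar (N := q) with hψ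
  set S := ∑ b : Fin m → ZMod q, ψ (a * qF A L k b) with hS
  have h1 : ((‖S‖ ^ 2 : ℝ) : ℂ) = ∑ h : Fin m → ZMod q, ψ (a * (qF A L k h - k)) *
      ∑ b : Fin m → ZMod q, ψ (a * ∑ i, (∑ j, (A i j + A j i) * h j) * b i) := by
    have : ((‖S‖ ^ 2 : ℝ) : ℂ) = S * starRingEnd ℂ S := by
      rw [Complex.mul_conj, Complex.normSq_eq_norm_sq]
    rw [this]
    conv_lhs => rw [hS]
    rw [map_sum, sum_mul_sum, sum_comm]
    have : ∀ b : Fin m → ZMod q, ∑ c : Fin m → ZMod q, ψ (a * qF A L k c) * starRingEnd ℂ (ψ (a * qF A L k b))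
      = ∑ h : Fin m → ZMod q, ψ (a * (qF A L k h - k)) * ψ (a * ∑ i, (∑ j, (A i j + A j i) * h j) * b i) := by
      intro b
      rw [← Equiv.sum_comp (Equiv.addLeft b)]
      refine sum_congr rfl fun h _ => ?_
      rw [← AddChar.map_neg_eq_conj, ← AddChar.map_add_eq_mul, ← AddChar.map_add_eq_mul]
      congr 1
      rw [Equiv.coe_addLeft, qF_add]; ring
    rw [sum_congr rfl fun b _ => this b, sum_comm]
    exact sum_congr rfl fun h _ => by rw [mul_sum]
  have h2 : ∀ h : Fin m → ZMod q, ∑ b : Fin m → ZMod q, ψ (a * ∑ i, (∑ j, (A i j + A j i) * h j) * b i)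
      = if ∀ i, ∑ j, (A i j + A j i) * h j = 0 then ((q:ℂ) ^ m) else 0 := by
    intro h
    set v : Fin m → ZMod q := fun i => ∑ j, (A i j + A j i) * h j with hv
    let lin : (Fin m → ZMod q) →+ ZMod q :=
      { toFun := fun b => a * ∑ i, v i * b i
        map_zero' := by simp
        map_add' := by intro x y; simp [mul_add, sum_add_distrib] }
    have hE : ∀ b : Fin m → ZMod q, ψ (a * ∑ i, (∑ j, (A i j + A j i) * h j) * b i) = (ψ.compAddMonoidHom lin) b := by
      intro b; rfl
    rw [sum_congr rfl fun b _ => hE b]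
    split_ifs with hc
    · have : ψ.compAddMonoidHom lin = 1 := by
        ext b
        have hv0 : ∀ i, v i = 0 := hc
        simp [lin, hv0]
      rw [this]; simp [ZMod.card]
    · apply AddChar.sum_eq_zero_of_ne_one
      intro h1
      apply hc
      intro i
      change v i = 0
      have hprim := ZMod.isPrimitive_stdAddChar q
      by_contra hvi
      have hne : a * v i ≠ 0 := by
        intro h0; exact hvi (by simpa using (ha.mul_right_eq_zero).mp h0)
      obtain ⟨t, ht⟩ := (AddChar.ne_one_iff).mp (hprim hne)
      apply ht
      have := DFunLike.congr_fun h1 (Pi.single i t)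
      simp only [AddChar.compAddMonoidHom_apply, AddChar.one_apply] at this
      rw [← this, AddChar.mulShift_apply]
      congr 1
      simp [lin, Pi.single_apply, mul_assoc]
  have h3 : (‖S‖ ^ 2 : ℝ) = ‖((‖S‖ ^ 2 : ℝ) : ℂ)‖ := by
    rw [Complex.norm_real, Real.norm_of_nonneg (by positivity)]
  rw [h3, h1]
  refine (norm_sum_le _ _).trans ?_
  have h4 : ∀ h : Fin m → ZMod q, ‖ψ (a * (qF A L k h - k)) *
      ∑ b : Fin m → ZMod q, ψ (a * ∑ i, (∑ j, (A i j + A j i) * h j) * b i)‖ =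
      if ∀ i, ∑ j, (A i j + A j i) * h j = 0 then ((q:ℝ) ^ m) else 0 := by
    intro h
    rw [norm_mul, AddChar.norm_apply, one_mul, h2]
    split_ifs <;> simp
  rw [sum_congr rfl fun h _ => h4 h, ← sum_filter, sum_const, nsmul_eq_mul, mul_comm,
    Nat.card_eq_fintype_card, Fintype.card_subtype]

open Finset in
theorem ker_card {m q s : ℕ} [NeZero q] (B : Fin m → Fin m → ZMod q) (e : Fin s → Fin m) (X : Fin m → Fin s → ZMod q)
    (Δ : ZMod q) (hX : ∀ r t, ∑ j, B (e r) j * X j t = if r = t then Δ else 0) :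
    Nat.card {h : Fin m → ZMod q // ∀ i, ∑ j, B i j * h j = 0} * q ^ s
      ≤ (Nat.card {t : ZMod q // Δ * t = 0}) ^ s * q ^ m := by
  classical
  let K := (univ : Finset (Fin m → ZMod q)).filter fun h => ∀ i, ∑ j, B i j * h j = 0
  have hK : Nat.card {h : Fin m → ZMod q // ∀ i, ∑ j, B i j * h j = 0} = #K := by
    rw [Nat.card_eq_fintype_card, Fintype.card_subtype]
  let Z := (univ : Finset (ZMod q)).filter fun t => Δ * t = 0
  have hZ : Nat.card {t : ZMod q // Δ * t = 0} = #Z := by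
    rw [Nat.card_eq_fintype_card, Fintype.card_subtype]
  rw [hK, hZ]
  have hcard : #(K ×ˢ (univ : Finset (Fin s → ZMod q))) = #K * q ^ s := by
    rw [card_product]; simp [ZMod.card]
  rw [← hcard]
  let f : (Fin m → ZMod q) × (Fin s → ZMod q) → (Fin m → ZMod q) :=
    fun p j => p.1 j + ∑ t, X j t * p.2 t
  have hf : ∀ p ∈ K ×ˢ (univ : Finset (Fin s → ZMod q)), ∀ r, ∑ j, B (e r) j * f p j = Δ * p.2 r := by
    intro p hp r
    have hp1 := (mem_filter.mp (mem_product.mp hp).1).2 (e r)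
    simp only [f, mul_add, sum_add_distrib, hp1, zero_add, mul_sum]
    rw [sum_comm]
    have : ∀ t, ∑ j, B (e r) j * (X j t * p.2 t) = (if r = t then Δ else 0) * p.2 t := by
      intro t; rw [← hX, sum_mul]; exact sum_congr rfl fun j _ => by ring
    simp [this]
  have := card_le_mul_card_image (f := f) (K ×ˢ (univ : Finset (Fin s → ZMod q))) (#Z ^ s) ?_
  · refine this.trans (Nat.mul_le_mul_left _ ?_)
    refine (card_le_univ _).trans ?_
    simp [ZMod.card]
  · intro y hy
    obtain ⟨p0, hp0, rfl⟩ := mem_image.mp hy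
    have hpi : #(Fintype.piFinset fun _ : Fin s => Z) = #Z ^ s := by simp
    rw [← hpi]
    refine card_le_card_of_injOn (fun p => p.2 - p0.2) ?_ ?_
    · intro p hp
      have hp := mem_filter.mp hp
      refine Fintype.mem_piFinset.mpr fun r => ?_
      simp only [Z, mem_filter, mem_univ, true_and, Pi.sub_apply, mul_sub]
      rw [← hf p hp.1, ← hf p0 hp0, hp.2, sub_self]
    · intro p hp p' hp' hpp
      have hp := mem_filter.mp hp
      have hp' := mem_filter.mp hp'
      have h2 : p.2 = p'.2 := sub_left_injective hpp
      have h1 : f p = f p' := hp.2.trans hp'.2.symm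
      refine Prod.ext ?_ h2
      funext j
      have := congrFun h1 j
      simp only [f, h2] at this
      exact add_right_cancel this

theorem ann_card_le (q : ℕ) [NeZero q] (Δ : ℤ) (hΔ : Δ ≠ 0) :
    Nat.card {t : ZMod q // (Δ : ZMod q) * t = 0} ≤ Δ.natAbs := by
  classical
  have := IsAddCyclic.card_nsmul_eq_zero_le (α := ZMod q) (n := Δ.natAbs) (by omega)
  rw [Nat.card_eq_fintype_card, Fintype.card_subtype]
  refine le_trans (le_of_eq ?_) this
  congr 1
  ext t
  simp only [Finset.mem_filter, Finset.mem_univ, true_and, nsmul_eq_mul]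
  rcases Int.natAbs_eq Δ with h | h
  · conv_lhs => rw [h]
    simp
  · conv_lhs => rw [h]
    simp

theorem ann_card_unit (q : ℕ) [NeZero q] (Δ : ZMod q) (hΔ : IsUnit Δ) :
    Nat.card {t : ZMod q // Δ * t = 0} = 1 := by
  rw [Nat.card_eq_one_iff_unique]
  refine ⟨⟨fun a b => Subtype.ext ?_⟩, ⟨⟨0, by simp⟩⟩⟩
  have ha := (hΔ.mul_right_eq_zero).mp a.2
  have hb := (hΔ.mul_right_eq_zero).mp b.2
  rw [ha, hb]

theorem natcast_bij (m q : ℕ) [NeZero q] :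
    Function.Bijective (fun (b : Fin m → Fin q) (j : Fin m) => ((b j : ℕ) : ZMod q)) := by
  rw [Fintype.bijective_iff_injective_and_card]
  refine ⟨?_, by simp [ZMod.card]⟩
  intro b c h
  funext j
  have := congrFun h j
  simp only at this
  rw [ZMod.natCast_eq_natCast_iff'] at this
  rw [Nat.mod_eq_of_lt (b j).2, Nat.mod_eq_of_lt (c j).2] at this
  exact Fin.ext this

theorem expSum_eq {m : ℕ} (A : Fin m → Fin m → ℤ) (L : Fin m → ℤ) (k : ℤ) (q : ℕ) [NeZero q] :
    expSum m (fun x => qF A L k x) q = ∑ a ∈ (Finset.range q).filter fun a => Nat.gcd a q = 1,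
      ∑ b : Fin m → ZMod q, ZMod.stdAddChar ((a : ZMod q) * qM A L k q b) := by
  unfold expSum
  refine Finset.sum_congr rfl fun a _ => ?_
  rw [← (natcast_bij m q).sum_comp]
  refine Finset.sum_congr rfl fun b _ => ?_
  have h1 := qM_cast A L k q (fun j => ((b j : ℕ) : ℤ))
  simp only [Int.cast_natCast] at h1
  rw [h1]
  have : ((a : ZMod q) * ((qF A L k (fun j => ((b j : ℕ) : ℤ)) : ℤ) : ZMod q))
      = (((a : ℤ) * qF A L k (fun j => ((b j : ℕ) : ℤ)) : ℤ) : ZMod q) := by push_cast; ring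
  rw [this, ZMod.stdAddChar_coe]
  congr 1
  push_cast
  ring

theorem std_scale {q d : ℕ} [NeZero q] [NeZero (d * q)] (z : ℤ) :
    ZMod.stdAddChar (N := d * q) (((d : ℤ) * z : ℤ) : ZMod (d * q)) = ZMod.stdAddChar (N := q) (z : ZMod q) := by
  rw [ZMod.stdAddChar_coe, ZMod.stdAddChar_coe]
  congr 1
  have hd : (d:ℂ) ≠ 0 := by
    have := NeZero.ne (d * q)
    exact_mod_cast (left_ne_zero_of_mul this)
  have hq : (q:ℂ) ≠ 0 := by exact_mod_cast NeZero.ne q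
  push_cast
  field_simp

theorem sum_reduce {m q d : ℕ} [NeZero q] [NeZero (d * q)] (f : (Fin m → ZMod q) → ℂ) :
    ∑ b : Fin m → ZMod (d * q), f (fun j => ZMod.castHom (dvd_mul_left q d) (ZMod q) (b j))
      = (d : ℂ) ^ m * ∑ b : Fin m → ZMod q, f b := by
  classical
  rw [Finset.mul_sum, ← Finset.sum_fiberwise_of_maps_to (s := Finset.univ) (t := Finset.univ)
    (g := fun (b : Fin m → ZMod (d * q)) => (fun j => ZMod.castHom (dvd_mul_left q d) (ZMod q) (b j)))
    (fun _ _ => Finset.mem_univ _)]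
  refine Finset.sum_congr rfl fun c _ => ?_
  rw [Finset.sum_congr rfl (g := fun _ => f c) (fun b hb => by rw [(Finset.mem_filter.mp hb).2])]
  rw [Finset.sum_const, nsmul_eq_mul]
  congr 1
  have : (Finset.univ.filter fun (b : Fin m → ZMod (d * q)) => (fun j => ZMod.castHom (dvd_mul_left q d) (ZMod q) (b j)) = c)
      = Fintype.piFinset fun j => Finset.univ.filter fun t : ZMod (d*q) => ZMod.castHom (dvd_mul_left q d) (ZMod q) t = c j := by
    ext b
    simp only [Finset.mem_filter, Finset.mem_univ, true_and, Fintype.mem_piFinset, funext_iff]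
  rw [this, Fintype.card_piFinset]
  have hc : ∀ t : ZMod q, (Finset.univ.filter fun s : ZMod (d*q) => ZMod.castHom (dvd_mul_left q d) (ZMod q) s = t).card = d := by
    set φ := (ZMod.castHom (dvd_mul_left q d) (ZMod q)) with hφ
    have hsurj : Function.Surjective φ := ZMod.castHom_surjective _
    have h1 : ∀ t, (Finset.univ.filter fun s : ZMod (d*q) => φ s = t).card = (Finset.univ.filter fun s : ZMod (d*q) => φ s = 0).card := by
      intro t
      obtain ⟨t0, rfl⟩ := hsurj t
      refine Finset.card_nbij' (fun s => s - t0) (fun s => s + t0) ?_ ?_ ?_ ?_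
      · intro s hs; simp at hs ⊢; simp [hs]
      · intro s hs; simp at hs ⊢; simp [hs]
      · intro s _; simp
      · intro s _; simp
    have h2 := Finset.card_eq_sum_card_fiberwise (s := (Finset.univ : Finset (ZMod (d*q)))) (t := (Finset.univ : Finset (ZMod q))) (f := φ) (fun _ _ => Finset.mem_coe.mpr (Finset.mem_univ _))
    rw [Finset.sum_congr rfl fun t _ => h1 t, Finset.sum_const, Finset.card_univ, Finset.card_univ, ZMod.card, ZMod.card, smul_eq_mul] at h2
    intro t
    rw [h1 t]
    exact (Nat.eq_of_mul_eq_mul_left (Nat.pos_of_ne_zero (NeZero.ne q)) ((mul_comm q d).trans h2)).symm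
  rw [Finset.prod_congr rfl fun j _ => hc (c j)]
  simp

theorem full_sum {m : ℕ} (A : Fin m → Fin m → ℤ) (L : Fin m → ℤ) (k : ℤ) (Q : ℕ) [NeZero Q] :
    ∑ a ∈ Finset.range Q, ∑ b : Fin m → ZMod Q, ZMod.stdAddChar ((a : ZMod Q) * qM A L k Q b)
      = (Q : ℂ) * cnt A L k Q := by
  classical
  rw [Finset.sum_comm]
  have : ∀ b : Fin m → ZMod Q, ∑ a ∈ Finset.range Q, ZMod.stdAddChar ((a : ZMod Q) * qM A L k Q b)
      = if qM A L k Q b = 0 then (Q:ℂ) else 0 := by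
    intro b
    have h1 : ∑ a ∈ Finset.range Q, ZMod.stdAddChar ((a : ZMod Q) * qM A L k Q b)
        = ∑ a : ZMod Q, ZMod.stdAddChar (a * (qM A L k Q b)) := by
      rw [Finset.sum_range]
      have hb : Function.Bijective (fun a : Fin Q => ((a : ℕ) : ZMod Q)) := by
        rw [Fintype.bijective_iff_injective_and_card]
        refine ⟨?_, by simp [ZMod.card]⟩
        intro b c h
        simp only at h
        rw [ZMod.natCast_eq_natCast_iff', Nat.mod_eq_of_lt b.2, Nat.mod_eq_of_lt c.2] at h
        exact Fin.ext h
      rw [← hb.sum_comp]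
    rw [h1, AddChar.sum_mulShift _ (ZMod.isPrimitive_stdAddChar Q), ZMod.card]
    split_ifs <;> simp
  rw [Finset.sum_congr rfl fun b _ => this b, ← Finset.sum_filter, Finset.sum_const, nsmul_eq_mul, mul_comm]
  congr 2
  rw [cnt, Nat.card_eq_fintype_card, Fintype.card_subtype]

theorem div_ident {m : ℕ} (A : Fin m → Fin m → ℤ) (L : Fin m → ℤ) (k : ℤ) (Q : ℕ) [NeZero Q] :
    ∑ q ∈ Q.divisors, (q : ℂ) ^ (-(m : ℤ)) * expSum m (fun x => qF A L k x) q
      = (Q : ℂ) * cnt A L k Q / (Q : ℂ) ^ m := by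
  classical
  have hQ0 : Q ≠ 0 := NeZero.ne Q
  rw [← full_sum, Finset.sum_div]
  rw [← Finset.sum_fiberwise_of_maps_to (s := Finset.range Q) (t := Q.divisors) (g := fun a => Q / Nat.gcd a Q)
    (fun a _ => by
      simp only [Nat.mem_divisors]
      exact ⟨Nat.div_dvd_of_dvd (Nat.gcd_dvd_right _ _), hQ0⟩)]
  refine Finset.sum_congr rfl fun q hq => ?_
  obtain ⟨hqQ, -⟩ := Nat.mem_divisors.mp hq
  obtain ⟨d, hd⟩ := hqQ
  rw [mul_comm] at hd
  subst hd
  have hq0 : q ≠ 0 := right_ne_zero_of_mul hQ0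
  have hd0 : d ≠ 0 := left_ne_zero_of_mul hQ0
  haveI : NeZero q := ⟨hq0⟩
  rw [expSum_eq, Finset.mul_sum]
  symm
  refine Finset.sum_nbij' (fun a => a / d) (fun a => d * a) ?_ ?_ ?_ ?_ ?_
  · intro a ha
    obtain ⟨h1, h2⟩ := Finset.mem_filter.mp ha
    have hg : Nat.gcd a (d * q) = d := by
      have h3 := Nat.div_mul_cancel (Nat.gcd_dvd_right a (d * q))
      rw [h2] at h3
      exact Nat.eq_of_mul_eq_mul_left (Nat.pos_of_ne_zero hq0) (by linarith)
    have hda : d ∣ a := hg ▸ Nat.gcd_dvd_left a (d*q)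
    obtain ⟨a', rfl⟩ := hda
    rw [Finset.mem_filter, Nat.mul_div_cancel_left _ (Nat.pos_of_ne_zero hd0)]
    refine ⟨Finset.mem_range.mpr (Nat.lt_of_mul_lt_mul_left (Finset.mem_range.mp h1)), ?_⟩
    rw [Nat.gcd_mul_left] at hg
    exact Nat.eq_of_mul_eq_mul_left (Nat.pos_of_ne_zero hd0) (by simpa using hg)
  · intro a ha
    obtain ⟨h1, h2⟩ := Finset.mem_filter.mp ha
    refine Finset.mem_filter.mpr ⟨Finset.mem_range.mpr (Nat.mul_lt_mul_of_pos_left (Finset.mem_range.mp h1) (Nat.pos_of_ne_zero hd0)), ?_⟩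
    rw [Nat.gcd_mul_left, h2, mul_one, Nat.mul_div_cancel_left _ (Nat.pos_of_ne_zero hd0)]
  · intro a ha
    obtain ⟨h1, h2⟩ := Finset.mem_filter.mp ha
    have hg : Nat.gcd a (d * q) = d := by
      have h3 := Nat.div_mul_cancel (Nat.gcd_dvd_right a (d * q))
      rw [h2] at h3
      exact Nat.eq_of_mul_eq_mul_left (Nat.pos_of_ne_zero hq0) (by linarith)
    have hda : d ∣ a := hg ▸ Nat.gcd_dvd_left a (d*q)
    exact Nat.mul_div_cancel' hda
  · intro a ha
    exact Nat.mul_div_cancel_left _ (Nat.pos_of_ne_zero hd0)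
  · intro a ha
    obtain ⟨h1, h2⟩ := Finset.mem_filter.mp ha
    have hg : Nat.gcd a (d * q) = d := by
      have h3 := Nat.div_mul_cancel (Nat.gcd_dvd_right a (d * q))
      rw [h2] at h3
      exact Nat.eq_of_mul_eq_mul_left (Nat.pos_of_ne_zero hq0) (by linarith)
    have hda : d ∣ a := hg ▸ Nat.gcd_dvd_left a (d*q)
    obtain ⟨a', rfl⟩ := hda
    rw [Nat.mul_div_cancel_left _ (Nat.pos_of_ne_zero hd0)]
    have h4 : ∀ b : Fin m → ZMod (d * q), ZMod.stdAddChar (((d * a' : ℕ) : ZMod (d*q)) * qM A L k (d*q) b)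
        = (fun c => ZMod.stdAddChar ((a' : ZMod q) * qM A L k q c)) (fun j => ZMod.castHom (dvd_mul_left q d) (ZMod q) (b j)) := by
      intro b
      simp only
      rw [← qM_castHom]
      obtain ⟨z, hz⟩ := ZMod.intCast_surjective (qM A L k (d*q) b)
      rw [← hz, map_intCast]
      have := std_scale (q := q) (d := d) (a' * z)
      push_cast at this ⊢
      rw [← this]
      congr 1; ring
    rw [Finset.sum_congr rfl fun b _ => h4 b, sum_reduce (fun c => ZMod.stdAddChar ((a' : ZMod q) * qM A L k q c))]
    have hqC : (q:ℂ) ≠ 0 := by exact_mod_cast hq0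
    have hdC : (d:ℂ) ≠ 0 := by exact_mod_cast hd0
    rw [_root_.zpow_neg, zpow_natCast]
    push_cast
    rw [mul_pow]
    field_simp

theorem S_bound {m q s : ℕ} [NeZero q] (A : Fin m → Fin m → ZMod q) (L : Fin m → ZMod q) (k : ZMod q)
    (a : ZMod q) (ha : IsUnit a) (e : Fin s → Fin m) (X : Fin m → Fin s → ZMod q) (Δ : ZMod q)
    (hX : ∀ r t, ∑ j, (A (e r) j + A j (e r)) * X j t = if r = t then Δ else 0) (Z : ℕ)
    (hZ : Nat.card {t : ZMod q // Δ * t = 0} ≤ Z) :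
    ‖∑ b : Fin m → ZMod q, ZMod.stdAddChar (a * qF A L k b)‖ ≤
      (q:ℝ) ^ m * Real.sqrt ((Z:ℝ) ^ s / (q:ℝ) ^ s) := by
  have hq : (0:ℝ) < q := by exact_mod_cast Nat.pos_of_ne_zero (NeZero.ne q)
  have h1 := weyl A L k a ha
  have h2 := ker_card (fun i j => A i j + A j i) e X Δ hX
  have h3 : (Nat.card {h : Fin m → ZMod q // ∀ i, ∑ j, (A i j + A j i) * h j = 0} : ℝ) * (q:ℝ)^s ≤ (Z:ℝ)^s * (q:ℝ)^m := by
    have : (Nat.card {h : Fin m → ZMod q // ∀ i, ∑ j, (A i j + A j i) * h j = 0}) * q^s ≤ Z^s * q^m :=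
      h2.trans (Nat.mul_le_mul_right _ (Nat.pow_le_pow_left hZ _))
    exact_mod_cast this
  refine le_of_sq_le_sq ?_ (by positivity)
  rw [mul_pow, Real.sq_sqrt (by positivity)]
  refine h1.trans ?_
  rw [pow_two, mul_assoc]
  refine mul_le_mul_of_nonneg_left ?_ (by positivity)
  rw [← mul_div_assoc, le_div_iff₀ (by positivity)]
  linarith

theorem term_bound {m : ℕ} (A : Fin m → Fin m → ℤ) (L : Fin m → ℤ) (k : ℤ) (e : Fin 5 → Fin m)
    (X : Fin m → Fin 5 → ℤ) (Δ : ℤ) (hΔ : Δ ≠ 0)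
    (hX : ∀ r t, ∑ j, (A (e r) j + A j (e r)) * X j t = if r = t then Δ else 0) (q : ℕ) :
    ‖(q : ℂ) ^ (-(m : ℤ)) * expSum m (fun x => qF A L k x) q‖ ≤
      Real.sqrt ((Δ.natAbs : ℝ) ^ 5) * (1 / (q:ℝ) ^ (3/2 : ℝ)) := by
  rcases Nat.eq_zero_or_pos q with rfl | hq
  · simp [expSum]
  haveI : NeZero q := ⟨hq.ne'⟩
  have hqR : (0:ℝ) < q := by exact_mod_cast hq
  rw [expSum_eq, norm_mul, norm_zpow, Complex.norm_natCast, _root_.zpow_neg, zpow_natCast]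
  have h1 : ∀ a ∈ (Finset.range q).filter (fun a => Nat.gcd a q = 1),
      ‖∑ b : Fin m → ZMod q, ZMod.stdAddChar ((a : ZMod q) * qM A L k q b)‖ ≤
        (q:ℝ) ^ m * Real.sqrt ((Δ.natAbs : ℝ) ^ 5 / (q:ℝ) ^ 5) := by
    intro a ha
    refine S_bound _ _ _ _ ?_ e (fun j t => (X j t : ZMod q)) (Δ : ZMod q) ?_ _ (ann_card_le q Δ hΔ)
    · exact (ZMod.isUnit_iff_coprime a q).mpr (Finset.mem_filter.mp ha).2
    · intro r t
      have := congrArg (fun z : ℤ => (z : ZMod q)) (hX r t)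
      push_cast at this
      rw [this]
  have h2 : ‖∑ a ∈ (Finset.range q).filter (fun a => Nat.gcd a q = 1), ∑ b : Fin m → ZMod q, ZMod.stdAddChar ((a : ZMod q) * qM A L k q b)‖
      ≤ q * ((q:ℝ) ^ m * Real.sqrt ((Δ.natAbs : ℝ) ^ 5 / (q:ℝ) ^ 5)) := by
    refine (norm_sum_le_of_le _ h1).trans ?_
    rw [Finset.sum_const, nsmul_eq_mul]
    refine mul_le_mul_of_nonneg_right ?_ (by positivity)
    have := Finset.card_filter_le (Finset.range q) (fun a => Nat.gcd a q = 1)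
    rw [Finset.card_range] at this
    exact_mod_cast this
  refine (mul_le_mul_of_nonneg_left h2 (by positivity)).trans (le_of_eq ?_)
  rw [Real.sqrt_div (by positivity)]
  have h5 : Real.sqrt ((q:ℝ)^5) = q * (q:ℝ) ^ (3/2 : ℝ) := by
    rw [Real.sqrt_eq_rpow, ← Real.rpow_natCast, ← Real.rpow_mul hqR.le]
    conv_rhs => rw [← Real.rpow_one_add' hqR.le (by norm_num)]
    norm_num
  rw [h5]
  field_simp

theorem sing_summable {m : ℕ} (A : Fin m → Fin m → ℤ) (L : Fin m → ℤ) (k : ℤ) (e : Fin 5 → Fin m)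
    (X : Fin m → Fin 5 → ℤ) (Δ : ℤ) (hΔ : Δ ≠ 0)
    (hX : ∀ r t, ∑ j, (A (e r) j + A j (e r)) * X j t = if r = t then Δ else 0) :
    Summable fun q : ℕ => (q : ℂ) ^ (-(m : ℤ)) * expSum m (fun x => qF A L k x) q := by
  refine Summable.of_norm_bounded ?_ (term_bound A L k e X Δ hΔ hX)
  exact (Real.summable_one_div_nat_rpow.mpr (by norm_num)).mul_left _

theorem sing_lower {m : ℕ} (A : Fin m → Fin m → ℤ) (L : Fin m → ℤ) (k : ℤ)
    (hs : Summable fun q : ℕ => (q : ℂ) ^ (-(m : ℤ)) * expSum m (fun x => qF A L k x) q)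
    (Q : ℕ → ℕ) (hQ0 : ∀ T, Q T ≠ 0) (hQ : ∀ q : ℕ, 0 < q → ∀ᶠ T in Filter.atTop, q ∣ Q T) (δ : ℝ)
    (h : ∀ T, δ ≤ (Q T : ℝ) * cnt A L k (Q T) / (Q T : ℝ) ^ m) :
    δ ≤ (singSeries m (fun x => qF A L k x)).re := by
  have h1 := hs.hasSum
  have ht : Filter.Tendsto (fun T => insert 0 (Q T).divisors) Filter.atTop (Filter.atTop : Filter (Finset ℕ)) := by
    rw [Filter.tendsto_atTop]
    intro s
    have : ∀ q ∈ s, ∀ᶠ T in Filter.atTop, q ∈ insert 0 (Q T).divisors := by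
      intro q hq
      rcases Nat.eq_zero_or_pos q with rfl | hq0
      · exact Filter.Eventually.of_forall fun T => Finset.mem_insert_self _ _
      · filter_upwards [hQ q hq0] with T hT
        exact Finset.mem_insert_of_mem (Nat.mem_divisors.mpr ⟨hT, hQ0 T⟩)
    filter_upwards [(Filter.eventually_all_finset s).mpr this] with T hT
    exact hT
  have h2 := h1.comp ht
  have h3 := (Complex.continuous_re.tendsto _).comp h2
  refine ge_of_tendsto h3 (Filter.Eventually.of_forall fun T => ?_)
  haveI : NeZero (Q T) := ⟨hQ0 T⟩
  simp only [Function.comp]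
  rw [Finset.sum_insert (by simp), div_ident]
  have e : ((0:ℕ) : ℂ) ^ (-(m : ℤ)) * expSum m (fun x => qF A L k x) 0 = 0 := by simp [expSum]
  rw [e, zero_add]
  refine (h T).trans (le_of_eq ?_)
  have : ((Q T : ℂ) * cnt A L k (Q T) / (Q T : ℂ) ^ m) = (((Q T : ℝ) * cnt A L k (Q T) / (Q T : ℝ) ^ m : ℝ) : ℂ) := by push_cast; rfl
  rw [this, Complex.ofReal_re]

theorem cnt_crt {m : ℕ} (A : Fin m → Fin m → ℤ) (L : Fin m → ℤ) (k : ℤ) (a b : ℕ) [NeZero a] [NeZero b]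
    (hab : a.Coprime b) : cnt A L k a * cnt A L k b ≤ cnt A L k (a * b) := by
  unfold cnt
  rw [← Nat.card_prod]
  let φ := ZMod.chineseRemainder hab
  haveI : NeZero (a * b) := ⟨mul_ne_zero (NeZero.ne a) (NeZero.ne b)⟩
  refine Nat.card_le_card_of_injective (fun p => ⟨fun j => φ.symm (p.1.1 j, p.2.1 j), ?_⟩) ?_
  · apply φ.injective
    rw [map_zero]
    have h1 := qM_castHom A L k a (a*b) ((RingHom.fst _ _).comp φ.toRingHom) (fun j => φ.symm (p.1.1 j, p.2.1 j))
    have h2 := qM_castHom A L k b (a*b) ((RingHom.snd _ _).comp φ.toRingHom) (fun j => φ.symm (p.1.1 j, p.2.1 j))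
    simp at h1 h2
    refine Prod.ext ?_ ?_
    · rw [h1]; exact p.1.2
    · rw [h2]; exact p.2.2
  · intro p p' h
    have h := congrArg Subtype.val h
    have h' : ∀ j, (p.1.1 j, p.2.1 j) = (p'.1.1 j, p'.2.1 j) := fun j => φ.symm.injective (congrFun h j)
    refine Prod.ext (Subtype.ext ?_) (Subtype.ext ?_)
    · funext j; exact congrArg Prod.fst (h' j)
    · funext j; exact congrArg Prod.snd (h' j)

/-- local density modulo `Q` -/
noncomputable def dens {m : ℕ} (A : Fin m → Fin m → ℤ) (L : Fin m → ℤ) (k : ℤ) (Q : ℕ) : ℝ :=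
  (Q : ℝ) * cnt A L k Q / (Q : ℝ) ^ m

theorem dens_nonneg {m : ℕ} (A : Fin m → Fin m → ℤ) (L : Fin m → ℤ) (k : ℤ) (Q : ℕ) : 0 ≤ dens A L k Q := by
  unfold dens; positivity

theorem dens_mul {m : ℕ} (A : Fin m → Fin m → ℤ) (L : Fin m → ℤ) (k : ℤ) (a b : ℕ) (ha : a ≠ 0) (hb : b ≠ 0)
    (hab : a.Coprime b) : dens A L k a * dens A L k b ≤ dens A L k (a * b) := by
  haveI : NeZero a := ⟨ha⟩
  haveI : NeZero b := ⟨hb⟩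
  have h := cnt_crt A L k a b hab
  have h' : (cnt A L k a : ℝ) * cnt A L k b ≤ cnt A L k (a * b) := by exact_mod_cast h
  unfold dens
  push_cast
  rw [div_mul_div_comm, ← mul_pow]
  refine div_le_div_of_nonneg_right ?_ (by positivity)
  have : (a:ℝ) * cnt A L k a * (b * cnt A L k b) = (a * b) * (cnt A L k a * cnt A L k b) := by ring
  rw [this]
  exact mul_le_mul_of_nonneg_left h' (by positivity)

theorem dens_one {m : ℕ} (A : Fin m → Fin m → ℤ) (L : Fin m → ℤ) (k : ℤ) : dens A L k 1 = 1 := by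
  unfold dens cnt
  have : Nat.card {x : Fin m → ZMod 1 // qM A L k 1 x = 0} = 1 := by
    rw [Nat.card_eq_one_iff_unique]
    refine ⟨⟨fun a b => Subtype.ext (Subsingleton.elim _ _)⟩, ⟨⟨0, Subsingleton.elim _ _⟩⟩⟩
  rw [this]; simp

theorem dens_prod {m : ℕ} (A : Fin m → Fin m → ℤ) (L : Fin m → ℤ) (k : ℤ) (s : Finset ℕ) (hs : ∀ p ∈ s, p.Prime) (T : ℕ) :
    ∏ p ∈ s, dens A L k (p ^ T) ≤ dens A L k (∏ p ∈ s, p ^ T) := by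
  classical
  induction s using Finset.induction_on with
  | empty => simp [dens_one]
  | insert p s hp ih =>
    rw [Finset.prod_insert hp, Finset.prod_insert hp]
    have hs' : ∀ p ∈ s, p.Prime := fun p hp => hs p (Finset.mem_insert_of_mem hp)
    have hpp := hs p (Finset.mem_insert_self _ _)
    refine le_trans (mul_le_mul_of_nonneg_left (ih hs') (dens_nonneg _ _ _ _)) (dens_mul _ _ _ _ _ ?_ ?_ ?_)
    · exact pow_ne_zero _ hpp.ne_zero
    · exact Finset.prod_ne_zero_iff.mpr fun r hr => pow_ne_zero _ (hs' r hr).ne_zero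
    · refine Nat.Coprime.prod_right fun r hr => ?_
      refine Nat.Coprime.pow _ _ ((Nat.coprime_primes hpp (hs' r hr)).mpr ?_)
      rintro rfl; exact hp hr

theorem dvd_QT (N : ℕ) (q : ℕ) (hq : 0 < q) (T : ℕ) (hT : q < T) :
    q ∣ N ^ T * ∏ p ∈ (Finset.range T).filter (fun p => p.Prime ∧ ¬ p ∣ N), p ^ T := by
  rw [Finset.prod_pow, ← mul_pow]
  have h1 : q ∣ (∏ p ∈ q.primeFactors, p) ^ T := by
    conv_lhs => rw [← Nat.prod_factorization_pow_eq_self hq.ne']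
    rw [← Finset.prod_pow]
    refine Finset.prod_dvd_prod_of_dvd _ _ fun p hp => pow_dvd_pow _ ?_
    exact ((Nat.factorization_lt p hq.ne').trans hT).le
  refine h1.trans (pow_dvd_pow_of_dvd ?_ _)
  refine Finset.prod_primes_dvd _ (fun p hp => (Nat.prime_of_mem_primeFactors hp).prime) fun p hp => ?_
  by_cases hpN : p ∣ N
  · exact hpN.mul_right _
  · refine Dvd.dvd.mul_left (Finset.dvd_prod_of_mem (fun p => p) ?_) _
    refine Finset.mem_filter.mpr ⟨Finset.mem_range.mpr ?_, Nat.prime_of_mem_primeFactors hp, hpN⟩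
    exact (Nat.le_of_dvd hq (Nat.dvd_of_mem_primeFactors hp)).trans_lt hT

theorem weier (s : Finset ℕ) (f : ℕ → ℝ) (h0 : ∀ p ∈ s, 0 ≤ f p) (h1 : ∀ p ∈ s, f p ≤ 1) :
    1 - ∑ p ∈ s, f p ≤ ∏ p ∈ s, (1 - f p) := by
  classical
  have key : 1 - ∑ p ∈ s, f p ≤ ∏ p ∈ s, (1 - f p) ∧ ∏ p ∈ s, (1 - f p) ≤ 1 ∧ 0 ≤ ∏ p ∈ s, (1 - f p) := by
    induction s using Finset.induction_on with
    | empty => simp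
    | insert p s hp ih =>
      rw [Finset.prod_insert hp, Finset.sum_insert hp]
      obtain ⟨i1, i2, i3⟩ := ih (fun p hp => h0 p (Finset.mem_insert_of_mem hp)) (fun p hp => h1 p (Finset.mem_insert_of_mem hp))
      have a0 := h0 p (Finset.mem_insert_self _ _)
      have a1 := h1 p (Finset.mem_insert_self _ _)
      refine ⟨?_, ?_, ?_⟩ <;> nlinarith
  exact key.1

theorem sing_lower' {m : ℕ} (A : Fin m → Fin m → ℤ) (L : Fin m → ℤ) (k : ℤ)
    (hs : Summable fun q : ℕ => (q : ℂ) ^ (-(m : ℤ)) * expSum m (fun x => qF A L k x) q)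
    (N : ℕ) (hN : N ≠ 0) (α δ : ℝ) (hα : 0 ≤ α)
    (hNT : ∀ T, α ≤ dens A L k (N ^ (T + 1)))
    (err : ℕ → ℝ) (herr : ∀ p, p.Prime → ¬ p ∣ N → 0 ≤ err p ∧ err p ≤ 1)
    (hp : ∀ p, p.Prime → ¬ p ∣ N → ∀ T, 1 - err p ≤ dens A L k (p ^ (T + 1)))
    (hδ : ∀ T, ∑ p ∈ (Finset.range T).filter (fun p => p.Prime ∧ ¬ p ∣ N), err p ≤ 1 - δ) :
    α * δ ≤ (singSeries m (fun x => qF A L k x)).re := by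
  refine sing_lower A L k hs (fun T => N ^ (T+1) * ∏ p ∈ (Finset.range (T+1)).filter (fun p => p.Prime ∧ ¬ p ∣ N), p ^ (T+1)) ?_ ?_ _ ?_
  · intro T
    refine mul_ne_zero (pow_ne_zero _ hN) (Finset.prod_ne_zero_iff.mpr fun r hr => pow_ne_zero _ (Finset.mem_filter.mp hr).2.1.ne_zero)
  · intro q hq
    filter_upwards [Filter.eventually_ge_atTop q] with T hT
    exact dvd_QT N q hq (T+1) (by omega)
  · intro T
    set s := (Finset.range (T+1)).filter (fun p => p.Prime ∧ ¬ p ∣ N) with hsd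
    have hsp : ∀ p ∈ s, p.Prime ∧ ¬ p ∣ N := fun p hp => (Finset.mem_filter.mp hp).2
    have h1 := dens_mul A L k (N^(T+1)) (∏ p ∈ s, p ^ (T+1)) (pow_ne_zero _ hN)
      (Finset.prod_ne_zero_iff.mpr fun r hr => pow_ne_zero _ (hsp r hr).1.ne_zero) (by
        refine Nat.Coprime.prod_right fun r hr => ?_
        refine Nat.Coprime.pow _ _ ?_
        rw [Nat.coprime_comm]
        exact ((hsp r hr).1.coprime_iff_not_dvd).mpr (hsp r hr).2)
    refine le_trans ?_ h1
    have h2 : δ ≤ ∏ p ∈ s, (1 - err p) := by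
      have := hδ (T+1)
      have := weier s err (fun p hp => (herr p (hsp p hp).1 (hsp p hp).2).1) (fun p hp => (herr p (hsp p hp).1 (hsp p hp).2).2)
      linarith
    have h3 : ∏ p ∈ s, (1 - err p) ≤ ∏ p ∈ s, dens A L k (p^(T+1)) :=
      Finset.prod_le_prod (fun p hp => by linarith [(herr p (hsp p hp).1 (hsp p hp).2).2])
        (fun p hq => hp p (hsp p hq).1 (hsp p hq).2 T)
    have h4 := dens_prod A L k s (fun p hp => (hsp p hp).1) (T+1)
    calc α * δ ≤ α * dens A L k (∏ p ∈ s, p ^ (T+1)) := mul_le_mul_of_nonneg_left (by linarith) hα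
      _ ≤ _ := mul_le_mul_of_nonneg_right (hNT T) (dens_nonneg _ _ _ _)

theorem qF_single {R : Type*} [CommRing R] {m : ℕ} (A : Fin m → Fin m → R) (L : Fin m → R) (k : R)
    (x : Fin m → R) (i : Fin m) (s : R) :
    qF A L k (x + Pi.single i s) = qF A L k x + s * (∑ j, (A i j + A j i) * x j + L i) + A i i * s ^ 2 := by
  rw [add_comm x, qF_add]
  have h1 : qF A L k (Pi.single i s) = A i i * s ^ 2 + L i * s + k := by
    simp [qF, Pi.single_apply]; ring
  have h2 : ∑ i', (∑ j, (A i' j + A j i') * x j) * (Pi.single i s : Fin m → R) i' = (∑ j, (A i j + A j i) * x j) * s := by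
    simp [Pi.single_apply]
  rw [h1, h2]; ring

theorem quad_root (Q : ℕ) [NeZero Q] (c w D a : ℤ) (n : ℕ) (hw : IsCoprime w (Q:ℤ)) (hD : (Q:ℤ) ∣ D ^ n) :
    ∃ t : ℤ, (Q:ℤ) ∣ c + t * w + D * a * t ^ 2 := by
  have hwu : IsUnit (w : ZMod Q) := by
    obtain ⟨u, v, huv⟩ := hw
    have := congrArg (fun z : ℤ => (z : ZMod Q)) huv
    push_cast at this
    simp at this
    exact isUnit_iff_exists_inv'.mpr ⟨_, this⟩
  have hDn : IsNilpotent (D : ZMod Q) := ⟨n, by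
    rw [← Int.cast_pow, ZMod.intCast_zmod_eq_zero_iff_dvd]; exact hD⟩
  have hinj : Function.Injective (fun t : ZMod Q => t * (w : ZMod Q) + D * a * t ^ 2) := by
    intro t t' h
    simp only at h
    have h1 : ((w : ZMod Q) + D * (a * (t + t'))) * (t - t') = 0 := by linear_combination h
    have hu : IsUnit ((w : ZMod Q) + D * (a * (t + t'))) := by
      have hn : IsNilpotent ((D : ZMod Q) * (a * (t + t'))) := (Commute.all _ _).isNilpotent_mul_right hDn
      exact hn.isUnit_add_left_of_commute hwu (Commute.all _ _)
    exact sub_eq_zero.mp ((hu.mul_right_eq_zero).mp h1)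
  obtain ⟨t, ht⟩ := (Finite.injective_iff_surjective.mp hinj) (-(c : ZMod Q))
  obtain ⟨t, rfl⟩ := ZMod.intCast_surjective t
  refine ⟨t, ?_⟩
  rw [← ZMod.intCast_zmod_eq_zero_iff_dvd]
  push_cast
  simp only at ht
  linear_combination ht

theorem hensel {m : ℕ} (A : Fin m → Fin m → ℤ) (L : Fin m → ℤ) (k : ℤ) (x0 : Fin m → ℤ) (i : Fin m)
    (g D w : ℤ) (K Q1 Q n : ℕ) [NeZero Q] (hK : (K : ℤ) = g ^ 2 * D) (hKQ : K * Q1 = Q)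
    (hF : (K : ℤ) ∣ qF A L k x0)
    (hd : ∑ j, (A i j + A j i) * x0 j + L i = g * w) (hw : IsCoprime w (Q : ℤ))
    (hD : (Q:ℤ) ∣ D ^ n) :
    Q1 ^ (m - 1) ≤ Nat.card {x : Fin m → ZMod Q // qM A L k Q x = 0 ∧
      ∀ j, ∃ t : ℤ, x j = ((x0 j + D * t : ℤ) : ZMod Q)} := by
  classical
  have hQ0 : Q ≠ 0 := NeZero.ne Q
  have hK0 : K ≠ 0 := by rintro rfl; simp at hKQ; exact hQ0 hKQ.symm
  have hg0 : g ≠ 0 := by rintro rfl; simp at hK; exact hK0 hK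
  -- for each `u` find a solution
  have key : ∀ u : {j // j ≠ i} → Fin Q1, ∃ s : ℤ, D ∣ s ∧
      (Q : ℤ) ∣ qF A L k ((fun j => if hj : j ≠ i then x0 j + K * ((u ⟨j, hj⟩ : ℕ) : ℤ) else x0 j) + Pi.single i s) := by
    intro u
    set xu : Fin m → ℤ := fun j => if hj : j ≠ i then x0 j + K * ((u ⟨j, hj⟩ : ℕ) : ℤ) else x0 j with hxu
    have hmod : ∀ j, ((xu j : ℤ) : ZMod K) = ((x0 j : ℤ) : ZMod K) := by
      intro j; simp only [hxu]; split_ifs <;> simp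
    have h1 : (K : ℤ) ∣ qF A L k xu := by
      rw [← ZMod.intCast_zmod_eq_zero_iff_dvd, ← qM_cast, funext hmod, qM_cast, ZMod.intCast_zmod_eq_zero_iff_dvd]
      exact hF
    have h2 : (K : ℤ) ∣ (∑ j, (A i j + A j i) * xu j + L i) - g * w := by
      rw [← hd, ← ZMod.intCast_zmod_eq_zero_iff_dvd]
      push_cast
      simp only [hmod]
      simp
    obtain ⟨c, hc⟩ := h1
    obtain ⟨v, hv⟩ := h2
    have hw' : IsCoprime (w + D * (g * v)) (Q:ℤ) := by
      have h3 : IsCoprime (w + D * (g * v)) (D ^ n) := by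
        apply IsCoprime.pow_right
        rw [IsCoprime.add_mul_left_left_iff]
        have hDQ : D ∣ Q := by
          rw [← hKQ]; push_cast; rw [hK]
          exact ⟨g^2 * Q1, by ring⟩
        exact hw.of_isCoprime_of_dvd_right hDQ
      exact h3.of_isCoprime_of_dvd_right hD
    obtain ⟨t, ht⟩ := quad_root Q c (w + D * (g * v)) D (A i i) n hw' hD
    refine ⟨g * D * t, ⟨g * t, by ring⟩, ?_⟩
    rw [qF_single, hc]
    have h4 : ∑ j, (A i j + A j i) * xu j + L i = g * w + K * v := by linarith
    rw [h4]
    have h5 : (K : ℤ) * c + g * D * t * (g * w + K * v) + A i i * (g * D * t) ^ 2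
        = K * (c + t * (w + D * (g * v)) + D * A i i * t ^ 2) := by
      rw [hK]; ring
    rw [h5]
    exact ht.mul_left _
  choose s hs1 hs2 using key
  have hcard : Nat.card ({j // j ≠ i} → Fin Q1) = Q1 ^ (m-1) := by
    simp [Fintype.card_subtype_compl]
  rw [← hcard]
  refine Nat.card_le_card_of_injective (fun u => ⟨fun j => ((((fun j => if hj : j ≠ i then x0 j + K * ((u ⟨j, hj⟩ : ℕ) : ℤ) else x0 j) + Pi.single i (s u) : Fin m → ℤ) j : ℤ) : ZMod Q), ?_, ?_⟩) ?_
  · rw [qM_cast, ZMod.intCast_zmod_eq_zero_iff_dvd]; exact hs2 u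
  · intro j
    by_cases hj : j = i
    · subst hj
      obtain ⟨t, ht⟩ := hs1 u
      exact ⟨t, by simp [ht]⟩
    · exact ⟨g^2 * ((u ⟨j, hj⟩ : ℕ) : ℤ), by simp [hj]; rw [← Int.cast_natCast, hK]; push_cast; ring⟩
  · intro u u' h
    have h := congrArg Subtype.val h
    funext ⟨j, hj⟩
    have hj' := congrFun h j
    simp [hj] at hj'
    have h6 : ((K * (u ⟨j, hj⟩ : ℕ) : ℕ) : ZMod Q) = ((K * (u' ⟨j, hj⟩ : ℕ) : ℕ) : ZMod Q) := by push_cast; exact hj'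
    rw [ZMod.natCast_eq_natCast_iff] at h6
    rw [← hKQ] at h6
    have h7 := Nat.ModEq.mul_left_cancel' hK0 h6
    have h8 := Nat.ModEq.eq_of_lt_of_lt h7 (u ⟨j, hj⟩).2 (u' ⟨j, hj⟩).2
    exact Fin.ext h8

/-- Number of nonsingular zeros of a quadratic polynomial over `ZMod p`. -/
noncomputable def nns {m p : ℕ} (A : Fin m → Fin m → ZMod p) (L : Fin m → ZMod p) (k : ZMod p) : ℕ :=
  Nat.card {x : Fin m → ZMod p // qF A L k x = 0 ∧ ∃ i, ∑ j, (A i j + A j i) * x j + L i ≠ 0}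

theorem cnt_pow {m : ℕ} (A : Fin m → Fin m → ℤ) (L : Fin m → ℤ) (k : ℤ) (p : ℕ) (hp : p.Prime) (T : ℕ) :
    nns (fun i j => (A i j : ZMod p)) (fun i => (L i : ZMod p)) (k : ZMod p) * (p ^ T) ^ (m - 1)
      ≤ cnt A L k (p ^ (T + 1)) := by
  classical
  haveI : Fact p.Prime := ⟨hp⟩
  haveI : NeZero p := ⟨hp.ne_zero⟩
  haveI : NeZero (p ^ (T+1)) := ⟨pow_ne_zero _ hp.ne_zero⟩
  let φ := ZMod.castHom (dvd_pow_self p (Nat.succ_ne_zero T)) (ZMod p)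
  unfold cnt nns
  rw [Nat.card_eq_fintype_card, Fintype.card_subtype, Nat.card_eq_fintype_card, Fintype.card_subtype]
  rw [Finset.card_eq_sum_card_fiberwise (s := Finset.univ.filter fun x : Fin m → ZMod (p^(T+1)) => qM A L k (p^(T+1)) x = 0)
    (t := Finset.univ) (f := fun x j => φ (x j)) (fun _ _ => Finset.mem_coe.mpr (Finset.mem_univ _))]
  rw [← smul_eq_mul, ← Finset.sum_const]
  refine le_trans (Finset.sum_le_sum fun c hc => ?_) (Finset.sum_le_sum_of_subset (Finset.subset_univ _))
  obtain ⟨-, hc1, i, hi⟩ := Finset.mem_filter.mp hc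
  choose x0 hx0 using fun j => ZMod.intCast_surjective (c j)
  have hcx : c = fun j => (x0 j : ZMod p) := by funext j; rw [hx0]
  have h := hensel A L k x0 i 1 (p:ℤ) (∑ j, (A i j + A j i) * x0 j + L i) p (p^T) (p^(T+1)) (T+1)
    (by ring) (by ring) ?_ (by ring) ?_ (by push_cast; exact dvd_rfl)
  · refine h.trans ?_
    rw [Nat.card_eq_fintype_card, Fintype.card_subtype, Finset.filter_filter]
    refine Finset.card_le_card fun x hx => ?_
    obtain ⟨-, h1, h2⟩ := Finset.mem_filter.mp hx
    refine Finset.mem_filter.mpr ⟨Finset.mem_univ _, h1, ?_⟩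
    funext j
    obtain ⟨t, ht⟩ := h2 j
    rw [ht, map_intCast]
    simp [hx0]
  · rw [← ZMod.intCast_zmod_eq_zero_iff_dvd, ← qM_cast, ← hcx]
    exact hc1
  · have hnd : ¬ (p:ℤ) ∣ (∑ j, (A i j + A j i) * x0 j + L i) := by
      rw [← ZMod.intCast_zmod_eq_zero_iff_dvd]
      push_cast
      simp only [hx0]
      exact hi
    push_cast
    apply IsCoprime.pow_right
    exact ((Nat.prime_iff_prime_int.mp hp).coprime_iff_not_dvd.mpr hnd).symm

theorem dens_pow {m : ℕ} (hm : 0 < m) (A : Fin m → Fin m → ℤ) (L : Fin m → ℤ) (k : ℤ) (p : ℕ) (hp : p.Prime) (T : ℕ) :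
    (p:ℝ) * nns (fun i j => (A i j : ZMod p)) (fun i => (L i : ZMod p)) (k : ZMod p) / (p:ℝ)^m
      ≤ dens A L k (p ^ (T + 1)) := by
  have h := cnt_pow A L k p hp T
  set n := nns (fun i j => (A i j : ZMod p)) (fun i => (L i : ZMod p)) (k : ZMod p)
  have h' : (n:ℝ) * ((p:ℝ) ^ T) ^ (m-1) ≤ cnt A L k (p^(T+1)) := by exact_mod_cast h
  have hp0 : (0:ℝ) < p := by exact_mod_cast hp.pos
  unfold dens
  push_cast
  rw [div_le_div_iff₀ (by positivity) (by positivity)]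
  obtain ⟨m, rfl⟩ : ∃ m', m = m' + 1 := ⟨m - 1, by omega⟩
  simp only [Nat.add_sub_cancel] at h'
  calc (p:ℝ) * n * ((p:ℝ)^(T+1))^(m+1) = (p:ℝ)^(T+1) * (n * ((p:ℝ) ^ T) ^ m) * (p:ℝ)^(m+1) := by ring
    _ ≤ _ := by gcongr

theorem nns_iso {m p : ℕ} [Fact p.Prime] (hm : 0 < m) (A : Fin m → Fin m → ZMod p) (L : Fin m → ZMod p) (k : ZMod p)
    (e : Fin m → ZMod p) (he : qF A 0 0 e = 0) (i : Fin m) (hi : ∑ j, (A i j + A j i) * e j ≠ 0) :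
    1 - 1 / (p:ℝ) ≤ (p:ℝ) * nns A L k / (p:ℝ) ^ m := by
  classical
  have hp : p.Prime := Fact.out
  haveI : NeZero p := ⟨hp.ne_zero⟩
  set β : Fin m → ZMod p := fun i => ∑ j, (A i j + A j i) * e j with hβ
  let lam : (Fin m → ZMod p) → ZMod p := fun x => ∑ i, β i * x i + ∑ i, L i * e i
  have he' : ∑ i, ∑ j, A i j * e i * e j = 0 := by simpa [qF] using he
  have hsc : ∀ t : ZMod p, qF A L k (t • e) - k = t * ∑ i, L i * e i := by
    intro t
    have h1 : ∑ i, ∑ j, A i j * (t • e) i * (t • e) j = t ^ 2 * ∑ i, ∑ j, A i j * e i * e j := by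
      simp only [Finset.mul_sum, Pi.smul_apply, smul_eq_mul]
      exact Finset.sum_congr rfl fun i _ => Finset.sum_congr rfl fun j _ => by ring
    have h2 : ∑ i, L i * (t • e) i = t * ∑ i, L i * e i := by
      simp only [Finset.mul_sum, Pi.smul_apply, smul_eq_mul]
      exact Finset.sum_congr rfl fun i _ => by ring
    rw [qF, h1, h2, he']; ring
  have hline : ∀ x (t : ZMod p), qF A L k (x + t • e) = qF A L k x + t * lam x := by
    intro x t
    rw [qF_add, hsc]
    have : ∑ i, (∑ j, (A i j + A j i) * (t • e) j) * x i = t * ∑ i, β i * x i := by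
      rw [Finset.mul_sum]
      refine Finset.sum_congr rfl fun i _ => ?_
      simp only [hβ, Pi.smul_apply, smul_eq_mul]
      rw [← mul_assoc, Finset.mul_sum]
      congr 1
      exact Finset.sum_congr rfl fun j _ => by ring
    rw [this]; simp only [lam]; ring
  have hβe : ∑ i, β i * e i = 0 := by
    have e1 : ∑ i, β i * e i = ∑ i, ∑ j, A i j * e i * e j + ∑ i, ∑ j, A i j * e i * e j := by
      have : ∑ i, ∑ j, A i j * e i * e j = ∑ i, ∑ j, A j i * e j * e i := Finset.sum_comm
      conv_rhs => rw [this]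
      rw [← this, ← Finset.sum_add_distrib]
      conv_rhs => rw [Finset.sum_add_distrib, this]
      conv_rhs => enter [1]; rw [← this]
      rw [← Finset.sum_add_distrib]
      refine Finset.sum_congr rfl fun i _ => ?_
      simp only [hβ]
      rw [Finset.sum_mul, ← Finset.sum_add_distrib]
      exact Finset.sum_congr rfl fun j _ => by ring
    rw [e1, he']; simp
  have hlam : ∀ x (t : ZMod p), lam (x + t • e) = lam x := by
    intro x t
    have : ∑ i, β i * (x + t • e) i = ∑ i, β i * x i + t * ∑ i, β i * e i := by
      simp only [Pi.add_apply, Pi.smul_apply, smul_eq_mul, mul_add, Finset.sum_add_distrib, Finset.mul_sum]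
      congr 1
      exact Finset.sum_congr rfl fun j _ => by ring
    simp only [lam]; rw [this, hβe]; ring
  have hgrad : ∀ x, lam x = ∑ i, (∑ j, (A i j + A j i) * x j + L i) * e i := by
    intro x
    have : ∑ i, β i * x i = ∑ i, (∑ j, (A i j + A j i) * x j) * e i := by
      simp only [hβ, Finset.sum_mul]
      rw [Finset.sum_comm]
      exact Finset.sum_congr rfl fun i _ => Finset.sum_congr rfl fun j _ => by ring
    simp only [lam]; rw [this, ← Finset.sum_add_distrib]
    exact Finset.sum_congr rfl fun i _ => by ring
  have c1 : Nat.card {x // lam x ≠ 0} ≤ nns A L k * p := by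
    unfold nns
    refine le_trans ?_ (le_of_eq (congrArg (fun z => Nat.card {x : Fin m → ZMod p // qF A L k x = 0 ∧ ∃ i, ∑ j, (A i j + A j i) * x j + L i ≠ 0} * z) (show Nat.card (ZMod p) = p by simp)))
    rw [← Nat.card_prod]
    refine Nat.card_le_card_of_injective (fun x => (⟨x.1 + (-(qF A L k x.1) / lam x.1) • e, ?_, ?_⟩, -(qF A L k x.1) / lam x.1)) ?_
    · rw [hline, div_mul_cancel₀ _ x.2]; ring
    · by_contra hcon
      push Not at hcon
      apply x.2
      rw [← hlam x.1 (-(qF A L k x.1) / lam x.1), hgrad]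
      exact Finset.sum_eq_zero fun i _ => by rw [hcon i, zero_mul]
    · intro x y hxy
      have h1 := congrArg Prod.snd hxy
      have h2 := congrArg (fun z => z.1.1) hxy
      simp only at h1 h2
      rw [h1] at h2
      exact Subtype.ext (add_right_cancel h2)
  have c2 : Nat.card {x // lam x = 0} * p ≤ p ^ m := by
    have h2 : p ^ m = Nat.card (Fin m → ZMod p) := by simp
    rw [h2]
    refine le_trans (le_of_eq (congrArg (fun z => Nat.card {x // lam x = 0} * z) (show p = Nat.card (ZMod p) by simp))) ?_
    rw [← Nat.card_prod]
    refine Nat.card_le_card_of_injective (fun x => x.1.1 + Pi.single i x.2) ?_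
    have hs : ∀ x : {x // lam x = 0} × ZMod p, lam (x.1.1 + Pi.single i x.2) = β i * x.2 := by
      intro x
      have := x.1.2
      simp only [lam] at this ⊢
      simp only [Pi.add_apply, mul_add, Finset.sum_add_distrib]
      have h3 : ∑ j, β j * (Pi.single i x.2 : Fin m → ZMod p) j = β i * x.2 := by simp [Pi.single_apply]
      rw [h3]; linear_combination this
    intro x y hxy
    simp only at hxy
    have h4 : β i * x.2 = β i * y.2 := by rw [← hs, ← hs, hxy]
    have h5 : x.2 = y.2 := mul_left_cancel₀ hi h4
    rw [h5] at hxy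
    exact Prod.ext (Subtype.ext (add_right_cancel hxy)) h5
  have c3 : Nat.card {x // lam x = 0} + Nat.card {x // lam x ≠ 0} = p ^ m := by
    have := Fintype.card_subtype_compl (fun x => lam x = 0)
    have h2 := Fintype.card_subtype_le (fun x => lam x = 0)
    rw [Nat.card_eq_fintype_card, Nat.card_eq_fintype_card]
    have h3 : Fintype.card (Fin m → ZMod p) = p ^ m := by simp [ZMod.card]
    simp only [ne_eq]
    omega
  have hp0 : (0:ℝ) < p := by exact_mod_cast hp.pos
  rw [le_div_iff₀ (by positivity), sub_mul, one_mul]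
  have d1 : (Nat.card {x // lam x ≠ 0} : ℝ) ≤ nns A L k * p := by exact_mod_cast c1
  have d2 : (Nat.card {x // lam x = 0} : ℝ) * p ≤ (p:ℝ)^m := by exact_mod_cast c2
  have d3 : (Nat.card {x // lam x = 0} : ℝ) + Nat.card {x // lam x ≠ 0} = (p:ℝ)^m := by exact_mod_cast c3
  have d4 : (Nat.card {x // lam x = 0} : ℝ) ≤ 1 / p * (p:ℝ)^m := by
    rw [div_mul_eq_mul_div, one_mul, le_div_iff₀ hp0]; exact d2
  nlinarith

theorem cnt_prime_lower {m s : ℕ} (A : Fin m → Fin m → ℤ) (L : Fin m → ℤ) (k : ℤ) (p : ℕ) [Fact p.Prime]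
    (e : Fin s → Fin m) (X : Fin m → Fin s → ZMod p) (Δ : ZMod p) (hΔ : IsUnit Δ)
    (hX : ∀ r t, ∑ j, ((A (e r) j : ZMod p) + A j (e r)) * X j t = if r = t then Δ else 0) :
    (p:ℝ) ^ m - p * ((p:ℝ)^m * Real.sqrt (1 / (p:ℝ)^s)) ≤ p * cnt A L k p := by
  have hp : p.Prime := Fact.out
  haveI : NeZero p := ⟨hp.ne_zero⟩
  have h := full_sum A L k p
  have h0 : (0:ℕ) ∈ Finset.range p := Finset.mem_range.mpr hp.pos
  rw [← Finset.add_sum_erase _ _ h0] at h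
  have h1 : ∑ b : Fin m → ZMod p, ZMod.stdAddChar (((0:ℕ) : ZMod p) * qM A L k p b) = (p:ℂ)^m := by
    simp [ZMod.card]
  rw [h1] at h
  have h2 : ‖∑ a ∈ (Finset.range p).erase 0, ∑ b : Fin m → ZMod p, ZMod.stdAddChar ((a : ZMod p) * qM A L k p b)‖
      ≤ p * ((p:ℝ)^m * Real.sqrt (1 / (p:ℝ)^s)) := by
    refine (norm_sum_le_of_le (n := fun _ => (p:ℝ)^m * Real.sqrt (1 / (p:ℝ)^s)) _ (fun a ha => ?_)).trans ?_
    · have hau : IsUnit (a : ZMod p) := by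
        obtain ⟨h3, h4⟩ := Finset.mem_erase.mp ha
        rw [isUnit_iff_ne_zero, Ne, ZMod.natCast_eq_zero_iff]
        exact fun hd => absurd (Nat.le_of_dvd (Nat.pos_of_ne_zero h3) hd) (not_le.mpr (Finset.mem_range.mp h4))
      have := S_bound (fun i j => (A i j : ZMod p)) (fun i => (L i : ZMod p)) (k : ZMod p) a hau e X Δ hX 1 (ann_card_unit p Δ hΔ).le
      simpa [qM] using this
    · rw [Finset.sum_const, nsmul_eq_mul]
      refine mul_le_mul_of_nonneg_right ?_ (by positivity)
      have := Finset.card_erase_le (s := Finset.range p) (a := 0)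
      rw [Finset.card_range] at this
      exact_mod_cast this
  have h3 : ((p:ℝ) * cnt A L k p : ℝ) = ((p:ℂ) * cnt A L k p).re := by
    have : ((p:ℂ) * cnt A L k p) = (((p:ℝ) * cnt A L k p : ℝ) : ℂ) := by push_cast; rfl
    rw [this, Complex.ofReal_re]
  rw [h3, ← h, Complex.add_re]
  have h4 : ((p:ℂ)^m).re = (p:ℝ)^m := by
    have : (p:ℂ)^m = (((p:ℝ)^m : ℝ) : ℂ) := by push_cast; rfl
    rw [this, Complex.ofReal_re]
  rw [h4]
  have h5 := (abs_le.mp (Complex.abs_re_le_norm (∑ a ∈ (Finset.range p).erase 0, ∑ b : Fin m → ZMod p, ZMod.stdAddChar ((a : ZMod p) * qM A L k p b)))).1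
  linarith

theorem ker_prime {m s : ℕ} (p : ℕ) [Fact p.Prime] (B : Fin m → Fin m → ZMod p)
    (e : Fin s → Fin m) (X : Fin m → Fin s → ZMod p) (Δ : ZMod p) (hΔ : IsUnit Δ)
    (hX : ∀ r t, ∑ j, B (e r) j * X j t = if r = t then Δ else 0) :
    (Nat.card {h : Fin m → ZMod p // ∀ i, ∑ j, B i j * h j = 0} : ℝ) ≤ (p:ℝ) ^ m / (p:ℝ)^s := by
  have hp : p.Prime := Fact.out
  haveI : NeZero p := ⟨hp.ne_zero⟩
  have hp0 : (0:ℝ) < p := by exact_mod_cast hp.pos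
  have := ker_card B e X Δ hX
  rw [ann_card_unit p Δ hΔ, one_pow, one_mul] at this
  rw [le_div_iff₀ (by positivity)]
  exact_mod_cast this

theorem nns_generic {m : ℕ} (A : Fin m → Fin m → ℤ) (L : Fin m → ℤ) (k : ℤ) (p : ℕ) [Fact p.Prime]
    (e : Fin 5 → Fin m) (X : Fin m → Fin 5 → ZMod p) (Δ : ZMod p) (hΔ : IsUnit Δ)
    (hX : ∀ r t, ∑ j, ((A (e r) j : ZMod p) + A j (e r)) * X j t = if r = t then Δ else 0) :
    1 - 2 / (p:ℝ) ^ (3/2 : ℝ) ≤ (p:ℝ) * nns (fun i j => (A i j : ZMod p)) (fun i => (L i : ZMod p)) (k : ZMod p) / (p:ℝ) ^ m := by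
  classical
  have hp : p.Prime := Fact.out
  haveI : NeZero p := ⟨hp.ne_zero⟩
  have hp0 : (0:ℝ) < p := by exact_mod_cast hp.pos
  have hp1 : (1:ℝ) ≤ p := by exact_mod_cast hp.one_lt.le
  have h1 := cnt_prime_lower A L k p e X Δ hΔ hX
  have h2 := ker_prime p (fun i j => (A i j : ZMod p) + A j i) e X Δ hΔ hX
  set n := nns (fun i j => (A i j : ZMod p)) (fun i => (L i : ZMod p)) (k : ZMod p) with hn
  -- singular points
  have h3 : Nat.card {x : Fin m → ZMod p // ∀ i, ∑ j, ((A i j : ZMod p) + A j i) * x j + L i = 0} ≤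
      Nat.card {h : Fin m → ZMod p // ∀ i, ∑ j, ((A i j : ZMod p) + A j i) * h j = 0} := by
    by_cases hne : Nonempty {x : Fin m → ZMod p // ∀ i, ∑ j, ((A i j : ZMod p) + A j i) * x j + L i = 0}
    · obtain ⟨x0⟩ := hne
      refine Nat.card_le_card_of_injective (fun x => ⟨fun j => x.1 j - x0.1 j, fun i => ?_⟩) ?_
      · simp only [mul_sub, Finset.sum_sub_distrib]
        linear_combination x.2 i - x0.2 i
      · intro x y hxy
        have := congrArg Subtype.val hxy
        refine Subtype.ext (funext fun j => ?_)
        exact sub_left_injective (congrFun this j)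
    · rw [not_nonempty_iff] at hne
      simp
  have h4 : cnt A L k p ≤ n + Nat.card {x : Fin m → ZMod p // ∀ i, ∑ j, ((A i j : ZMod p) + A j i) * x j + L i = 0} := by
    rw [hn]
    unfold cnt nns
    simp only [Nat.card_eq_fintype_card, Fintype.card_subtype]
    refine le_trans (Finset.card_le_card ?_) (Finset.card_union_le _ _)
    intro x hx
    have hx := (Finset.mem_filter.mp hx).2
    rw [Finset.mem_union, Finset.mem_filter, Finset.mem_filter]
    by_cases hs : ∀ i, ∑ j, ((A i j : ZMod p) + A j i) * x j + L i = 0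
    · exact Or.inr ⟨Finset.mem_univ _, hs⟩
    · push Not at hs
      exact Or.inl ⟨Finset.mem_univ _, hx, hs⟩
  have h5 : (cnt A L k p : ℝ) ≤ n + (p:ℝ)^m / (p:ℝ)^5 := by
    have : (cnt A L k p : ℝ) ≤ n + Nat.card {h : Fin m → ZMod p // ∀ i, ∑ j, ((A i j : ZMod p) + A j i) * h j = 0} := by
      exact_mod_cast h4.trans (Nat.add_le_add_left h3 _)
    linarith
  rw [le_div_iff₀ (by positivity)]
  have h6 : Real.sqrt (1 / (p:ℝ)^5) = 1 / (p * (p:ℝ) ^ (3/2 : ℝ)) := by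
    rw [Real.sqrt_div (by norm_num), Real.sqrt_one]
    congr 1
    rw [Real.sqrt_eq_rpow, ← Real.rpow_natCast, ← Real.rpow_mul hp0.le]
    conv_rhs => rw [← Real.rpow_one_add' hp0.le (by norm_num)]
    norm_num
  rw [h6] at h1
  have hr : (0:ℝ) < (p:ℝ) ^ (3/2 : ℝ) := by positivity
  have h7 : (p:ℝ) * ((p:ℝ)^m * (1 / (p * (p:ℝ) ^ (3/2 : ℝ)))) = (p:ℝ)^m / (p:ℝ) ^ (3/2 : ℝ) := by field_simp
  have h8 : (p:ℝ) * ((p:ℝ)^m / (p:ℝ)^5) ≤ (p:ℝ)^m / (p:ℝ) ^ (3/2 : ℝ) := by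
    have : (p:ℝ) * ((p:ℝ)^m / (p:ℝ)^5) = (p:ℝ)^m / (p:ℝ)^4 := by field_simp
    rw [this]
    refine div_le_div_of_nonneg_left (by positivity) hr ?_
    rw [← Real.rpow_natCast]
    exact Real.rpow_le_rpow_of_exponent_le hp1 (by norm_num)
  rw [h7] at h1
  have h9 : (1 - 2 / (p:ℝ) ^ (3/2 : ℝ)) * (p:ℝ)^m = (p:ℝ)^m - 2 * ((p:ℝ)^m / (p:ℝ) ^ (3/2 : ℝ)) := by ring
  rw [h9]
  have h10 := mul_le_mul_of_nonneg_left h5 hp0.le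
  rw [mul_add] at h10
  linarith

theorem exists_iso {m : ℕ} (A : Fin m → Fin m → ℤ) (p : ℕ) [Fact p.Prime] (hp4 : 4 ≤ p)
    (e : Fin 3 → Fin m) (X : Fin m → Fin 3 → ZMod p) (Δ : ZMod p) (hΔ : IsUnit Δ)
    (hX : ∀ r t, ∑ j, ((A (e r) j : ZMod p) + A j (e r)) * X j t = if r = t then Δ else 0) :
    ∃ v : Fin m → ZMod p, qF (fun i j => (A i j : ZMod p)) 0 0 v = 0 ∧ ∃ i, ∑ j, ((A i j : ZMod p) + A j i) * v j ≠ 0 := by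
  classical
  have hp : p.Prime := Fact.out
  haveI : NeZero p := ⟨hp.ne_zero⟩
  have hp0 : (0:ℝ) < p := by exact_mod_cast hp.pos
  have hp4' : (4:ℝ) ≤ p := by exact_mod_cast hp4
  by_contra hcon
  push Not at hcon
  have h1 := cnt_prime_lower A 0 0 p e X Δ hΔ hX
  have h2 := ker_prime p (fun i j => (A i j : ZMod p) + A j i) e X Δ hΔ hX
  have h3 : cnt A 0 0 p ≤ Nat.card {h : Fin m → ZMod p // ∀ i, ∑ j, ((A i j : ZMod p) + A j i) * h j = 0} := by
    unfold cnt
    refine Nat.card_le_card_of_injective (fun x => ⟨x.1, hcon x.1 ?_⟩) ?_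
    · have := x.2
      simpa [qM, qF] using this
    · intro x y h
      simp only [Subtype.mk.injEq] at h
      exact Subtype.ext h
  have h4 : (cnt A 0 0 p : ℝ) ≤ (p:ℝ)^m / (p:ℝ)^3 := le_trans (by exact_mod_cast h3) h2
  have h6 : Real.sqrt (1 / (p:ℝ)^3) ≤ 1 / (2 * p) := by
    rw [Real.sqrt_le_left (by positivity), div_pow, div_le_div_iff₀ (by positivity) (by positivity)]
    nlinarith [sq_nonneg (p:ℝ)]
  have hpm : (0:ℝ) < (p:ℝ)^m := by positivity
  have h7 : (p:ℝ) * ((p:ℝ)^m * Real.sqrt (1 / (p:ℝ)^3)) ≤ (p:ℝ)^m / 2 := by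
    calc _ ≤ (p:ℝ) * ((p:ℝ)^m * (1 / (2 * p))) := by gcongr
      _ = _ := by field_simp
  have h8 : (p:ℝ) * cnt A 0 0 p ≤ (p:ℝ)^m / 16 := by
    calc _ ≤ (p:ℝ) * ((p:ℝ)^m / (p:ℝ)^3) := by gcongr
      _ = (p:ℝ)^m / (p:ℝ)^2 := by field_simp
      _ ≤ _ := by
        refine div_le_div_of_nonneg_left hpm.le (by norm_num) ?_
        nlinarith
  linarith

theorem exists_right_inv {m : ℕ} (B : Matrix (Fin m) (Fin m) ℤ)
    (hr : 5 ≤ (B.map ((↑) : ℤ → ℚ)).rank) :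
    ∃ (e : Fin 5 → Fin m) (X : Fin m → Fin 5 → ℤ) (d : ℤ), Function.Injective e ∧ d ≠ 0 ∧
      ∀ r t, ∑ j, B (e r) j * X j t = if r = t then d else 0 := by
  classical
  set BQ := B.map ((↑) : ℤ → ℚ) with hBQ
  obtain ⟨κ, a, ha, hspan, hli⟩ := exists_linearIndependent' ℚ BQ.row
  haveI : Finite κ := Finite.of_injective a ha
  haveI : Fintype κ := Fintype.ofFinite κ
  have hcard : Fintype.card κ = BQ.rank := by
    rw [Matrix.rank_eq_finrank_span_row, ← hspan, finrank_span_eq_card hli]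
  have h5 : Fintype.card (Fin 5) ≤ Fintype.card κ := by rw [hcard]; simpa using hr
  obtain ⟨f⟩ := Function.Embedding.nonempty_of_card_le h5
  have hli2 : LinearIndependent ℚ ((BQ.row ∘ a) ∘ f) := hli.comp f f.injective
  let M : Matrix (Fin 5) (Fin m) ℚ := Matrix.of ((BQ.row ∘ a) ∘ f)
  have hMr : M.rank = 5 := by
    have : LinearIndependent ℚ M.row := hli2
    simpa using this.rank_matrix
  have hsurj : Function.Surjective M.mulVec := by
    have h1 : LinearMap.range M.mulVecLin = ⊤ := by
      apply Submodule.eq_top_of_finrank_eq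
      have : Module.finrank ℚ (LinearMap.range M.mulVecLin) = 5 := hMr
      rw [this]; simp
    exact LinearMap.range_eq_top.mp h1
  obtain ⟨Y, hY⟩ := Matrix.mulVec_surjective_iff_exists_right_inverse.mp hsurj
  obtain ⟨b, hb⟩ := IsLocalization.exist_integer_multiples_of_finite (nonZeroDivisors ℤ) (fun p : Fin m × Fin 5 => Y p.1 p.2)
  choose X hX using hb
  refine ⟨a ∘ f, fun j t => X (j, t), b, ha.comp f.injective, nonZeroDivisors.ne_zero b.2, ?_⟩
  intro r t
  have h1 := congrFun (congrFun hY r) t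
  rw [Matrix.mul_apply, Matrix.one_apply] at h1
  have h2 : ∀ j, (X (j, t) : ℚ) = (b : ℤ) * Y j t := by
    intro j
    have := hX (j, t)
    simpa [Submonoid.smul_def] using this
  have h3 : ((∑ j, B ((a ∘ f) r) j * X (j, t) : ℤ) : ℚ) = ((if r = t then (b:ℤ) else 0 : ℤ) : ℚ) := by
    push_cast
    have : ∀ j, (B ((a ∘ f) r) j : ℚ) * X (j, t) = (b:ℤ) * (M r j * Y j t) := by
      intro j
      have hM : M r j = (B ((a ∘ f) r) j : ℚ) := rfl
      rw [h2, hM]; ring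
    rw [Finset.sum_congr rfl fun j _ => this j, ← Finset.mul_sum, h1]
    split_ifs <;> simp
  exact_mod_cast h3

/-- the determinant whose nonvanishing guarantees rank at least five -/
def Edet {R : Type*} [CommRing R] (c t : R) (M : Matrix (Fin 5) (Fin 5) R) : R :=
  (c • (1 : Matrix (Fin 5) (Fin 5) R) + t • M).det

theorem Edet_map {R S : Type*} [CommRing R] [CommRing S] (f : R →+* S) (c t : R) (M : Matrix (Fin 5) (Fin 5) R) :
    f (Edet c t M) = Edet (f c) (f t) (M.map f) := by
  unfold Edet
  rw [RingHom.map_det]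
  congr 1
  ext i j
  simp [Matrix.one_apply]
  split_ifs <;> simp

theorem Edet_inv {m : ℕ} (B1 B2 : Fin m → Fin m → ℤ) (e : Fin 5 → Fin m) (X : Fin m → Fin 5 → ℤ) (d : ℤ)
    (hX : ∀ r t, ∑ j, B1 (e r) j * X j t = if r = t then d else 0) (M : Matrix (Fin 5) (Fin 5) ℤ)
    (hM : ∀ r t, M r t = ∑ j, B2 (e r) j * X j t) (y1 y2 : ℤ) :
    ∃ X' : Fin m → Fin 5 → ℤ, ∀ r t, ∑ j, (y1 * B1 (e r) j + y2 * B2 (e r) j) * X' j t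
      = if r = t then Edet (y1 * d) y2 M else 0 := by
  set W : Matrix (Fin 5) (Fin 5) ℤ := ((y1 * d) • (1 : Matrix (Fin 5) (Fin 5) ℤ) + y2 • M) with hW
  refine ⟨fun j t => ∑ s, X j s * W.adjugate s t, fun r t => ?_⟩
  have h1 := congrFun (congrFun (Matrix.mul_adjugate W) r) t
  rw [Matrix.mul_apply] at h1
  have h2 : ∀ s, W r s = ∑ j, (y1 * B1 (e r) j + y2 * B2 (e r) j) * X j s := by
    intro s
    simp only [hW, Matrix.add_apply, Matrix.smul_apply, Matrix.one_apply, hM, smul_eq_mul, add_mul, Finset.sum_add_distrib]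
    congr 1
    · have := hX r s
      rw [mul_assoc]
      have h3 : (d * if r = s then 1 else 0) = ∑ j, B1 (e r) j * X j s := by rw [this]; split_ifs <;> simp
      rw [h3, Finset.mul_sum]
      exact Finset.sum_congr rfl fun j _ => by ring
    · rw [Finset.mul_sum]
      exact Finset.sum_congr rfl fun j _ => by ring
  calc ∑ j, (y1 * B1 (e r) j + y2 * B2 (e r) j) * ∑ s, X j s * W.adjugate s t
      = ∑ s, W r s * W.adjugate s t := by
        simp only [h2, Finset.mul_sum, Finset.sum_mul]
        rw [Finset.sum_comm]
        exact Finset.sum_congr rfl fun s _ => Finset.sum_congr rfl fun j _ => by ring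
    _ = _ := by
        rw [h1]; simp [Matrix.one_apply, Edet, hW]

theorem Edet_roots {R : Type*} [CommRing R] [IsDomain R] [DecidableEq R] (c : R) (hc : c ≠ 0) (M : Matrix (Fin 5) (Fin 5) R) (S : Finset R)
    (hS : ∀ t ∈ S, Edet c t M = 0) : S.card ≤ 5 := by
  set f : Polynomial R := Matrix.det ((Polynomial.X : Polynomial R) • M.map Polynomial.C + (c • (1 : Matrix (Fin 5) (Fin 5) R)).map Polynomial.C) with hf
  have hdeg : f.natDegree ≤ 5 := by
    simpa using Polynomial.natDegree_det_X_add_C_le M (c • (1 : Matrix (Fin 5) (Fin 5) R))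
  have h0 : f.coeff 0 = c ^ 5 := by
    rw [hf, Polynomial.coeff_det_X_add_C_zero, Matrix.det_smul]; simp
  have hf0 : f ≠ 0 := by
    intro h; rw [h] at h0; simp at h0; exact hc (by simpa using h0.symm)
  have hev : ∀ t, f.eval t = Edet c t M := by
    intro t
    have h1 := RingHom.map_det (Polynomial.evalRingHom t) ((Polynomial.X : Polynomial R) • M.map Polynomial.C + (c • (1 : Matrix (Fin 5) (Fin 5) R)).map Polynomial.C)
    rw [← hf, Polynomial.coe_evalRingHom] at h1
    rw [h1, Edet]
    refine congrArg Matrix.det ?_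
    ext i j
    simp only [RingHom.mapMatrix_apply, Matrix.map_apply, Matrix.add_apply, Matrix.smul_apply, smul_eq_mul, Polynomial.coe_evalRingHom, Polynomial.eval_add, Polynomial.eval_mul, Polynomial.eval_X, Polynomial.eval_C]
    ring
  have hsub : S ⊆ f.roots.toFinset := by
    intro t ht
    rw [Multiset.mem_toFinset, Polynomial.mem_roots hf0, Polynomial.IsRoot, hev]
    exact hS t ht
  exact (Finset.card_le_card hsub).trans ((Multiset.toFinset_card_le _).trans ((Polynomial.card_roots' f).trans hdeg))

theorem Edet_count (p : ℕ) [Fact p.Prime] (c α β : ZMod p) (hc : c ≠ 0) (hβ : β ≠ 0) (M : Matrix (Fin 5) (Fin 5) (ZMod p)) (L : ℕ) :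
    ((Finset.range L).filter fun z : ℕ => Edet c (α + β * z) M = 0).card ≤ 5 * (L / p + 1) := by
  classical
  have hp : p.Prime := Fact.out
  set s := (Finset.range L).filter fun z : ℕ => Edet c (α + β * z) M = 0 with hs
  have h1 : (s.image fun z : ℕ => α + β * (z : ZMod p)).card ≤ 5 := by
    refine Edet_roots c hc M _ fun t ht => ?_
    obtain ⟨z, hz, rfl⟩ := Finset.mem_image.mp ht
    exact (Finset.mem_filter.mp hz).2
  have h2 := Finset.card_le_mul_card_image (f := fun z : ℕ => α + β * (z : ZMod p)) s (L / p + 1) (by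
    intro y hy
    obtain ⟨z0, hz0, rfl⟩ := Finset.mem_image.mp hy
    refine le_trans (b := (Finset.range (L / p + 1)).card) ?_ (by simp)
    refine Finset.card_le_card_of_injOn (fun z => z / p) ?_ ?_
    · intro z hz
      have hz := Finset.mem_filter.mp hz
      have hzL := Finset.mem_range.mp (Finset.mem_filter.mp hz.1).1
      refine Finset.mem_coe.mpr (Finset.mem_range.mpr ?_)
      exact Nat.lt_succ_of_le (Nat.div_le_div_right hzL.le)
    · intro z hz z' hz' h
      have hz := (Finset.mem_filter.mp hz).2
      have hz' := (Finset.mem_filter.mp hz').2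
      have h3 : (z : ZMod p) = z' := by
        have : β * (z : ZMod p) = β * z' := by
          exact add_left_cancel (hz.trans hz'.symm)
        exact mul_left_cancel₀ hβ this
      rw [ZMod.natCast_eq_natCast_iff'] at h3
      simp only at h
      rw [← Nat.div_add_mod z p, ← Nat.div_add_mod z' p, h, h3])
  calc s.card ≤ (L/p+1) * (s.image fun z : ℕ => α + β * (z : ZMod p)).card := h2
    _ ≤ (L/p+1) * 5 := Nat.mul_le_mul_left _ h1
    _ = _ := by ring

theorem Edet_bound (M : Matrix (Fin 5) (Fin 5) ℤ) : ∃ C : ℕ, 0 < C ∧ ∀ (c t : ℤ) (u : ℕ), c.natAbs ≤ u → t.natAbs ≤ u →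
    (Edet c t M).natAbs ≤ C * u ^ 5 := by
  obtain ⟨K, hK⟩ : ∃ K : ℕ, ∀ i j, (M i j).natAbs ≤ K :=
    ⟨∑ i, ∑ j, (M i j).natAbs, fun i j =>
      (Finset.single_le_sum (f := fun j => (M i j).natAbs) (fun _ _ => Nat.zero_le _) (Finset.mem_univ j)).trans
      (Finset.single_le_sum (f := fun i => ∑ j, (M i j).natAbs) (fun _ _ => Nat.zero_le _) (Finset.mem_univ i))⟩
  refine ⟨120 * (1 + K) ^ 5, by positivity, fun c t u hc ht => ?_⟩
  have h := Matrix.det_le (abv := (AbsoluteValue.abs : AbsoluteValue ℤ ℤ)) (A := (c • (1 : Matrix (Fin 5) (Fin 5) ℤ) + t • M)) (x := ((u * (1 + K) : ℕ) : ℤ)) (by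
    intro i j
    simp only [Matrix.add_apply, Matrix.smul_apply, smul_eq_mul, AbsoluteValue.abs_apply]
    refine (abs_add_le _ _).trans ?_
    rw [abs_mul, abs_mul]
    have h1 : |(1 : Matrix (Fin 5) (Fin 5) ℤ) i j| ≤ 1 := by
      rw [Matrix.one_apply]; split_ifs <;> simp
    have h2 : |M i j| ≤ K := by rw [Int.abs_eq_natAbs]; exact_mod_cast hK i j
    have h3 : |c| ≤ u := by rw [Int.abs_eq_natAbs]; exact_mod_cast hc
    have h4 : |t| ≤ u := by rw [Int.abs_eq_natAbs]; exact_mod_cast ht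
    push_cast
    have := mul_le_mul h3 h1 (abs_nonneg _) (by positivity)
    have := mul_le_mul h4 h2 (abs_nonneg _) (by positivity)
    linarith)
  have h' : |Edet c t M| ≤ ((120 * (1 + K)^5 * u^5 : ℕ) : ℤ) := by
    refine h.trans (le_of_eq ?_)
    simp [Nat.factorial]
    ring
  rw [Int.abs_eq_natAbs] at h'
  exact_mod_cast h'

/-- matrix of the binary form -/
def A2m {R : Type*} [CommRing R] {m : ℕ} (i0 i1 : Fin m) (a b c : R) (i j : Fin m) : R :=
  (if i = i0 then if j = i0 then a else 0 else 0) + (if i = i0 then if j = i1 then b else 0 else 0)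
    + (if i = i1 then if j = i1 then c else 0 else 0)

theorem A2m_quad {R : Type*} [CommRing R] {m : ℕ} (i0 i1 : Fin m) (a b c : R) (x : Fin m → R) :
    ∑ i, ∑ j, A2m i0 i1 a b c i j * x i * x j = a * x i0 ^ 2 + b * x i0 * x i1 + c * x i1 ^ 2 := by
  simp only [A2m, add_mul, Finset.sum_add_distrib, ite_mul, zero_mul]
  simp
  ring

theorem A2m_grad {R : Type*} [CommRing R] {m : ℕ} (i0 i1 : Fin m) (a b c : R) (x : Fin m → R) (i : Fin m) :
    ∑ j, (A2m i0 i1 a b c i j + A2m i0 i1 a b c j i) * x j =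
      (if i = i0 then 2 * a * x i0 + b * x i1 else 0) + (if i = i1 then b * x i0 + 2 * c * x i1 else 0) := by
  simp only [A2m, add_mul, Finset.sum_add_distrib, ite_mul, zero_mul]
  by_cases h0 : i = i0 <;> by_cases h1 : i = i1 <;> simp [h0, h1] <;> (try split_ifs) <;> (try simp_all) <;> (try ring)

theorem A2m_cast {R : Type*} [CommRing R] {m : ℕ} (i0 i1 : Fin m) (a b c : ℤ) (i j : Fin m) :
    ((A2m i0 i1 a b c i j : ℤ) : R) = A2m i0 i1 (a : R) b c i j := by
  simp only [A2m]
  split_ifs <;> simp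

theorem dens_N {m : ℕ} (hm : 0 < m) (A1 : Fin m → Fin m → ℤ) (i0 i1 i : Fin m) (hi0 : i ≠ i0) (hi1 : i ≠ i1)
    (a b c : ℤ) (x0 : Fin m → ℤ) (g D y10 y20 : ℤ) (N : ℕ) (hN0 : N ≠ 0) (hN : (N : ℤ) = g ^ 2 * D) (hgD : g ∣ D)
    (hy10 : y10 = a * x0 i0 ^ 2 + b * x0 i0 * x0 i1 + c * x0 i1 ^ 2)
    (hy20 : y20 = - ∑ i, ∑ j, A1 i j * x0 i * x0 j)
    (hg : g = y10 * ∑ j, (A1 i j + A1 j i) * x0 j)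
    (l y2' : ℤ) (hl : (N:ℤ) ∣ l - 1) (hy2 : (N:ℤ) ∣ y2' - y20) (q : Fin m → ℤ) (k : ℤ) (T : ℕ) :
    (N:ℝ) / (N:ℝ)^m ≤ dens (fun i j => N * (y10 * l) * A1 i j + N * y2' * A2m i0 i1 a b c i j)
      (fun i => N ^ 2 * q i) (N ^ 3 * k) (N ^ (T + 1)) := by
  haveI : NeZero (N ^ (T+1)) := ⟨pow_ne_zero _ hN0⟩
  set A' : Fin m → Fin m → ℤ := fun i j => (y10 * l) * A1 i j + y2' * A2m i0 i1 a b c i j with hA'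
  obtain ⟨z1, hz1⟩ := hl
  obtain ⟨z2, hz2⟩ := hy2
  obtain ⟨w0, hw0⟩ := hgD
  have hval : qF A' (fun i => N * q i) (N ^ 2 * k) x0 = (y10 * l) * (-y20) + y2' * y10 + N * (∑ i, q i * x0 i) + N^2 * k := by
    have h1 : ∑ i, ∑ j, A' i j * x0 i * x0 j = (y10 * l) * (∑ i, ∑ j, A1 i j * x0 i * x0 j) + y2' * ∑ i, ∑ j, A2m i0 i1 a b c i j * x0 i * x0 j := by
      simp only [Finset.mul_sum, ← Finset.sum_add_distrib, hA']
      exact Finset.sum_congr rfl fun i _ => Finset.sum_congr rfl fun j _ => by ring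
    have h2 : ∑ i, (N * q i) * x0 i = N * ∑ i, q i * x0 i := by
      rw [Finset.mul_sum]
      exact Finset.sum_congr rfl fun i _ => by ring
    rw [qF, h1, A2m_quad, ← hy10, h2, hy20]
    ring
  have hder : ∑ j, (A' i j + A' j i) * x0 j + N * q i = g * (l + g * D * q i) := by
    have h1 : ∑ j, (A' i j + A' j i) * x0 j = l * (y10 * ∑ j, (A1 i j + A1 j i) * x0 j) + y2' * ∑ j, (A2m i0 i1 a b c i j + A2m i0 i1 a b c j i) * x0 j := by
      simp only [Finset.mul_sum, ← Finset.sum_add_distrib, hA']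
      exact Finset.sum_congr rfl fun j _ => by ring
    rw [h1, ← hg, A2m_grad, if_neg hi0, if_neg hi1, hN]; ring
  have hh := hensel A' (fun i => N * q i) (N ^ 2 * k) x0 i g D (l + g * D * q i) N (N^T) (N^(T+1)) (3*(T+1)) hN (by ring)
    (by
      rw [hval]
      refine ⟨y10 * (z2 - z1 * y20) + (∑ i, q i * x0 i) + N * k, ?_⟩
      have e1 : y2' = y20 + N * z2 := by linarith
      have e2 : l = 1 + N * z1 := by linarith
      rw [e1, e2]; ring) hder
    (by
      have e2 : l = 1 + N * z1 := by linarith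
      have h1 : IsCoprime (l + g * D * q i) (g * D) := by
        refine ⟨1, -(g * z1 + q i), ?_⟩
        rw [e2, hN]; ring
      have h2 : IsCoprime (l + g * D * q i) ((g * D)^(2*(T+1))) := h1.pow_right
      push_cast
      refine h2.of_isCoprime_of_dvd_right ?_
      rw [pow_mul, hN]
      exact pow_dvd_pow_of_dvd ⟨D, by ring⟩ _)
    (by
      push_cast
      rw [pow_mul, hN]
      refine pow_dvd_pow_of_dvd ⟨w0^2, ?_⟩ _
      rw [hw0]; ring)
  have hcnt : (N^T)^(m-1) ≤ cnt (fun i j => N * (y10 * l) * A1 i j + N * y2' * A2m i0 i1 a b c i j)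
      (fun i => N ^ 2 * q i) (N ^ 3 * k) (N ^ (T + 1)) := by
    refine hh.trans ?_
    unfold cnt
    refine Nat.card_le_card_of_injective (fun x => ⟨x.1, ?_⟩) ?_
    · have := x.2.1
      have e : qM (fun i j => N * (y10 * l) * A1 i j + N * y2' * A2m i0 i1 a b c i j)
          (fun i => N ^ 2 * q i) (N ^ 3 * k) (N ^ (T + 1)) x.1 = (N : ZMod (N^(T+1))) * qM A' (fun i => N * q i) (N ^ 2 * k) (N ^ (T+1)) x.1 := by
        simp only [qM, qF, hA', mul_add, Finset.mul_sum]
        congr 1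
        · congr 1
          · refine Finset.sum_congr rfl fun i _ => Finset.sum_congr rfl fun j _ => ?_
            push_cast; ring
          · refine Finset.sum_congr rfl fun i _ => ?_
            push_cast; ring
        · push_cast; ring
      rw [e, this, mul_zero]
    · intro x y h
      simp only [Subtype.mk.injEq] at h
      exact Subtype.ext h
  unfold dens
  have hNp : (0:ℝ) < N := by exact_mod_cast Nat.pos_of_ne_zero hN0
  have h' : ((N:ℝ)^T)^(m-1) ≤ cnt (fun i j => N * (y10 * l) * A1 i j + N * y2' * A2m i0 i1 a b c i j)
      (fun i => N ^ 2 * q i) (N ^ 3 * k) (N ^ (T + 1)) := by exact_mod_cast hcnt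
  push_cast
  rw [div_le_div_iff₀ (by positivity) (by positivity)]
  obtain ⟨m, rfl⟩ : ∃ m', m = m' + 1 := ⟨m - 1, by omega⟩
  simp only [Nat.add_sub_cancel] at h'
  calc (N:ℝ) * ((N:ℝ)^(T+1))^(m+1) = (N:ℝ)^(T+1) * (((N:ℝ) ^ T) ^ m) * (N:ℝ)^(m+1) := by ring
    _ ≤ _ := by gcongr

theorem dens_l {m : ℕ} (A1 : Fin m → Fin m → ℤ) (i0 i1 : Fin m) (h01 : i0 ≠ i1)
    (a b c : ℤ) (l : ℕ) (hl : l.Prime) (hl2 : l ≠ 2) (hmod : l % (4 * (b^2 - 4*a*c).natAbs) = 1)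
    (hd : ¬ (l:ℤ) ∣ b^2 - 4*a*c) (y1 y2 : ℤ) (hy1 : (l:ℤ) ∣ y1) (hy2 : ¬ (l:ℤ) ∣ y2) (L : Fin m → ℤ) (k : ℤ) (T : ℕ) :
    1 - 1 / (l:ℝ) ≤ dens (fun i j => y1 * A1 i j + y2 * A2m i0 i1 a b c i j) L k (l ^ (T + 1)) := by
  haveI : Fact l.Prime := ⟨hl⟩
  have hm : 0 < m := i0.pos
  refine le_trans ?_ (dens_pow hm _ L k l hl T)
  have hsq : IsSquare (((b^2 - 4*a*c : ℤ)) : ZMod l) := by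
    apply ZMod.isSquare_of_jacobiSym_eq_one
    rw [jacobiSym.mod_right _ (hl.odd_of_ne_two hl2), hmod, jacobiSym.one_right]
  obtain ⟨s, hs⟩ := hsq
  have hy1z : (y1 : ZMod l) = 0 := (ZMod.intCast_zmod_eq_zero_iff_dvd _ _).mpr hy1
  have hy2z : (y2 : ZMod l) ≠ 0 := fun h => hy2 ((ZMod.intCast_zmod_eq_zero_iff_dvd _ _).mp h)
  have hdz : ((b^2 - 4*a*c : ℤ) : ZMod l) ≠ 0 := fun h => hd ((ZMod.intCast_zmod_eq_zero_iff_dvd _ _).mp h)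
  have h2z : (2 : ZMod l) ≠ 0 := by
    intro h
    have : ((2:ℕ) : ZMod l) = 0 := by exact_mod_cast h
    rw [ZMod.natCast_eq_zero_iff] at this
    exact hl2 ((Nat.prime_dvd_prime_iff_eq hl Nat.prime_two).mp this)
  have hAA : (fun i j => ((y1 * A1 i j + y2 * A2m i0 i1 a b c i j : ℤ) : ZMod l)) = fun i j => (y2 : ZMod l) * A2m i0 i1 (a : ZMod l) b c i j := by
    funext i j
    push_cast
    rw [hy1z, A2m_cast]; ring
  rw [hAA]
  have hQ : ∀ v : Fin m → ZMod l, qF (fun i j => (y2 : ZMod l) * A2m i0 i1 (a : ZMod l) b c i j) 0 0 v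
      = y2 * (a * v i0 ^ 2 + b * v i0 * v i1 + c * v i1 ^ 2) := by
    intro v
    rw [← A2m_quad]
    simp [qF, Finset.mul_sum, mul_assoc]
  have hG : ∀ (v : Fin m → ZMod l) i, ∑ j, ((y2 : ZMod l) * A2m i0 i1 (a : ZMod l) b c i j + y2 * A2m i0 i1 (a : ZMod l) b c j i) * v j
      = y2 * ((if i = i0 then 2 * a * v i0 + b * v i1 else 0) + (if i = i1 then b * v i0 + 2 * c * v i1 else 0)) := by
    intro v i
    rw [← A2m_grad, Finset.mul_sum]
    exact Finset.sum_congr rfl fun j _ => by ring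
  push_cast at hs hdz
  by_cases ha : (a : ZMod l) = 0
  · refine nns_iso hm _ _ _ (Pi.single i0 1) ?_ i1 ?_
    · rw [hQ]; simp [ha, h01.symm]
    · rw [hG]
      have hb : (b : ZMod l) ≠ 0 := by
        intro hb; apply hdz; rw [ha, hb]; ring
      simp [h01.symm, hy2z, hb]
  · have hs0 : s ≠ 0 := by
      intro h; rw [h] at hs; apply hdz; rw [hs]; ring
    refine nns_iso hm _ _ _ (Pi.single i0 (s - b) + Pi.single i1 (2 * a)) ?_ i0 ?_
    · rw [hQ]
      simp [h01, h01.symm]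
      right
      linear_combination (-(a : ZMod l)) * hs
    · rw [hG]
      simp [h01, h01.symm]
      refine ⟨hy2z, ?_⟩
      have : 2 * (a : ZMod l) * (s - b) + b * (2 * a) = 2 * a * s := by ring
      rw [this]
      exact mul_ne_zero (mul_ne_zero h2z ha) hs0

theorem dens_bad {m : ℕ} (A1 : Fin m → Fin m → ℤ) (i0 i1 : Fin m)
    (a b c : ℤ) (p : ℕ) (hp : p.Prime) (hp4 : 4 ≤ p) (e : Fin 3 → Fin m) (he0 : ∀ r, e r ≠ i0) (he1 : ∀ r, e r ≠ i1)
    (X : Fin m → Fin 3 → ℤ) (d : ℤ) (hX : ∀ r t, ∑ j, (A1 (e r) j + A1 j (e r)) * X j t = if r = t then d else 0)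
    (y1 y2 : ℤ) (hd : ¬ (p:ℤ) ∣ y1 * d) (L : Fin m → ℤ) (k : ℤ) (T : ℕ) :
    1 - 1 / (p:ℝ) ≤ dens (fun i j => y1 * A1 i j + y2 * A2m i0 i1 a b c i j) L k (p ^ (T + 1)) := by
  haveI : Fact p.Prime := ⟨hp⟩
  have hm : 0 < m := i0.pos
  refine le_trans ?_ (dens_pow hm _ L k p hp T)
  have hdz : ((y1 * d : ℤ) : ZMod p) ≠ 0 := fun h => hd ((ZMod.intCast_zmod_eq_zero_iff_dvd _ _).mp h)
  obtain ⟨v, hv, i, hi⟩ := exists_iso (fun i j => y1 * A1 i j + y2 * A2m i0 i1 a b c i j) p hp4 e (fun j t => (X j t : ZMod p))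
    ((y1 * d : ℤ) : ZMod p) (isUnit_iff_ne_zero.mpr hdz) (by
      intro r t
      have hz : ∀ j, A2m i0 i1 a b c (e r) j = 0 ∧ A2m i0 i1 a b c j (e r) = 0 := by
        intro j; simp [A2m, he0 r, he1 r]
      have : ∑ j, ((y1 * A1 (e r) j + y2 * A2m i0 i1 a b c (e r) j) + (y1 * A1 j (e r) + y2 * A2m i0 i1 a b c j (e r))) * X j t = if r = t then y1 * d else 0 := by
        have h2 : (if r = t then y1 * d else 0) = y1 * (if r = t then d else 0) := by split_ifs <;> simp
        rw [h2, ← hX, Finset.mul_sum]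
        refine Finset.sum_congr rfl fun j _ => ?_
        rw [(hz j).1, (hz j).2]; ring
      have h3 := congrArg (fun z : ℤ => (z : ZMod p)) this
      push_cast at h3 ⊢
      exact h3)
  exact nns_iso hm _ _ _ v hv i hi

theorem dens_good {m : ℕ} (hm : 0 < m) (A : Fin m → Fin m → ℤ) (p : ℕ) (hp : p.Prime) (e : Fin 5 → Fin m)
    (X : Fin m → Fin 5 → ℤ) (Δ : ℤ) (hX : ∀ r t, ∑ j, (A (e r) j + A j (e r)) * X j t = if r = t then Δ else 0)
    (hΔ : ¬ (p:ℤ) ∣ Δ) (L : Fin m → ℤ) (k : ℤ) (T : ℕ) :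
    1 - 2 / (p:ℝ)^(3/2 : ℝ) ≤ dens A L k (p ^ (T + 1)) := by
  haveI : Fact p.Prime := ⟨hp⟩
  refine le_trans ?_ (dens_pow hm _ L k p hp T)
  have hdz : (Δ : ZMod p) ≠ 0 := fun h => hΔ ((ZMod.intCast_zmod_eq_zero_iff_dvd _ _).mp h)
  refine nns_generic A L k p e (fun j t => (X j t : ZMod p)) Δ (isUnit_iff_ne_zero.mpr hdz) ?_
  intro r t
  have h3 := congrArg (fun z : ℤ => (z : ZMod p)) (hX r t)
  push_cast at h3
  exact h3

theorem tail_small (f : ℕ → ℝ) (hf : Summable f) (ε : ℝ) (hε : 0 < ε) :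
    ∃ P : ℕ, ∀ s : Finset ℕ, (∀ p ∈ s, P < p) → ∑ p ∈ s, f p ≤ ε := by
  obtain ⟨t, ht⟩ := summable_iff_vanishing_norm.mp hf ε hε
  refine ⟨t.sup id, fun s hs => ?_⟩
  refine (le_abs_self _).trans (ht s ?_).le
  rw [Finset.disjoint_left]
  intro p hp hpt
  have := Finset.le_sup (f := id) hpt
  have h2 := hs p hp
  simp at this
  omega

theorem exists_P : ∃ P : ℕ, 8 ≤ P ∧ (∀ s : Finset ℕ, (∀ p ∈ s, P < p) → ∑ p ∈ s, 2 / (p:ℝ)^(3/2:ℝ) ≤ 1/8)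
    ∧ (∀ s : Finset ℕ, (∀ p ∈ s, P < p) → ∑ p ∈ s, 5 / (p:ℝ)^2 ≤ 1/8) := by
  have h1 : Summable fun p : ℕ => 2 / (p:ℝ)^(3/2:ℝ) := by
    have := (Real.summable_one_div_nat_rpow (p := 3/2)).mpr (by norm_num)
    simpa [div_eq_mul_inv] using this.mul_left 2
  have h2 : Summable fun p : ℕ => 5 / (p:ℝ)^2 := by
    have := (Real.summable_one_div_nat_pow (p := 2)).mpr (by norm_num)
    simpa [div_eq_mul_inv] using this.mul_left 5
  obtain ⟨P1, hP1⟩ := tail_small _ h1 (1/8) (by norm_num)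
  obtain ⟨P2, hP2⟩ := tail_small _ h2 (1/8) (by norm_num)
  refine ⟨max 8 (max P1 P2), le_max_left _ _, fun s hs => hP1 s fun p hp => ?_, fun s hs => hP2 s fun p hp => ?_⟩
  · have := hs p hp; omega
  · have := hs p hp; omega

theorem point_lower {m : ℕ} (A1 : Fin m → Fin m → ℤ) (i0 i1 : Fin m) (h01 : i0 ≠ i1) (a b c : ℤ)
    (hdisc : b^2 - 4*a*c ≠ 0)
    (e : Fin 5 → Fin m) (X : Fin m → Fin 5 → ℤ) (d : ℤ)
    (hX : ∀ r t, ∑ j, (A1 (e r) j + A1 j (e r)) * X j t = if r = t then d else 0)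
    (e3 : Fin 3 → Fin 5) (he3 : Function.Injective e3) (he0 : ∀ r, e (e3 r) ≠ i0) (he1 : ∀ r, e (e3 r) ≠ i1)
    (M : Matrix (Fin 5) (Fin 5) ℤ)
    (hM : ∀ r t, M r t = ∑ j, (A2m i0 i1 a b c (e r) j + A2m i0 i1 a b c j (e r)) * X j t)
    (N : ℕ) (hN0 : N ≠ 0) (y10 y2r : ℤ)
    (hDN : ∀ l y2' : ℤ, (N:ℤ) ∣ l - 1 → (N:ℤ) ∣ y2' - y2r → ∀ (q : Fin m → ℤ) (k : ℤ) (T : ℕ),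
      (N:ℝ) / (N:ℝ)^m ≤ dens (fun i j => N * (y10 * l) * A1 i j + N * y2' * A2m i0 i1 a b c i j)
      (fun i => N ^ 2 * q i) (N ^ 3 * k) (N ^ (T + 1)))
    (hdN : d ∣ N) (hyN : y10 ∣ N) (h4N : 4 * (b^2 - 4*a*c).natAbs ∣ N) (P : ℕ) (hP8 : 8 ≤ P)
    (hPN : ∀ p : ℕ, p.Prime → ¬ p ∣ N → P < p)
    (hτ : ∀ s : Finset ℕ, (∀ p ∈ s, P < p) → ∑ p ∈ s, 2 / (p:ℝ)^(3/2:ℝ) ≤ 1/8)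
    (l : ℕ) (hl : l.Prime) (hlN : (N:ℤ) ∣ l - 1) (y2' : ℤ) (hy0 : 0 < y2') (hyl : y2' < l)
    (hy2 : (N:ℤ) ∣ y2' - y2r) (E : ℤ) (hEd : E = Edet (N * (y10 * l) * d) (N * y2') M) (hE : E ≠ 0)
    (q : Fin m → ℤ) (k : ℤ) :
    ((N:ℝ) / (N:ℝ)^m) * (1 - 1/(l:ℝ) - 1/8 - ∑ p ∈ E.natAbs.primeFactors.filter (fun p => ¬ p ∣ N ∧ p ≠ l), 1/(p:ℝ)) ≤
      (singSeries m (fun x => qF (fun i j => N * (y10 * l) * A1 i j + N * y2' * A2m i0 i1 a b c i j)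
      (fun i => N ^ 2 * q i) (N ^ 3 * k) x)).re := by
  have hm : 0 < m := i0.pos
  have hlN' : ¬ l ∣ N := by
    intro h
    have h1 : (l:ℤ) ∣ l - 1 := (Int.natCast_dvd_natCast.mpr h).trans hlN
    have h2 : (l:ℤ) ∣ 1 := by
      have := dvd_sub (dvd_refl (l:ℤ)) h1
      simpa using this
    have h3 := Int.natCast_dvd_natCast.mp (by simpa using h2 : (l:ℤ) ∣ ((1:ℕ):ℤ))
    exact hl.one_lt.ne' (Nat.dvd_one.mp h3)
  have hl2 : l ≠ 2 := by
    rintro rfl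
    exact hlN' (Dvd.dvd.trans (by omega) h4N)
  have hld : ¬ (l:ℤ) ∣ b^2 - 4*a*c := by
    intro h
    exact hlN' ((Int.natCast_dvd.mp h).trans ((Dvd.intro_left _ rfl).trans h4N))
  have hmod : l % (4 * (b^2 - 4*a*c).natAbs) = 1 := by
    have h1 : (N:ℤ) ∣ ((l - 1 : ℕ) : ℤ) := by
      rw [Nat.cast_sub hl.one_lt.le]; simpa using hlN
    have h2 := h4N.trans (Int.natCast_dvd_natCast.mp h1)
    have h3 : 1 < 4 * (b^2 - 4*a*c).natAbs := by
      have := Int.natAbs_pos.mpr hdisc; omega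
    obtain ⟨w, hw⟩ := h2
    have h4 : l = 1 + 4 * (b^2 - 4*a*c).natAbs * w := by have := hl.one_lt; omega
    rw [h4, Nat.add_mul_mod_self_left, Nat.mod_eq_of_lt h3]
  have hly : ¬ (l:ℤ) ∣ N * y2' := by
    intro h
    rcases (Nat.prime_iff_prime_int.mp hl).dvd_or_dvd h with h | h
    · exact hlN' (Int.natCast_dvd_natCast.mp h)
    · have := Int.le_of_dvd hy0 h; omega
  obtain ⟨X', hX'⟩ := Edet_inv (fun i j => A1 i j + A1 j i) (fun i j => A2m i0 i1 a b c i j + A2m i0 i1 a b c j i) e X d hX M hM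
    (N * (y10 * l)) (N * y2')
  rw [← hEd] at hX'
  have hX2 : ∀ r t, ∑ j, ((N * (y10 * l) * A1 (e r) j + N * y2' * A2m i0 i1 a b c (e r) j) + (N * (y10 * l) * A1 j (e r) + N * y2' * A2m i0 i1 a b c j (e r))) * X' j t = if r = t then E else 0 := by
    intro r t
    rw [← hX']
    exact Finset.sum_congr rfl fun j _ => by ring
  have hlp : (0:ℝ) < l := by exact_mod_cast hl.pos
  refine sing_lower' _ _ _ (sing_summable _ _ _ e X' E hE hX2) N hN0 _ _ (by positivity)
    (hDN l y2' hlN hy2 q k) (fun p => if p = l ∨ (p:ℤ) ∣ E then 1/(p:ℝ) else 2 / (p:ℝ)^(3/2:ℝ)) ?_ ?_ ?_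
  · intro p hp hpN
    have h8 := hPN p hp hpN
    have hp5 : (5:ℝ) ≤ p := by exact_mod_cast (by omega : 5 ≤ p)
    have h1 : (p:ℝ) ≤ (p:ℝ)^(3/2:ℝ) := by
      conv_lhs => rw [← Real.rpow_one (p:ℝ)]
      exact Real.rpow_le_rpow_of_exponent_le (by linarith) (by norm_num)
    split_ifs
    · refine ⟨by positivity, ?_⟩
      rw [div_le_one (by linarith)]; linarith
    · refine ⟨by positivity, ?_⟩
      rw [div_le_one (by linarith)]; linarith
  · intro p hp hpN T
    have h8 := hPN p hp hpN
    by_cases h1 : p = l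
    · rw [if_pos (Or.inl h1)]
      subst h1
      exact dens_l A1 i0 i1 h01 a b c p hl hl2 hmod hld _ _ ⟨N * y10, by ring⟩ hly _ _ T
    · by_cases h2 : (p:ℤ) ∣ E
      · rw [if_pos (Or.inr h2)]
        refine dens_bad A1 i0 i1 a b c p hp (by omega) (fun r => e (e3 r)) he0 he1 (fun j t => X j (e3 t)) d ?_ _ _ ?_ _ _ T
        · intro r t
          rw [hX]
          simp [he3.eq_iff]
        · intro h
          have pp := Nat.prime_iff_prime_int.mp hp
          have hpN' : ¬ (p:ℤ) ∣ N := fun h => hpN (Int.natCast_dvd_natCast.mp h)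
          rcases pp.dvd_or_dvd h with h | h
          · rcases pp.dvd_or_dvd h with h | h
            · exact hpN' h
            · rcases pp.dvd_or_dvd h with h | h
              · exact hpN' (h.trans hyN)
              · exact h1 ((Nat.prime_dvd_prime_iff_eq hp hl).mp (Int.natCast_dvd_natCast.mp h))
          · exact hpN' (h.trans hdN)
      · rw [if_neg (by tauto)]
        exact dens_good hm _ p hp e X' E hX2 h2 _ _ T
  · intro T
    set S := (Finset.range T).filter (fun p => p.Prime ∧ ¬ p ∣ N) with hS
    have hb : ∀ p ∈ S, (if p = l ∨ (p:ℤ) ∣ E then 1/(p:ℝ) else 2 / (p:ℝ)^(3/2:ℝ)) ≤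
        (if p = l then 1/(p:ℝ) else 0) + (if (p:ℤ) ∣ E ∧ p ≠ l then 1/(p:ℝ) else 0) + 2 / (p:ℝ)^(3/2:ℝ) := by
      intro p hp
      have h1 : (0:ℝ) ≤ 1 / (p:ℝ) := by positivity
      have h2 : (0:ℝ) ≤ 2 / (p:ℝ)^(3/2:ℝ) := by positivity
      by_cases h3 : p = l <;> by_cases h4 : (p:ℤ) ∣ E <;> simp only [h3, h4, true_or, or_true, false_or, or_false, if_true, if_false, ne_eq, not_true, not_false_iff, and_true, and_false, if_pos, and_self] <;> first | linarith | skip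
      all_goals
        subst h3
        simp
        try positivity
    have s1 : ∑ p ∈ S, (if p = l then 1/(p:ℝ) else 0) ≤ 1/(l:ℝ) := by
      rw [Finset.sum_ite_eq']
      split_ifs
      · exact le_rfl
      · positivity
    have s2 : ∑ p ∈ S, (if (p:ℤ) ∣ E ∧ p ≠ l then 1/(p:ℝ) else 0) ≤ ∑ p ∈ E.natAbs.primeFactors.filter (fun p => ¬ p ∣ N ∧ p ≠ l), 1/(p:ℝ) := by
      rw [← Finset.sum_filter]
      refine Finset.sum_le_sum_of_subset_of_nonneg ?_ fun _ _ _ => by positivity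
      intro p hp
      simp only [hS, Finset.mem_filter, Nat.mem_primeFactors] at hp ⊢
      exact ⟨⟨hp.1.2.1, Int.natCast_dvd.mp hp.2.1, Int.natAbs_ne_zero.mpr hE⟩, hp.1.2.2, hp.2.2⟩
    have s3 : ∑ p ∈ S, 2 / (p:ℝ)^(3/2:ℝ) ≤ 1/8 := by
      refine hτ S fun p hp => ?_
      simp only [hS, Finset.mem_filter] at hp
      exact hPN p hp.2.1 hp.2.2
    have := Finset.sum_le_sum hb
    rw [Finset.sum_add_distrib, Finset.sum_add_distrib] at this
    linarith

theorem count_sum (M : Matrix (Fin 5) (Fin 5) ℤ) (N : ℕ) (c y2r : ℤ) (l P : ℕ)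
    (hc : ∀ p : ℕ, p.Prime → ¬ p ∣ N → p ≠ l → ¬ (p:ℤ) ∣ c)
    (hPN : ∀ p : ℕ, p.Prime → ¬ p ∣ N → P < p)
    (hτ : ∀ s : Finset ℕ, (∀ p ∈ s, P < p) → ∑ p ∈ s, 5 / (p:ℝ)^2 ≤ 1/8)
    (L Emax : ℕ) (hE : ∀ z < L, (Edet c (N * (y2r + N * z)) M).natAbs ≤ Emax) :
    ∑ z ∈ (Finset.range L).filter (fun z : ℕ => Edet c (N * (y2r + N * z)) M ≠ 0),
      ∑ p ∈ (Edet c (N * (y2r + N * z)) M).natAbs.primeFactors.filter (fun p => ¬ p ∣ N ∧ p ≠ l), 1/(p:ℝ)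
      ≤ L / 8 + 5 * (1 + Real.log Emax) := by
  set S := (Finset.Icc 1 Emax).filter (fun p => p.Prime ∧ ¬ p ∣ N ∧ p ≠ l) with hS
  have h1 : ∀ z ∈ (Finset.range L).filter (fun z : ℕ => Edet c (N * (y2r + N * z)) M ≠ 0),
      ∑ p ∈ (Edet c (N * (y2r + N * z)) M).natAbs.primeFactors.filter (fun p => ¬ p ∣ N ∧ p ≠ l), 1/(p:ℝ)
      ≤ ∑ p ∈ S, if (p:ℤ) ∣ Edet c (N * (y2r + N * z)) M then 1/(p:ℝ) else 0 := by
    intro z hz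
    rw [Finset.mem_filter, Finset.mem_range] at hz
    rw [← Finset.sum_filter]
    refine Finset.sum_le_sum_of_subset_of_nonneg ?_ fun _ _ _ => by positivity
    intro p hp
    simp only [Finset.mem_filter, Nat.mem_primeFactors, hS, Finset.mem_Icc] at hp ⊢
    refine ⟨⟨⟨hp.1.1.one_lt.le, ?_⟩, hp.1.1, hp.2⟩, Int.natCast_dvd.mpr hp.1.2.1⟩
    exact (Nat.le_of_dvd (Nat.pos_of_ne_zero hp.1.2.2) hp.1.2.1).trans (hE z hz.1)
  refine (Finset.sum_le_sum h1).trans ?_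
  rw [Finset.sum_comm]
  have h2 : ∀ p ∈ S, ∑ z ∈ (Finset.range L).filter (fun z : ℕ => Edet c (N * (y2r + N * z)) M ≠ 0),
      (if (p:ℤ) ∣ Edet c (N * (y2r + N * z)) M then 1/(p:ℝ) else 0) ≤ L * (5 / (p:ℝ)^2) + 5 * (1 / (p:ℝ)) := by
    intro p hp
    simp only [hS, Finset.mem_filter, Finset.mem_Icc] at hp
    obtain ⟨_, hp, hpN, hpl⟩ := hp
    haveI : Fact p.Prime := ⟨hp⟩
    have hpp : (0:ℝ) < p := by exact_mod_cast hp.pos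
    have h3 := Edet_count p (c : ZMod p) ((N * y2r : ℤ) : ZMod p) ((N:ZMod p)^2)
      (fun h => hc p hp hpN hpl ((ZMod.intCast_zmod_eq_zero_iff_dvd _ _).mp h))
      (pow_ne_zero _ (fun h => hpN ((ZMod.natCast_eq_zero_iff _ _).mp h))) (M.map (Int.castRingHom (ZMod p))) L
    have h4 : ((Finset.range L).filter (fun z : ℕ => (p:ℤ) ∣ Edet c (N * (y2r + N * z)) M)).card ≤ 5 * (L / p + 1) := by
      refine le_trans (Finset.card_le_card ?_) h3
      intro z hz
      rw [Finset.mem_filter] at hz ⊢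
      refine ⟨hz.1, ?_⟩
      have h5 := (ZMod.intCast_zmod_eq_zero_iff_dvd _ _).mpr hz.2
      have h6 := Edet_map (Int.castRingHom (ZMod p)) c (N * (y2r + N * z)) M
      simp only [eq_intCast] at h6
      rw [h5] at h6
      rw [h6]
      congr 1
      push_cast; ring
    have h5 : ((L / p : ℕ) : ℝ) ≤ L / p := Nat.cast_div_le
    calc _ ≤ ∑ z ∈ Finset.range L, (if (p:ℤ) ∣ Edet c (N * (y2r + N * z)) M then 1/(p:ℝ) else 0) := by
          refine Finset.sum_le_sum_of_subset_of_nonneg (Finset.filter_subset _ _) fun _ _ _ => ?_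
          split_ifs <;> positivity
      _ = (((Finset.range L).filter (fun z : ℕ => (p:ℤ) ∣ Edet c (N * (y2r + N * z)) M)).card : ℝ) * (1 / p) := by
          rw [← Finset.sum_filter, Finset.sum_const, nsmul_eq_mul]
      _ ≤ (5 * ((L:ℝ) / p + 1)) * (1 / p) := by
          refine mul_le_mul_of_nonneg_right ?_ (by positivity)
          have : (((Finset.range L).filter (fun z : ℕ => (p:ℤ) ∣ Edet c (N * (y2r + N * z)) M)).card : ℝ) ≤ 5 * (((L / p : ℕ):ℝ) + 1) := by exact_mod_cast h4
          linarith
      _ = _ := by field_simp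
  refine (Finset.sum_le_sum h2).trans ?_
  rw [Finset.sum_add_distrib, ← Finset.mul_sum, ← Finset.mul_sum]
  have h3 := hτ S fun p hp => by
    simp only [hS, Finset.mem_filter] at hp
    exact hPN p hp.2.1 hp.2.2.1
  have h4 : ∑ p ∈ S, 1 / (p:ℝ) ≤ 1 + Real.log Emax := by
    refine le_trans ?_ (harmonic_le_one_add_log Emax)
    rw [harmonic_eq_sum_Icc]
    push_cast
    simp only [one_div]
    exact Finset.sum_le_sum_of_subset_of_nonneg (Finset.filter_subset _ _) fun _ _ _ => by positivity
  have h5 : (L:ℝ) * ∑ p ∈ S, 5 / (p:ℝ)^2 ≤ L * (1/8) := mul_le_mul_of_nonneg_left h3 (Nat.cast_nonneg L)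
  linarith

theorem core_sum {m : ℕ} (A1 : Fin m → Fin m → ℤ) (i0 i1 : Fin m) (h01 : i0 ≠ i1) (a b c : ℤ)
    (hdisc : b^2 - 4*a*c ≠ 0)
    (e : Fin 5 → Fin m) (X : Fin m → Fin 5 → ℤ) (d : ℤ) (hd0 : d ≠ 0)
    (hX : ∀ r t, ∑ j, (A1 (e r) j + A1 j (e r)) * X j t = if r = t then d else 0)
    (e3 : Fin 3 → Fin 5) (he3 : Function.Injective e3) (he0 : ∀ r, e (e3 r) ≠ i0) (he1 : ∀ r, e (e3 r) ≠ i1)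
    (N : ℕ) (hN0 : N ≠ 0) (y10 y2r : ℤ) (hy10 : y10 ≠ 0) (hy2r0 : 0 < y2r) (hy2rN : y2r ≤ N)
    (hDN : ∀ l y2' : ℤ, (N:ℤ) ∣ l - 1 → (N:ℤ) ∣ y2' - y2r → ∀ (q : Fin m → ℤ) (k : ℤ) (T : ℕ),
      (N:ℝ) / (N:ℝ)^m ≤ dens (fun i j => N * (y10 * l) * A1 i j + N * y2' * A2m i0 i1 a b c i j)
      (fun i => N ^ 2 * q i) (N ^ 3 * k) (N ^ (T + 1)))
    (hdN : d ∣ N) (hyN : y10 ∣ N) (h4N : 4 * (b^2 - 4*a*c).natAbs ∣ N) (P : ℕ) (hP8 : 8 ≤ P)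
    (hPN : ∀ p : ℕ, p.Prime → ¬ p ∣ N → P < p)
    (hτ : ∀ s : Finset ℕ, (∀ p ∈ s, P < p) → ∑ p ∈ s, 2 / (p:ℝ)^(3/2:ℝ) ≤ 1/8)
    (hτ2 : ∀ s : Finset ℕ, (∀ p ∈ s, P < p) → ∑ p ∈ s, 5 / (p:ℝ)^2 ≤ 1/8) (Ac : ℕ) :
    ∃ u0 : ℕ, ∀ u : ℕ, u0 ≤ u → ∀ l : ℕ, l.Prime → (N:ℤ) ∣ l - 1 → u < l → l ≤ Ac * u →
      ∃ Z ⊆ Finset.range (u / N - 1), ∀ (q : ℕ → Fin m → ℤ) (k : ℕ → ℤ),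
        ((N:ℝ) / (N:ℝ)^m / (8 * N)) * u ≤ ∑ z ∈ Z,
        (singSeries m (fun x => qF (fun i j => N * (y10 * l) * A1 i j + N * (y2r + N * z) * A2m i0 i1 a b c i j)
          (fun i => N ^ 2 * q z i) (N ^ 3 * k z) x)).re := by
  obtain ⟨M, hM⟩ : ∃ M : Matrix (Fin 5) (Fin 5) ℤ, ∀ r t, M r t = ∑ j, (A2m i0 i1 a b c (e r) j + A2m i0 i1 a b c j (e r)) * X j t := ⟨Matrix.of fun r t => _, fun _ _ => rfl⟩
  obtain ⟨K, hK0, hK⟩ := Edet_bound M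
  have hNp : 0 < N := Nat.pos_of_ne_zero hN0
  have hNr : (0:ℝ) < N := by exact_mod_cast hNp
  obtain ⟨K', hK'⟩ : ∃ K', K' = N * y10.natAbs * Ac * d.natAbs + N := ⟨_, rfl⟩
  have hK'0 : 0 < K' := by omega
  obtain ⟨u1, hu1⟩ : ∃ u1 : ℕ, ∀ u : ℕ, u1 ≤ u → 10 + 5 * Real.log K + 25 * Real.log K' + 25 * Real.log u ≤ u / (2 * N) := by
    have hlog := (Real.isLittleO_log_id_atTop.bound (by positivity : (0:ℝ) < 1 / (100 * N)))
    have h2 : ∀ᶠ x : ℝ in Filter.atTop, 10 + 5 * Real.log K + 25 * Real.log K' ≤ x / (4 * N) :=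
      (Filter.tendsto_id.atTop_div_const (by positivity : (0:ℝ) < 4 * N)).eventually_ge_atTop _
    have h3 := (hlog.and (h2.and (Filter.eventually_ge_atTop 1))).natCast_atTop
    obtain ⟨u1, hu1⟩ := Filter.eventually_atTop.mp h3
    refine ⟨u1, fun u hu => ?_⟩
    obtain ⟨a1, a2, a3⟩ := hu1 u hu
    simp only [id, Real.norm_eq_abs] at a1
    rw [abs_of_nonneg (by linarith : (0:ℝ) ≤ (u:ℝ))] at a1
    have a4 := (le_abs_self _).trans a1
    have e1 : (u:ℝ) / (2 * N) = u / (4 * N) + 25 * (1 / (100 * N) * u) := by field_simp; norm_num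
    linarith
  refine ⟨max u1 8, fun u hu l hl hlN hul hlA => ?_⟩
  have hu8 : 8 ≤ u := (le_max_right _ _).trans hu
  have hlog := hu1 u ((le_max_left _ _).trans hu)
  set L := u / N - 1 with hL
  set cc : ℤ := N * (y10 * l) * d with hcc
  have hlN' : ¬ l ∣ N := by
    intro h
    have h1 : (l:ℤ) ∣ l - 1 := (Int.natCast_dvd_natCast.mpr h).trans hlN
    have h2 : (l:ℤ) ∣ 1 := by
      have := dvd_sub (dvd_refl (l:ℤ)) h1
      simpa using this
    have h3 := Int.natCast_dvd_natCast.mp (by simpa using h2 : (l:ℤ) ∣ ((1:ℕ):ℤ))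
    exact hl.one_lt.ne' (Nat.dvd_one.mp h3)
  have hcp : ∀ p : ℕ, p.Prime → ¬ p ∣ N → p ≠ l → ¬ (p:ℤ) ∣ cc := by
    intro p hp hpN h1 h
    have pp := Nat.prime_iff_prime_int.mp hp
    have hpN' : ¬ (p:ℤ) ∣ N := fun h => hpN (Int.natCast_dvd_natCast.mp h)
    rcases pp.dvd_or_dvd h with h | h
    · rcases pp.dvd_or_dvd h with h | h
      · exact hpN' h
      · rcases pp.dvd_or_dvd h with h | h
        · exact hpN' (h.trans hyN)
        · exact h1 ((Nat.prime_dvd_prime_iff_eq hp hl).mp (Int.natCast_dvd_natCast.mp h))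
    · exact hpN' (h.trans hdN)
  have hcc0 : cc ≠ 0 := by
    have := hl.ne_zero
    simp [hcc, hN0, hy10, hd0, this]
  have hNL : ∀ z < L, N * z + N ≤ u := by
    intro z hz
    have h1 : z + 1 ≤ u / N := by omega
    calc N * z + N = N * (z + 1) := by ring
      _ ≤ N * (u / N) := Nat.mul_le_mul_left _ h1
      _ ≤ u := Nat.mul_div_le u N
  have hyu : ∀ z < L, y2r + N * z ≤ u := by
    intro z hz
    have : (N:ℤ) * z + N ≤ u := by exact_mod_cast hNL z hz
    linarith
  have hE : ∀ z < L, (Edet cc (N * (y2r + N * z)) M).natAbs ≤ K * (K' * u)^5 := by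
    intro z hz
    refine hK _ _ _ ?_ ?_
    · rw [hcc]
      simp only [Int.natAbs_mul, Int.natAbs_natCast]
      calc N * (y10.natAbs * l) * d.natAbs ≤ N * (y10.natAbs * (Ac * u)) * d.natAbs := by gcongr
        _ = (N * y10.natAbs * Ac * d.natAbs) * u := by ring
        _ ≤ K' * u := by gcongr; omega
    · rw [Int.natAbs_mul, Int.natAbs_natCast]
      refine Nat.mul_le_mul (by omega) ?_
      have h1 := hyu z hz
      have h2 : (0:ℤ) ≤ N * z := by positivity
      omega
  have hcs := count_sum M N cc y2r l P hcp hPN hτ2 L (K * (K' * u)^5) hE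
  refine ⟨(Finset.range L).filter (fun z : ℕ => Edet cc (N * (y2r + N * z)) M ≠ 0), Finset.filter_subset _ _, fun q k => ?_⟩
  set Z := (Finset.range L).filter (fun z : ℕ => Edet cc (N * (y2r + N * z)) M ≠ 0) with hZ
  have hcard : L ≤ Z.card + 5 := by
    have h1 := Finset.card_filter_add_card_filter_not (s := Finset.range L) (fun z : ℕ => Edet cc (N * (y2r + N * z)) M = 0)
    have h2 : ((Finset.range L).filter (fun z : ℕ => Edet cc (N * (y2r + N * z)) M = 0)).card ≤ 5 := by
      rw [← Finset.card_image_of_injective (f := fun z : ℕ => (N:ℤ) * (y2r + N * z)) _ (by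
        intro z1 z2 h
        have hNz : (N:ℤ) ≠ 0 := by exact_mod_cast hN0
        simpa [hN0] using h)]
      refine Edet_roots cc hcc0 M _ fun t ht => ?_
      obtain ⟨z, hz, rfl⟩ := Finset.mem_image.mp ht
      exact (Finset.mem_filter.mp hz).2
    rw [Finset.card_range] at h1
    change _ + Z.card = L at h1
    omega
  have hpt : ∀ z ∈ Z, ((N:ℝ) / (N:ℝ)^m) * (3/4 - ∑ p ∈ (Edet cc (N * (y2r + N * z)) M).natAbs.primeFactors.filter (fun p => ¬ p ∣ N ∧ p ≠ l), 1/(p:ℝ)) ≤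
      (singSeries m (fun x => qF (fun i j => N * (y10 * l) * A1 i j + N * (y2r + N * z) * A2m i0 i1 a b c i j)
          (fun i => N ^ 2 * q z i) (N ^ 3 * k z) x)).re := by
    intro z hz
    rw [hZ, Finset.mem_filter, Finset.mem_range] at hz
    have h1 := hyu z hz.1
    have h2 : (0:ℤ) ≤ N * z := by positivity
    refine le_trans ?_ (point_lower A1 i0 i1 h01 a b c hdisc e X d hX e3 he3 he0 he1 M hM N hN0 y10 y2r hDN hdN hyN h4N P hP8 hPN hτ l hl hlN
      (y2r + N * z) (by linarith) (by have : (u:ℤ) < l := by exact_mod_cast hul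
                                      linarith) ⟨z, by ring⟩ _ rfl hz.2 (q z) (k z))
    refine mul_le_mul_of_nonneg_left ?_ (by positivity)
    have h3 : 1 / (l:ℝ) ≤ 1/8 := by
      apply one_div_le_one_div_of_le (by norm_num)
      exact_mod_cast (by omega : 8 ≤ l)
    linarith
  refine le_trans ?_ (Finset.sum_le_sum hpt)
  rw [← Finset.mul_sum, Finset.sum_sub_distrib, Finset.sum_const, nsmul_eq_mul]
  have hup : (0:ℝ) < u := by exact_mod_cast (by omega : 0 < u)
  have e1 : Real.log ((K * (K' * u)^5 : ℕ) : ℝ) = Real.log K + 5 * Real.log K' + 5 * Real.log u := by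
    push_cast
    have k1 : (K:ℝ) ≠ 0 := by exact_mod_cast hK0.ne'
    have k2 : (K':ℝ) ≠ 0 := by exact_mod_cast hK'0.ne'
    rw [Real.log_mul k1 (by positivity), Real.log_pow, Real.log_mul k2 hup.ne']
    push_cast; ring
  rw [e1] at hcs
  have hc2 : (L:ℝ) ≤ Z.card + 5 := by exact_mod_cast hcard
  have hLu : (u:ℝ) / N ≤ L + 2 := by
    rw [div_le_iff₀ hNr]
    have h1 : u < N * (u / N + 1) := Nat.lt_mul_div_succ u hNp
    have h2 : u / N + 1 ≤ L + 2 := by omega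
    have h3 : u ≤ (L + 2) * N := by nlinarith
    exact_mod_cast h3
  have e2 : ((N:ℝ) / (N:ℝ)^m / (8 * N)) * u = ((N:ℝ) / (N:ℝ)^m) * ((u / N) / 8) := by field_simp
  have e3 : (u:ℝ) / (2 * N) = (u / N) / 2 := by field_simp
  rw [e2]
  refine mul_le_mul_of_nonneg_left ?_ (by positivity)
  rw [e3] at hlog
  linarith

theorem avoid_roots (d β q0 γ q2 : ℤ) (hd : d ≠ 0) (hq : q2 ≠ 0) :
    ∃ t : ℤ, d + t * β ≠ 0 ∧ q0 + t * γ + t ^ 2 * q2 ≠ 0 := by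
  by_contra hcon
  push Not at hcon
  set f : Polynomial ℤ := Polynomial.C d + Polynomial.X * Polynomial.C β with hf
  set g : Polynomial ℤ := Polynomial.C q0 + Polynomial.X * Polynomial.C γ + Polynomial.X ^ 2 * Polynomial.C q2 with hg
  have hfg : f * g = 0 := by
    refine Polynomial.funext fun t => ?_
    have h1 : f.eval t = d + t * β := by simp [hf]
    have h2 : g.eval t = q0 + t * γ + t ^ 2 * q2 := by simp [hg]
    rw [Polynomial.eval_mul, h1, h2, Polynomial.eval_zero, mul_eq_zero]
    by_cases h : d + t * β = 0
    · exact Or.inl h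
    · exact Or.inr (hcon t h)
  rcases mul_eq_zero.mp hfg with h | h
  · have := congrArg (Polynomial.coeff · 0) h
    simp [hf] at this
    exact hd this
  · have := congrArg (Polynomial.coeff · 2) h
    simp [hg, Polynomial.coeff_X, Polynomial.coeff_C, -eq_intCast] at this
    exact hq this

theorem exists_e3 {m : ℕ} (e : Fin 5 → Fin m) (he : Function.Injective e) (i0 i1 : Fin m) :
    ∃ e3 : Fin 3 → Fin 5, Function.Injective e3 ∧ (∀ r, e (e3 r) ≠ i0) ∧ (∀ r, e (e3 r) ≠ i1) := by
  classical
  set S := (Finset.univ : Finset (Fin 5)).filter (fun r => ¬ (e r = i0 ∨ e r = i1)) with hS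
  have h1 := Finset.card_filter_add_card_filter_not (s := (Finset.univ : Finset (Fin 5))) (fun r => e r = i0 ∨ e r = i1)
  change _ + S.card = _ at h1
  have h2 : ((Finset.univ : Finset (Fin 5)).filter (fun r => e r = i0 ∨ e r = i1)).card ≤ 2 := by
    rw [← Finset.card_image_of_injective _ he]
    refine le_trans (Finset.card_le_card (t := {i0, i1}) ?_) Finset.card_le_two
    intro x hx
    obtain ⟨r, hr, rfl⟩ := Finset.mem_image.mp hx
    simpa using (Finset.mem_filter.mp hr).2
  have h3 : 3 ≤ S.card := by
    rw [Finset.card_univ, Fintype.card_fin] at h1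
    omega
  have hmem : ∀ r, S.orderEmbOfCardLe h3 r ∈ S := fun r => Finset.orderEmbOfCardLe_mem S h3 r
  refine ⟨S.orderEmbOfCardLe h3, (S.orderEmbOfCardLe h3).injective, fun r h => ?_, fun r h => ?_⟩
  · exact (Finset.mem_filter.mp (hmem r)).2 (Or.inl h)
  · exact (Finset.mem_filter.mp (hmem r)).2 (Or.inr h)

theorem exists_x0 {m : ℕ} (B : Fin m → ℤ) (i0 i1 : Fin m) (h01 : i0 ≠ i1) (a b c : ℤ) (hdisc : b^2 - 4*a*c ≠ 0)
    (v : Fin m → ℤ) (hv : ∑ j, B j * v j ≠ 0) :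
    ∃ x0 : Fin m → ℤ, ∑ j, B j * x0 j ≠ 0 ∧ a * x0 i0 ^ 2 + b * x0 i0 * x0 i1 + c * x0 i1 ^ 2 ≠ 0 := by
  obtain ⟨w, hw⟩ : ∃ w : Fin m → ℤ, a * w i0 ^ 2 + b * w i0 * w i1 + c * w i1 ^ 2 ≠ 0 := by
    by_contra hcon
    push Not at hcon
    have h1 := hcon (Pi.single i0 1)
    have h2 := hcon (Pi.single i1 1)
    have h3 := hcon (Pi.single i0 1 + Pi.single i1 1)
    simp [h01, h01.symm] at h1 h2 h3
    apply hdisc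
    rw [h1, h2] at *
    have : b = 0 := by linarith
    rw [this]; ring
  obtain ⟨t, ht1, ht2⟩ := avoid_roots (∑ j, B j * v j) (∑ j, B j * w j)
    (a * v i0 ^ 2 + b * v i0 * v i1 + c * v i1 ^ 2) (2 * a * v i0 * w i0 + b * (v i0 * w i1 + w i0 * v i1) + 2 * c * v i1 * w i1)
    (a * w i0 ^ 2 + b * w i0 * w i1 + c * w i1 ^ 2) hv hw
  refine ⟨fun j => v j + t * w j, ?_, ?_⟩
  · convert ht1 using 1
    rw [Finset.mul_sum, ← Finset.sum_add_distrib]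
    exact Finset.sum_congr rfl fun j _ => by ring
  · convert ht2 using 1
    ring

theorem core {m : ℕ} (A1 : Matrix (Fin m) (Fin m) ℤ) (hrank : 5 ≤ ((A1 + A1.transpose).map ((↑) : ℤ → ℚ)).rank)
    (i0 i1 : Fin m) (h01 : i0 ≠ i1) (a b c : ℤ) (hdisc : b^2 - 4*a*c ≠ 0) :
    ∃ (N : ℕ) (y10 y2r : ℤ) (α : ℝ), N ≠ 0 ∧ y10 ≠ 0 ∧ 0 < y2r ∧ y2r ≤ N ∧ 0 < α ∧ ∀ Ac : ℕ,
    ∃ u0 : ℕ, ∀ u : ℕ, u0 ≤ u → ∀ l : ℕ, l.Prime → (N:ℤ) ∣ l - 1 → u < l → l ≤ Ac * u →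
      ∃ Z ⊆ Finset.range (u / N - 1), ∀ (q : ℕ → Fin m → ℤ) (k : ℕ → ℤ),
        α * u ≤ ∑ z ∈ Z,
        (singSeries m (fun x => qF (fun i j => N * (y10 * l) * A1 i j + N * (y2r + N * z) * A2m i0 i1 a b c i j)
          (fun i => N ^ 2 * q z i) (N ^ 3 * k z) x)).re := by
  obtain ⟨e, X, d, he, hd0, hX⟩ := exists_right_inv _ hrank
  simp only [Matrix.add_apply, Matrix.transpose_apply] at hX
  obtain ⟨e3, he3, he0, he1⟩ := exists_e3 e he i0 i1
  obtain ⟨P, hP8, hτ, hτ2⟩ := exists_P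
  obtain ⟨x0, hx1, hx2⟩ := exists_x0 (fun j => A1 (e (e3 0)) j + A1 j (e (e3 0))) i0 i1 h01 a b c hdisc (fun j => X j (e3 0)) (by
    rw [hX]; simpa using hd0)
  obtain ⟨y10, hy10⟩ : ∃ y, y = a * x0 i0 ^ 2 + b * x0 i0 * x0 i1 + c * x0 i1 ^ 2 := ⟨_, rfl⟩
  obtain ⟨y20, hy20⟩ : ∃ y : ℤ, y = - ∑ i, ∑ j, A1 i j * x0 i * x0 j := ⟨_, rfl⟩
  obtain ⟨g, hg⟩ : ∃ g, g = y10 * ∑ j, (A1 (e (e3 0)) j + A1 j (e (e3 0))) * x0 j := ⟨_, rfl⟩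
  have hy100 : y10 ≠ 0 := hy10 ▸ hx2
  have hg0 : g ≠ 0 := hg ▸ mul_ne_zero hy100 hx1
  obtain ⟨W, hW⟩ : ∃ W : ℕ, W = 4 * (b^2 - 4*a*c).natAbs * d.natAbs * P.factorial := ⟨_, rfl⟩
  have hW0 : W ≠ 0 := by
    rw [hW]
    have h1 := Int.natAbs_pos.mpr hdisc
    have h2 := Int.natAbs_pos.mpr hd0
    have h3 := P.factorial_pos
    positivity
  obtain ⟨N, hN⟩ : ∃ N : ℕ, N = g.natAbs ^ 2 * (g.natAbs * W) := ⟨_, rfl⟩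
  have hga := Int.natAbs_pos.mpr hg0
  have hN0 : N ≠ 0 := by
    rw [hN]
    have := Nat.pos_of_ne_zero hW0
    positivity
  have hWN : W ∣ N := ⟨g.natAbs ^ 2 * g.natAbs, by rw [hN]; ring⟩
  have hNz : (N:ℤ) = g ^ 2 * ((g.natAbs * W : ℕ) : ℤ) := by
    rw [hN]; push_cast; rw [sq_abs]
  have hNp : (0:ℤ) < N := by exact_mod_cast Nat.pos_of_ne_zero hN0
  obtain ⟨y2r, hy2r⟩ : ∃ y, y = (y20 - 1) % N + 1 := ⟨_, rfl⟩
  have hm1 := Int.emod_nonneg (y20 - 1) hNp.ne'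
  have hm2 := Int.emod_lt_of_pos (y20 - 1) hNp
  have hmd : (N:ℤ) ∣ y2r - y20 := by
    have := Int.emod_add_mul_ediv (y20 - 1) N
    exact ⟨-((y20 - 1) / N), by rw [hy2r]; linarith⟩
  have hNr : (0:ℝ) < N := by exact_mod_cast hNp
  refine ⟨N, y10, y2r, (N:ℝ) / (N:ℝ)^m / (8 * N), hN0, hy100, by omega, by omega, by positivity, fun Ac => ?_⟩
  refine core_sum A1 i0 i1 h01 a b c hdisc e X d hd0 hX e3 he3 he0 he1 N hN0 y10 y2r hy100 (by omega) (by omega) ?_ ?_ ?_ ?_ P hP8 ?_ hτ hτ2 Ac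
  · intro l y2' hl hy2 q k T
    refine dens_N i0.pos A1 i0 i1 (e (e3 0)) (he0 0) (he1 0) a b c x0 g ((g.natAbs * W : ℕ) : ℤ) y10 y20 N hN0 hNz ?_ hy10 hy20 hg l y2' hl ?_ q k T
    · push_cast
      exact Dvd.dvd.mul_right ((dvd_abs _ _).mpr dvd_rfl) _
    · have := dvd_add hy2 hmd
      simpa using this
  · rw [← Int.natAbs_dvd]
    exact Int.natCast_dvd_natCast.mpr (Dvd.dvd.trans ⟨4 * (b^2 - 4*a*c).natAbs * P.factorial, by rw [hW]; ring⟩ hWN)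
  · rw [hNz]
    exact Dvd.dvd.mul_right (Dvd.dvd.trans ⟨_, hg⟩ (dvd_pow_self g two_ne_zero)) _
  · exact Dvd.dvd.trans ⟨d.natAbs * P.factorial, by rw [hW]; ring⟩ hWN
  · intro p hp hpN
    by_contra h
    exact hpN (((Nat.Prime.dvd_factorial hp).mpr (by omega)).trans (Dvd.dvd.trans (Dvd.intro_left _ hW.symm) hWN))

theorem hom_eval {h : ℕ} (f : MvPolynomial (Fin h) ℤ) (n : ℕ) (hf : f.IsHomogeneous n) (N : ℤ) (y : Fin h → ℤ) :
    eval (fun j => N * y j) f = N ^ n * eval y f := by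
  rw [MvPolynomial.eval_eq, MvPolynomial.eval_eq, Finset.mul_sum]
  refine Finset.sum_congr rfl fun d hd => ?_
  have h1 := hf (MvPolynomial.mem_support_iff.mp hd)
  rw [Finsupp.weight_apply, Finsupp.sum] at h1
  simp only [mul_pow, Finset.prod_mul_distrib, Finset.prod_pow_eq_pow_sum]
  have h2 : ∑ i ∈ d.support, d i = n := by simpa using h1
  rw [h2]; ring

theorem eval_form {m h : ℕ} (i0 i1 : Fin m) (j0 j1 : Fin h) (a b c : ℤ) (A₁ : Matrix (Fin m) (Fin m) ℤ)
    (q : Fin m → MvPolynomial (Fin h) ℤ) (hq : ∀ j, (q j).IsHomogeneous 2)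
    (R : MvPolynomial (Fin h) ℤ) (hR : R.IsHomogeneous 3) (N : ℤ) (y : Fin h → ℤ) (x : Fin m → ℤ) :
    eval (Sum.elim x (fun j => N * y j)) (X (Sum.inr j0) *
        rename Sum.inl (∑ i, ∑ j, C (A₁ i j) * X i * X j)
      + C a * X (Sum.inr j1) * X (Sum.inl i0) ^ 2
      + C b * X (Sum.inr j1) * X (Sum.inl i0) * X (Sum.inl i1)
      + C c * X (Sum.inr j1) * X (Sum.inl i1) ^ 2
      + ∑ i, X (Sum.inl i) * rename Sum.inr (q i) + rename Sum.inr R : MvPolynomial (Fin m ⊕ Fin h) ℤ) =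
    qF (fun i j => N * y j0 * A₁ i j + N * y j1 * A2m i0 i1 a b c i j) (fun i => N ^ 2 * eval y (q i))
      (N ^ 3 * eval y R) x := by
  have h1 : ∑ i, ∑ j, (N * y j0 * A₁ i j + N * y j1 * A2m i0 i1 a b c i j) * x i * x j =
      N * y j0 * ∑ i, ∑ j, A₁ i j * x i * x j + N * y j1 * ∑ i, ∑ j, A2m i0 i1 a b c i j * x i * x j := by
    simp only [Finset.mul_sum, ← Finset.sum_add_distrib]
    exact Finset.sum_congr rfl fun i _ => Finset.sum_congr rfl fun j _ => by ring
  rw [qF, h1, A2m_quad]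
  simp only [map_add, map_mul, map_sum, map_pow, eval_X, eval_C, rename_X, rename_C, Sum.elim_inl, Sum.elim_inr, eval_rename, Sum.elim_comp_inr, hom_eval _ 2 (hq _), hom_eval _ 3 hR]
  have h2 : ∑ i, x i * (N ^ 2 * eval y (q i)) = ∑ i, N ^ 2 * eval y (q i) * x i :=
    Finset.sum_congr rfl fun i _ => by ring
  rw [h2]
  ring

/-- For `C(x,y) = y₁F₁(x) + a y₂ x₁² + b y₂ x₁x₂ + c y₂ x₂² + Σ x_i q_i(y)
+ R(y)` with `b² − 4ac ≠ 0`, `F₁` nonsingular indefinite of rank `r ≥ 5`, `C` irreducible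
with nonsingular `p`-adic zeros for all `p`, one has `Σ_{y ∈ 𝒞_h(Y)} 𝔖(F_y) ≫ Y^h/log Y`. -/
theorem stmt13 (n h m : ℕ) (hh : 1 < h) (hhn : h < n) (hm : m = n - h) (hm2 : 1 < m)
    (a b c : ℤ) (hdisc : b ^ 2 - 4 * a * c ≠ 0)
    (A₁ : Matrix (Fin m) (Fin m) ℤ) (r : ℕ) (hr5 : 5 ≤ r)
    (hrank : Matrix.rank ((A₁ + A₁ᵀ).map ((↑) : ℤ → ℚ)) = r)
    (hindef : (∃ u : Fin m → ℝ, 0 < u ⬝ᵥ (A₁.map ((↑) : ℤ → ℝ)).mulVec u) ∧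
      (∃ u : Fin m → ℝ, u ⬝ᵥ (A₁.map ((↑) : ℤ → ℝ)).mulVec u < 0))
    (q : Fin m → MvPolynomial (Fin h) ℤ) (hq : ∀ j, (q j).IsHomogeneous 2)
    (R : MvPolynomial (Fin h) ℤ) (hR : R.IsHomogeneous 3)
    (Cpoly : MvPolynomial (Fin m ⊕ Fin h) ℤ)
    (hC : Cpoly = X (Sum.inr ⟨0, Nat.lt_trans Nat.zero_lt_one hh⟩) *
        rename Sum.inl (∑ i, ∑ j, C (A₁ i j) * X i * X j)
      + C a * X (Sum.inr ⟨1, hh⟩) * X (Sum.inl ⟨0, Nat.lt_trans Nat.zero_lt_one hm2⟩) ^ 2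
      + C b * X (Sum.inr ⟨1, hh⟩) * X (Sum.inl ⟨0, Nat.lt_trans Nat.zero_lt_one hm2⟩) *
          X (Sum.inl ⟨1, hm2⟩)
      + C c * X (Sum.inr ⟨1, hh⟩) * X (Sum.inl ⟨1, hm2⟩) ^ 2
      + ∑ i, X (Sum.inl i) * rename Sum.inr (q i) + rename Sum.inr R)
    (hirr : Irreducible (MvPolynomial.map (Int.castRingHom ℚ) Cpoly))
    (hpadic : ∀ (p : ℕ) [Fact p.Prime], ∃ z : (Fin m ⊕ Fin h) → ℚ_[p],
      eval z (MvPolynomial.map (Int.castRingHom ℚ_[p]) Cpoly) = 0 ∧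
      ∃ u, eval z (pderiv u (MvPolynomial.map (Int.castRingHom ℚ_[p]) Cpoly)) ≠ 0) :
    ∃ c₀ > (0 : ℝ), ∃ K > (0 : ℝ), ∃ Y₀ : ℝ, ∀ Y : ℝ, Y₀ ≤ Y →
      ∃ 𝒞 : Finset (Fin h → ℤ),
        (∀ y ∈ 𝒞, ∀ i, (|y i| : ℝ) ≤ K * Y) ∧
        c₀ * Y ^ h / Real.log Y ≤
          ∑ y ∈ 𝒞, (singSeries m fun x => eval (Sum.elim x y) Cpoly).re := by
  classical
  obtain ⟨i0, hi0⟩ : ∃ i : Fin m, i = ⟨0, Nat.lt_trans Nat.zero_lt_one hm2⟩ := ⟨_, rfl⟩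
  obtain ⟨i1, hi1⟩ : ∃ i : Fin m, i = ⟨1, hm2⟩ := ⟨_, rfl⟩
  obtain ⟨j0, hj0⟩ : ∃ i : Fin h, i = ⟨0, Nat.lt_trans Nat.zero_lt_one hh⟩ := ⟨_, rfl⟩
  obtain ⟨j1, hj1⟩ : ∃ i : Fin h, i = ⟨1, hh⟩ := ⟨_, rfl⟩
  have h01 : i0 ≠ i1 := by rw [hi0, hi1]; simp
  have hj01 : j0 ≠ j1 := by rw [hj0, hj1]; simp
  rw [← hi0, ← hi1, ← hj0, ← hj1] at hC
  obtain ⟨N, y10, y2r, α, hN0, hy10, hy2r, hy2rN, hα, hcore⟩ :=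
    core A₁ (by rw [hrank]; exact hr5) i0 i1 h01 a b c hdisc
  haveI : NeZero N := ⟨hN0⟩
  have hNp : 0 < N := Nat.pos_of_ne_zero hN0
  have hNz : (0:ℤ) < N := by exact_mod_cast hNp
  obtain ⟨Ac, hAc1, hAc⟩ := aux_primes_AP N
  obtain ⟨u0, hu0⟩ := hcore Ac
  refine ⟨α / 2 ^ (h + 1), by positivity, (N:ℝ) * (|(y10:ℝ)| * Ac + 1), by positivity, max (u0 + 2) Ac, fun Y hY => ?_⟩
  have hY1 : (u0:ℝ) + 2 ≤ Y := (le_max_left _ _).trans hY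
  have hY2 : (Ac:ℝ) ≤ Y := (le_max_right _ _).trans hY
  have hu0n : (0:ℝ) ≤ u0 := Nat.cast_nonneg _
  obtain ⟨u, hu⟩ : ∃ u, u = ⌊Y⌋₊ := ⟨_, rfl⟩
  have huY : (u:ℝ) ≤ Y := hu ▸ Nat.floor_le (by linarith)
  have huY2 : Y < u + 1 := hu ▸ Nat.lt_floor_add_one Y
  have hu0u : u0 ≤ u := by
    have : (u0:ℝ) < u + 1 := by linarith
    have : u0 < u + 1 := by exact_mod_cast this
    omega
  have hu1 : 1 ≤ u := by
    have : (1:ℝ) < u + 1 := by linarith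
    have : 1 < u + 1 := by exact_mod_cast this
    omega
  obtain ⟨Λ, hΛ⟩ : ∃ Λ : Finset ℕ, Λ = (Finset.Ioc u (Ac * u)).filter fun l : ℕ => l.Prime ∧ (l : ZMod N) = 1 := ⟨_, rfl⟩
  have hΛc := hAc u hu1
  rw [← hΛ] at hΛc
  have hZex : ∀ l : ℕ, ∃ Z : Finset ℕ, l ∈ Λ → Z ⊆ Finset.range (u / N - 1) ∧ ∀ (q : ℕ → Fin m → ℤ) (k : ℕ → ℤ),
        α * u ≤ ∑ z ∈ Z,
        (singSeries m (fun x => qF (fun i j => N * (y10 * l) * A₁ i j + N * (y2r + N * z) * A2m i0 i1 a b c i j)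
          (fun i => N ^ 2 * q z i) (N ^ 3 * k z) x)).re := by
    intro l
    by_cases hl : l ∈ Λ
    · rw [hΛ, Finset.mem_filter, Finset.mem_Ioc] at hl
      obtain ⟨Z, hZ1, hZ2⟩ := hu0 u hu0u l hl.2.1 (by
        rw [← ZMod.intCast_zmod_eq_zero_iff_dvd]
        push_cast
        rw [hl.2.2, sub_self]) hl.1.1 hl.1.2
      exact ⟨Z, fun _ => ⟨hZ1, hZ2⟩⟩
    · exact ⟨∅, fun h => absurd h hl⟩
  choose Z hZ using hZex
  obtain ⟨W, hW⟩ : ∃ W : Finset (Fin h → ℕ), W = Fintype.piFinset (fun j : Fin h => if j = j0 ∨ j = j1 then ({0} : Finset ℕ) else Finset.range u) := ⟨_, rfl⟩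
  have hWmem : ∀ w ∈ W, w j0 = 0 ∧ w j1 = 0 ∧ ∀ j, j ≠ j0 → j ≠ j1 → w j < u := by
    intro w hw
    rw [hW, Fintype.mem_piFinset] at hw
    refine ⟨by simpa using hw j0, by simpa using hw j1, fun j h1 h2 => by simpa [h1, h2] using hw j⟩
  have hWcard : W.card = u ^ (h - 2) := by
    rw [hW, Fintype.card_piFinset]
    have h1 : ∀ j : Fin h, (if j = j0 ∨ j = j1 then ({0} : Finset ℕ) else Finset.range u).card = if j ∈ ({j0, j1} : Finset (Fin h)) then 1 else u := by
      intro j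
      by_cases hj : j = j0 ∨ j = j1
      · simp [hj]
      · simp [hj]
    simp only [h1]
    rw [Finset.prod_ite, Finset.prod_const_one, one_mul, Finset.prod_const, Finset.filter_not, Finset.filter_mem_eq_inter,
      Finset.univ_inter, Finset.card_univ_diff, Finset.card_pair hj01, Fintype.card_fin]
  obtain ⟨y', hy'⟩ : ∃ y' : ℕ → ℕ → (Fin h → ℕ) → Fin h → ℤ, ∀ l z w j, y' l z w j =
      if j = j0 then y10 * l else if j = j1 then y2r + N * z else (w j : ℤ) + 1 := ⟨fun l z w j => _, fun _ _ _ _ => rfl⟩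
  have hyj0 : ∀ l z w, y' l z w j0 = y10 * l := by intro l z w; rw [hy', if_pos rfl]
  have hyj1 : ∀ l z w, y' l z w j1 = y2r + N * z := by intro l z w; rw [hy', if_neg hj01.symm, if_pos rfl]
  have hyj : ∀ l z w j, j ≠ j0 → j ≠ j1 → y' l z w j = (w j : ℤ) + 1 := by
    intro l z w j h1 h2; rw [hy', if_neg h1, if_neg h2]
  obtain ⟨I, hI⟩ : ∃ I : Finset (Σ _ : ℕ, (Fin h → ℕ) × ℕ), I = Λ.sigma (fun l => W ×ˢ Z l) := ⟨_, rfl⟩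
  obtain ⟨φ, hφ⟩ : ∃ φ : (Σ _ : ℕ, (Fin h → ℕ) × ℕ) → (Fin h → ℤ), ∀ s, φ s = fun j => (N:ℤ) * y' s.1 s.2.2 s.2.1 j := ⟨fun s => _, fun _ => rfl⟩
  have hIm : ∀ s ∈ I, s.1 ∈ Λ ∧ s.2.1 ∈ W ∧ s.2.2 ∈ Z s.1 := by
    intro s hs
    rw [hI, Finset.mem_sigma, Finset.mem_product] at hs
    exact hs
  have hinj : Set.InjOn φ I := by
    rintro ⟨l1, w1, z1⟩ h1 ⟨l2, w2, z2⟩ h2 heq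
    have g1 := hIm _ h1
    have g2 := hIm _ h2
    rw [hφ, hφ] at heq
    have heq' : ∀ j, y' l1 z1 w1 j = y' l2 z2 w2 j := fun j => mul_left_cancel₀ hNz.ne' (congrFun heq j)
    have e1 : l1 = l2 := by
      have := heq' j0
      rw [hyj0, hyj0] at this
      exact_mod_cast mul_left_cancel₀ hy10 this
    have e2 : z1 = z2 := by
      have := heq' j1
      rw [hyj1, hyj1] at this
      exact_mod_cast mul_left_cancel₀ hNz.ne' (add_left_cancel this)
    have e3 : w1 = w2 := by
      funext j
      by_cases k1 : j = j0
      · rw [k1]; exact (hWmem _ g1.2.1).1.trans (hWmem _ g2.2.1).1.symm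
      · by_cases k2 : j = j1
        · rw [k2]; exact (hWmem _ g1.2.1).2.1.trans (hWmem _ g2.2.1).2.1.symm
        · have := heq' j
          rw [hyj _ _ _ _ k1 k2, hyj _ _ _ _ k1 k2] at this
          exact_mod_cast add_right_cancel this
    subst e1 e2 e3
    rfl
  refine ⟨I.image φ, ?_, ?_⟩
  · intro y hy i
    obtain ⟨s, hs, rfl⟩ := Finset.mem_image.mp hy
    have g := hIm s hs
    have gl := g.1
    rw [hΛ, Finset.mem_filter, Finset.mem_Ioc] at gl
    have gz := Finset.mem_range.mp ((hZ s.1 g.1).1 g.2.2)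
    have gw := (hWmem _ g.2.1).2.2
    have key : |y' s.1 s.2.2 s.2.1 i| ≤ (|y10| * Ac + 1) * u := by
      have k0 : (0:ℤ) ≤ |y10| * Ac * u := by positivity
      by_cases k1 : i = j0
      · rw [k1, hyj0, abs_mul, Nat.abs_cast]
        have : (s.1:ℤ) ≤ Ac * u := by exact_mod_cast gl.1.2
        calc |y10| * (s.1:ℤ) ≤ |y10| * (Ac * u) := by gcongr
          _ = |y10| * Ac * u := by ring
          _ ≤ _ := by nlinarith
      · by_cases k2 : i = j1
        · rw [k2, hyj1]
          have p1 : s.2.2 + 1 ≤ u / N := by omega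
          have p2 : N * (s.2.2 + 1) ≤ u := (Nat.mul_le_mul_left _ p1).trans (Nat.mul_div_le u N)
          have p3 : (N:ℤ) * (s.2.2 + 1) ≤ u := by exact_mod_cast p2
          have p4 : (0:ℤ) ≤ N * s.2.2 := by positivity
          rw [abs_of_nonneg (by linarith)]
          nlinarith
        · rw [hyj _ _ _ _ k1 k2]
          have : ((s.2.1 i : ℕ):ℤ) + 1 ≤ u := by exact_mod_cast gw i k1 k2
          rw [abs_of_nonneg (by positivity)]
          nlinarith
    have key2 : (|((y' s.1 s.2.2 s.2.1 i : ℤ) : ℝ)|) ≤ (|(y10:ℝ)| * Ac + 1) * u := by exact_mod_cast key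
    rw [hφ]
    push_cast
    rw [abs_mul, Nat.abs_cast]
    calc (N:ℝ) * |((y' s.1 s.2.2 s.2.1 i : ℤ) : ℝ)| ≤ N * ((|(y10:ℝ)| * Ac + 1) * u) := by gcongr
      _ ≤ N * ((|(y10:ℝ)| * Ac + 1) * Y) := by gcongr
      _ = _ := by ring
  · rw [Finset.sum_image hinj, hI, Finset.sum_sigma]
    have hl : ∀ l ∈ Λ, (u:ℝ) ^ (h - 2) * (α * u) ≤ ∑ s ∈ W ×ˢ Z l, (singSeries m fun x => eval (Sum.elim x (φ ⟨l, s⟩)) Cpoly).re := by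
      intro l hl
      rw [Finset.sum_product]
      have hw : ∀ w ∈ W, α * u ≤ ∑ z ∈ Z l, (singSeries m fun x => eval (Sum.elim x (φ ⟨l, (w, z)⟩)) Cpoly).re := by
        intro w hw
        refine le_trans ((hZ l hl).2 (fun z i => eval (y' l z w) (q i)) (fun z => eval (y' l z w) R)) (le_of_eq ?_)
        refine Finset.sum_congr rfl fun z _ => ?_
        congr 2
        funext x
        rw [hφ, hC, eval_form i0 i1 j0 j1 a b c A₁ q hq R hR N, hyj0, hyj1]
      refine le_trans (le_of_eq ?_) (Finset.sum_le_sum hw)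
      rw [Finset.sum_const, nsmul_eq_mul, hWcard]
      push_cast
      ring
    refine le_trans ?_ (Finset.sum_le_sum hl)
    rw [Finset.sum_const, nsmul_eq_mul]
    have hup : (0:ℝ) < u := by exact_mod_cast hu1
    have hA2 : (2:ℝ) ≤ Ac := by exact_mod_cast hAc1
    have hu1' : (1:ℝ) ≤ u := by exact_mod_cast hu1
    have hlogpos : 0 < Real.log (Ac * u) := Real.log_pos (by nlinarith)
    have hlogY : Real.log (Ac * u) ≤ 2 * Real.log Y := by
      have : Real.log (Ac * u) ≤ Real.log (Y ^ 2) := by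
        apply Real.log_le_log (by positivity)
        rw [sq]
        exact mul_le_mul hY2 huY hup.le (by linarith)
      rwa [Real.log_pow] at this
    have hhe : h = (h - 2) + 2 := by omega
    have hlY : 0 < Real.log Y := by linarith
    calc α / 2 ^ (h + 1) * Y ^ h / Real.log Y = α * (Y / 2) ^ h / (2 * Real.log Y) := by
          rw [div_pow, pow_succ]; field_simp
      _ ≤ α * (u:ℝ) ^ h / Real.log (Ac * u) := by
          have : Y / 2 ≤ u := by linarith
          have hY0 : 0 ≤ Y / 2 := by linarith
          gcongr
      _ = (u / Real.log (Ac * u)) * ((u:ℝ) ^ (h - 2) * (α * u)) := by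
          conv_lhs => rw [hhe]
          rw [pow_add]; field_simp
      _ ≤ _ := by gcongr
end

section
/- Let A be a real symmetric m×m matrix of rank r ≥ 1, let Y > 0 and C₁, C₂ > 0. Suppose |A_{ij}| ≤ C₁·Y for all i, j, and that some r×r minor of A has absolute value at least C₂·Y^r. Then every nonzero eigenvalue λ of A satisfies C₂·(m·C₁)^{−(r−1)}·Y ≤ |λ| ≤ m·C₁·Y. -/
open Matrix

lemma aux_upper {m : ℕ} (A : Matrix (Fin m) (Fin m) ℝ) (B : ℝ)
    (hb : ∀ i j, |A i j| ≤ B) (lam : ℝ) (v : Fin m → ℝ) (hv : v ≠ 0)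
    (h : A.mulVec v = lam • v) : |lam| ≤ m * B := by
  obtain ⟨i0, hi0⟩ := Function.ne_iff.mp hv
  obtain ⟨i, -, hi⟩ := Finset.exists_max_image Finset.univ (fun i => |v i|) ⟨i0, Finset.mem_univ _⟩
  have hpos : 0 < |v i| := lt_of_lt_of_le (abs_pos.mpr hi0) (hi i0 (Finset.mem_univ _))
  have h1 := congrFun h i
  simp only [Matrix.mulVec, dotProduct, Pi.smul_apply, smul_eq_mul] at h1
  have h2 : |lam| * |v i| ≤ (m * B) * |v i| := by
    rw [← abs_mul, ← h1]
    calc |∑ j, A i j * v j| ≤ ∑ j, |A i j * v j| := Finset.abs_sum_le_sum_abs _ _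
      _ ≤ ∑ _j : Fin m, B * |v i| := by
        apply Finset.sum_le_sum
        intro j _
        rw [abs_mul]
        exact mul_le_mul (hb i j) (hi j (Finset.mem_univ _)) (abs_nonneg _)
          ((abs_nonneg _).trans (hb i j))
      _ = (m * B) * |v i| := by simp [mul_assoc]
  exact le_of_mul_le_mul_right h2 hpos

lemma aux_det {r : ℕ} (W : Matrix (Fin r) (Fin r) ℝ)
    (hW : ∀ x : Fin r → ℝ, (W *ᵥ x) ⬝ᵥ (W *ᵥ x) ≤ x ⬝ᵥ x) : |W.det| ≤ 1 := by
  have hP : (Wᴴ * W).PosSemidef := Matrix.posSemidef_conjTranspose_mul_self W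
  have hd : (Wᴴ * W).det = W.det * W.det := by
    rw [Matrix.det_mul, Matrix.det_conjTranspose]; simp
  have hd2 : (Wᴴ * W).det ≤ 1 := by
    rw [hP.1.det_eq_prod_eigenvalues]
    simp only [RCLike.ofReal_real_eq_id, id]
    apply Finset.prod_le_one
    · intro i _; exact hP.eigenvalues_nonneg i
    · intro i _
      have hx := hP.1.mulVec_eigenvectorBasis i
      have hne : (hP.1.eigenvectorBasis i).ofLp ≠ 0 := by
        intro h0
        apply hP.1.eigenvectorBasis.orthonormal.ne_zero i
        ext j
        exact congrFun h0 j
      set x := (hP.1.eigenvectorBasis i).ofLp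
      have h1 : (W *ᵥ x) ⬝ᵥ (W *ᵥ x) = hP.1.eigenvalues i * (x ⬝ᵥ x) := by
        rw [← smul_eq_mul, ← dotProduct_smul, ← hx, ← Matrix.mulVec_mulVec,
          Matrix.dotProduct_mulVec x, Matrix.conjTranspose_eq_transpose_of_trivial,
          Matrix.vecMul_transpose]
      have h2 := hW x
      rw [h1] at h2
      have h3 : 0 < x ⬝ᵥ x := by
        have : 0 ≤ x ⬝ᵥ x := Finset.sum_nonneg fun j _ => mul_self_nonneg _
        exact lt_of_le_of_ne this fun h => hne (dotProduct_self_eq_zero.mp h.symm)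
      exact le_of_mul_le_mul_right (by linarith) h3
  rw [hd] at hd2
  exact abs_le_one_iff_mul_self_le_one.mpr hd2

lemma aux_det_sub {m r : ℕ} (V : Matrix (Fin m) (Fin r) ℝ) (hV : Vᵀ * V = 1)
    (ρ : Fin r → Fin m) (hρ : Function.Injective ρ) : |(V.submatrix ρ id).det| ≤ 1 := by
  apply aux_det
  intro x
  have h1 : x ⬝ᵥ x = (V *ᵥ x) ⬝ᵥ (V *ᵥ x) := by
    rw [Matrix.dotProduct_mulVec, ← Matrix.vecMul_transpose, Matrix.vecMul_vecMul, hV,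
      Matrix.vecMul_one]
  rw [h1]
  have h2 : (V.submatrix ρ id *ᵥ x) ⬝ᵥ (V.submatrix ρ id *ᵥ x)
      = ∑ a ∈ Finset.univ.map ⟨ρ, hρ⟩, (V *ᵥ x) a * (V *ᵥ x) a := by
    rw [Finset.sum_map]; rfl
  rw [h2]
  exact Finset.sum_le_sum_of_subset_of_nonneg (Finset.subset_univ _)
    fun i _ _ => mul_self_nonneg _

/-- Eigenvalue bounds for a real symmetric matrix of rank `r ≥ 1`
whose entries are `O(Y)` and which has an `r × r` minor of size `≫ Y^r`. -/
theorem stmt15 (m r : ℕ) (hr : 1 ≤ r)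
    (A : Matrix (Fin m) (Fin m) ℝ) (hA : A.IsSymm) (hrank : A.rank = r)
    (Y C₁ C₂ : ℝ) (hY : 0 < Y) (hC₁ : 0 < C₁) (hC₂ : 0 < C₂)
    (hbound : ∀ i j, |A i j| ≤ C₁ * Y)
    (hminor : ∃ ρ σ : Fin r → Fin m, Function.Injective ρ ∧ Function.Injective σ ∧
      C₂ * Y ^ r ≤ |(A.submatrix ρ σ).det|)
    (lam : ℝ) (hlam : lam ≠ 0)
    (heig : ∃ v : Fin m → ℝ, v ≠ 0 ∧ A.mulVec v = lam • v) :
    C₂ * ((m : ℝ) * C₁)⁻¹ ^ (r - 1) * Y ≤ |lam| ∧ |lam| ≤ (m : ℝ) * C₁ * Y := by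
  obtain ⟨v, hv, hAv⟩ := heig
  refine ⟨?_, by rw [mul_assoc]; exact aux_upper A _ hbound lam v hv hAv⟩
  obtain ⟨ρ, σ, hρ, hσ, hmin⟩ := hminor
  have hH : A.IsHermitian := by
    rw [Matrix.IsHermitian, Matrix.conjTranspose_eq_transpose_of_trivial]; exact hA
  have hm : 0 < (m : ℝ) := by
    obtain ⟨i0, -⟩ := Function.ne_iff.mp hv
    exact_mod_cast i0.pos
  have hub : ∀ k, |hH.eigenvalues k| ≤ m * C₁ * Y := by
    intro k
    rw [mul_assoc]
    refine aux_upper A _ hbound _ (hH.eigenvectorBasis k).ofLp ?_ (hH.mulVec_eigenvectorBasis k)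
    intro h0
    apply hH.eigenvectorBasis.orthonormal.ne_zero k
    ext j
    exact congrFun h0 j
  have hcard : Fintype.card {i // hH.eigenvalues i ≠ 0} = r := by
    rw [← hH.rank_eq_card_non_zero_eigs, hrank]
  let e : Fin r ≃ {i // hH.eigenvalues i ≠ 0} := (Fintype.equivFinOfCardEq hcard).symm
  let U : Matrix (Fin m) (Fin m) ℝ := hH.eigenvectorUnitary
  have hUU : Uᵀ * U = 1 := by
    have := (Matrix.mem_unitaryGroup_iff'.mp hH.eigenvectorUnitary.2)
    rwa [Matrix.star_eq_conjTranspose, Matrix.conjTranspose_eq_transpose_of_trivial] at this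
  have hspec : A = U * diagonal hH.eigenvalues * Uᵀ := by
    have := hH.spectral_theorem
    rw [Unitary.conjStarAlgAut_apply, Matrix.star_eq_conjTranspose,
      Matrix.conjTranspose_eq_transpose_of_trivial] at this
    exact this
  let V : Matrix (Fin m) (Fin r) ℝ := fun i k => U i (e k)
  let d : Fin r → ℝ := fun k => hH.eigenvalues (e k)
  have hVV : Vᵀ * V = 1 := by
    ext a b
    have := congrFun (congrFun hUU (e a)) (e b)
    rw [Matrix.mul_apply] at this ⊢
    refine this.trans ?_
    simp [Matrix.one_apply, Subtype.val_injective.eq_iff]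
  have hdec : A = V * diagonal d * Vᵀ := by
    ext i j
    have h1 : A i j = ∑ k, U i k * hH.eigenvalues k * U j k := by
      conv_lhs => rw [hspec]
      rw [Matrix.mul_apply]
      simp [Matrix.mul_diagonal]
    rw [h1, Matrix.mul_apply]
    simp only [Matrix.mul_diagonal, Matrix.transpose_apply]
    change _ = ∑ k, U i (e k) * hH.eigenvalues (e k) * U j (e k)
    rw [Equiv.sum_comp e (fun k => U i k * hH.eigenvalues k * U j k)]
    rw [← Finset.sum_subtype (Finset.univ.filter fun k => hH.eigenvalues k ≠ 0)
      (by simp) (fun k => U i k * hH.eigenvalues k * U j k)]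
    rw [Finset.sum_filter]
    refine Finset.sum_congr rfl fun k _ => ?_
    split_ifs with h
    · rfl
    · rw [not_not.mp h]; simp
  have hsub : A.submatrix ρ σ = V.submatrix ρ id * diagonal d * (V.submatrix σ id)ᵀ := by
    conv_lhs => rw [hdec]
    rfl
  have hdet : |(A.submatrix ρ σ).det| ≤ ∏ k, |d k| := by
    rw [hsub, Matrix.det_mul, Matrix.det_mul, Matrix.det_diagonal, Matrix.det_transpose,
      abs_mul, abs_mul, Finset.abs_prod]
    have h1 := aux_det_sub V hVV ρ hρ
    have h2 := aux_det_sub V hVV σ hσ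
    have h3 : 0 ≤ ∏ k, |d k| := Finset.prod_nonneg fun _ _ => abs_nonneg _
    calc _ ≤ 1 * (∏ k, |d k|) * 1 := by gcongr
      _ = _ := by ring
  obtain ⟨k0, hk0⟩ : ∃ k0, hH.eigenvalues k0 = lam := by
    have : lam ∈ spectrum ℝ A := by
      rw [← Matrix.spectrum_toLin']
      apply Module.End.HasEigenvalue.mem_spectrum
      exact Module.End.hasEigenvalue_of_hasEigenvector
        ⟨Module.End.mem_eigenspace_iff.mpr (by simpa using hAv), hv⟩
    rw [hH.spectrum_real_eq_range_eigenvalues] at this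
    exact this
  let a : Fin r := e.symm ⟨k0, by rw [hk0]; exact hlam⟩
  have hda : d a = lam := by simp [d, a, hk0]
  have hprod : ∏ k, |d k| ≤ |lam| * (m * C₁ * Y) ^ (r - 1) := by
    rw [← Finset.mul_prod_erase Finset.univ _ (Finset.mem_univ a), hda]
    gcongr
    refine (Finset.prod_le_prod (g := fun _ => m * C₁ * Y) (fun _ _ => abs_nonneg _)
      (fun k _ => hub _)).trans ?_
    simp
  have hfin := hmin.trans (hdet.trans hprod)
  obtain ⟨s, rfl⟩ : ∃ s, r = s + 1 := ⟨r - 1, by omega⟩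
  simp only [Nat.add_sub_cancel] at hfin ⊢
  have hp : 0 < (m * C₁) ^ s := by positivity
  have hYs : 0 < Y ^ s := by positivity
  rw [mul_pow, pow_succ] at hfin
  have h5 : C₂ * Y ≤ |lam| * (m * C₁) ^ s :=
    le_of_mul_le_mul_right (by linarith) hYs
  calc C₂ * ((m : ℝ) * C₁)⁻¹ ^ s * Y = (C₂ * Y) / (m * C₁) ^ s := by
        rw [inv_pow]; ring
    _ ≤ |lam| := by rw [div_le_iff₀ hp]; exact h5
end

section
/- Let M₂,…,M_h be symmetric m×m matrices over ℚ, and suppose the matrix pencil M(y) = Σ_{i=2}^h y_i M_i has rank exactly 1 over the rational function field ℚ(y₂,…,y_h). Then there exist a rational linear form l(y₂,…,y_h) and a nonzero vector v ∈ ℚ^m such that M(y) = l(y₂,…,y_h)·v·vᵀ identically; equivalently, writing F_i for the quadratic form with matrix M_i, there is a rational linear form m(x) = v·x with Σ_{i=2}^h y_i F_i(x) = l(y₂,…,y_h)·m(x)² identically in x and y. -/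
open Matrix MvPolynomial

lemma minors_of_rank_one {K : Type*} [Field K] {m : ℕ} (A : Matrix (Fin m) (Fin m) K)
    (h : A.rank = 1) (a b c d : Fin m) : A a b * A c d = A a d * A c b := by
  have h1 : Module.finrank K (LinearMap.range A.mulVecLin) ≤ 1 := h.le
  obtain ⟨u, hu⟩ := finrank_le_one_iff.mp h1
  have key : ∀ j, ∃ t : K, ∀ i, A i j = t * (u : Fin m → K) i := by
    intro j
    obtain ⟨t, ht⟩ := hu ⟨A.mulVecLin (Pi.single j 1), LinearMap.mem_range_self _ _⟩
    refine ⟨t, fun i => ?_⟩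
    have := congrFun (congrArg Subtype.val ht) i
    simpa using this.symm
  obtain ⟨s, hs⟩ := key b
  obtain ⟨t, ht⟩ := key d
  rw [hs, hs, ht, ht]; ring

/-- A pencil of symmetric rational matrices of generic rank one is
`l(y) · v vᵀ` for a rational linear form `l` and a nonzero rational vector `v`. -/
theorem stmt16 (m k : ℕ)
    (M : Fin k → Matrix (Fin m) (Fin m) ℚ) (hsym : ∀ i, (M i).IsSymm)
    (hrank : Matrix.rank
      (Matrix.of fun a b =>
        algebraMap (MvPolynomial (Fin k) ℚ) (FractionRing (MvPolynomial (Fin k) ℚ))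
          (∑ i, X i * C (M i a b)) :
        Matrix (Fin m) (Fin m) (FractionRing (MvPolynomial (Fin k) ℚ))) = 1) :
    ∃ (l : Fin k → ℚ) (v : Fin m → ℚ), v ≠ 0 ∧
      (∀ y : Fin k → ℚ, (∑ i, y i • M i) = (∑ i, l i * y i) • vecMulVec v v) ∧
      (∀ (y : Fin k → ℚ) (x : Fin m → ℚ),
        x ⬝ᵥ (∑ i, y i • M i).mulVec x = (∑ i, l i * y i) * (v ⬝ᵥ x) ^ 2) := by
  obtain ⟨S, hS⟩ : ∃ S : (Fin k → ℚ) → Fin m → Fin m → ℚ,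
      ∀ y a b, S y a b = ∑ i, y i * M i a b := ⟨_, fun _ _ _ => rfl⟩
  have hminor : ∀ y a b c d, S y a b * S y c d = S y a d * S y c b := by
    intro y a b c d
    have h := minors_of_rank_one _ hrank a b c d
    simp only [Matrix.of_apply, ← map_mul] at h
    have h2 := IsFractionRing.injective (MvPolynomial (Fin k) ℚ)
      (FractionRing (MvPolynomial (Fin k) ℚ)) h
    have h3 := congrArg (MvPolynomial.eval y) h2
    simpa [hS] using h3
  have hsymm : ∀ y a b, S y a b = S y b a := by
    intro y a b
    simp only [hS]
    exact Finset.sum_congr rfl fun i _ => by rw [(hsym i).apply]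
  have hadd : ∀ y z a b, S (y + z) a b = S y a b + S z a b := by
    intro y z a b
    simp [hS, add_mul, Finset.sum_add_distrib]
  have hne : ∃ i a b, M i a b ≠ 0 := by
    by_contra! hcon
    have : (Matrix.of fun a b =>
        algebraMap (MvPolynomial (Fin k) ℚ) (FractionRing (MvPolynomial (Fin k) ℚ))
          (∑ i, X i * C (M i a b)) :
        Matrix (Fin m) (Fin m) (FractionRing (MvPolynomial (Fin k) ℚ))) = 0 := by
      ext a b; simp [hcon]
    rw [this, Matrix.rank_zero] at hrank
    exact zero_ne_one hrank
  obtain ⟨i, a, b, hab⟩ := hne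
  obtain ⟨y0, hy0⟩ : ∃ y0, S y0 a b ≠ 0 := ⟨Pi.single i 1, by simpa [hS, Pi.single_apply] using hab⟩
  have hα : S y0 a a ≠ 0 := by
    intro h0
    have h := hminor y0 a b b a
    rw [h0, hsymm y0 b a, zero_mul] at h
    exact hy0 (mul_self_eq_zero.mp h)
  have key : ∀ y c d, S y c d = S y a a / (S y0 a a) ^ 2 * (S y0 a c * S y0 a d) := by
    intro y
    have hpol : ∀ c d, S y0 a a * S y c d + S y a a * S y0 c d
        = S y0 a d * S y a c + S y a d * S y0 a c := by
      intro c d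
      have h1 := hminor (y0 + y) a a c d
      simp only [hadd] at h1
      have h2 := hminor y0 a a c d
      have h3 := hminor y a a c d
      rw [hsymm y0 c a] at h1 h2
      rw [hsymm y c a] at h1 h3
      linear_combination h1 - h2 - h3
    have hA : ∀ c d, S y0 a a * S y0 c d = S y0 a c * S y0 a d := by
      intro c d
      have h2 := hminor y0 a a c d
      rw [hsymm y0 c a] at h2
      linear_combination h2
    have hw : ∀ c, S y0 a a * S y a c = S y a a * S y0 a c := by
      intro c
      have h3 := hminor y a a c c
      rw [hsymm y c a] at h3
      have : (S y0 a a * S y a c - S y a a * S y0 a c) ^ 2 = 0 := by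
        linear_combination (-(S y0 a a)^2) * h3 + S y0 a a * S y a a * hpol c c - (S y a a)^2 * hA c c
      exact sub_eq_zero.mp (pow_eq_zero_iff two_ne_zero |>.mp this)
    intro c d
    field_simp
    linear_combination S y0 a a * hpol c d - S y a a * hA c d + S y0 a d * hw c + S y0 a c * hw d
  have hl : ∀ y : Fin k → ℚ,
      ∑ i, (M i a a / (S y0 a a) ^ 2) * y i = S y a a / (S y0 a a) ^ 2 := by
    intro y
    rw [hS y, Finset.sum_div]
    exact Finset.sum_congr rfl fun i _ => by ring
  have hmain : ∀ y : Fin k → ℚ, (∑ i, y i • M i)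
      = (∑ i, (M i a a / (S y0 a a) ^ 2) * y i) • vecMulVec (S y0 a) (S y0 a) := by
    intro y
    rw [hl]
    ext c d
    rw [Matrix.smul_apply, vecMulVec_apply, smul_eq_mul, ← key, hS, Matrix.sum_apply]
    simp
  refine ⟨fun i => M i a a / (S y0 a a) ^ 2, S y0 a, fun h => hα (congrFun h a), hmain, ?_⟩
  intro y x
  rw [hmain, Matrix.smul_mulVec, dotProduct_smul, Matrix.vecMulVec_mulVec, smul_eq_mul]
  simp [dotProduct_comm x]
  ring_nf
  simp
end
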